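/- arXiv:2505.14863 — 2 statements merged into one kernel-verified Lean document; each statement's English description precedes it below -/
import Mathlib

section
/- Dyadic Fefferman–Stein theorem: Assume in addition the dyadic doubling condition with constant N₀. Let p ∈ (1,∞) and q = p/(p−1). Then for every f ∈ L_p(μ) one has ‖f‖_{L_p(μ)} ≤ (2q)^p N₀^{p−1} ‖f^{#}‖_{L_p(μ)}, where f^{#} is the dyadic sharp function of f. -/
/-!
Write `g = |f|`, let `lav g n` be the average of `g` over the box of generation `n`, and
`M g = sup_n lav g n` the dyadic maximal function. Three facts give the theorem.

* *Good-λ inequality* (`good_lambda`): `t μ(|f| > t) ≤ 2 ∫_{2 N₀ M g > t} f^#`. For each point stop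
  at the first (largest) box whose average of `g` exceeds `t / (2 N₀)`. By doubling this average is
  at most `t / 2`, so `|f - f_B| ≥ t / 2` at the points of the stopping box `B` where `|f| > t`;
  Chebyshev's inequality on `B` and summation over the disjoint stopping boxes conclude. Almost
  every point with `|f| > t` lies in a stopping box by Lebesgue differentiation, the dyadic boxes
  being a Vitali family (`vitali`). Comparing the signed `f` with its averages, rather than `|f|`
  with those of `|f|`, avoids losing a factor `2`.
* *Maximal inequality* (`maximal`): `‖M g‖_p ≤ q ‖g‖_p`, by the same stopping argument.
* *Integration in `t`* (`lintegral_rpow_le_of_distrib`): integrating the first inequality against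
  `p t^{p-2} dt` gives `∫ g^p ≤ 2 q ∫ f^# (2 N₀ M g)^{p-1}`. Hölder's inequality and the maximal
  inequality bound this by `(2 q)^p N₀^{p-1} ‖f^#‖_p ‖g‖_p^{p-1}`, and the finite factor
  `‖g‖_p^{p-1}` cancels.

A first stopping box exists because averages of an `L_p` function over ancestors tend to `0`
(`exists_lav_le`): each parent contains a sibling of the given box, so doubling alone forces the
measures of the ancestors of a box to increase to infinity, unless they all vanish.
-/

open MeasureTheory ENNReal NNReal Filter

noncomputable section

/-- The half-open dyadic "box" of generation `n` with index `i`,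
`∏_j [i_j 2^{-k_j n}, (i_j+1) 2^{-k_j n})`. -/
def dyBox (d : ℕ) (k : Fin d → ℕ) (n : ℤ) (i : Fin d → ℤ) : Set (Fin d → ℝ) :=
  {x | ∀ j, (i j : ℝ) * (2 : ℝ) ^ (-((k j : ℤ) * n)) ≤ x j ∧
      x j < ((i j : ℝ) + 1) * (2 : ℝ) ^ (-((k j : ℤ) * n))}

/-- The dyadic box of generation `n` containing `x`. -/
def dyBoxOf (d : ℕ) (k : Fin d → ℕ) (n : ℤ) (x : Fin d → ℝ) : Set (Fin d → ℝ) :=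
  dyBox d k n (fun j => ⌊x j * (2 : ℝ) ^ ((k j : ℤ) * n)⌋)

/-- `f_{|n}(x)`, the average of `f` over the dyadic box of generation `n` containing `x`. -/
def dyAvg (d : ℕ) (k : Fin d → ℕ) (μ : Measure (Fin d → ℝ)) (f : (Fin d → ℝ) → ℝ)
    (n : ℤ) (x : Fin d → ℝ) : ℝ :=
  ⨍ z in dyBoxOf d k n x, f z ∂μ

/-- The dyadic sharp function
`f^{#}(x) = sup_n ⨍_{𝓑_n(x)} |f(y) − f_{|n}(y)| μ(dy)`. -/
def dySharp (d : ℕ) (k : Fin d → ℕ) (μ : Measure (Fin d → ℝ)) (f : (Fin d → ℝ) → ℝ)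
    (x : Fin d → ℝ) : ℝ≥0∞ :=
  ⨆ n : ℤ, (μ (dyBoxOf d k n x))⁻¹ *
    ∫⁻ y in dyBoxOf d k n x, ENNReal.ofReal |f y - dyAvg d k μ f n y| ∂μ

/-- The corner box `x + [0, l^{k_1}) × ⋯ × [0, l^{k_d})`. -/
def cornerBox (d : ℕ) (k : Fin d → ℕ) (x : Fin d → ℝ) (l : ℝ) : Set (Fin d → ℝ) :=
  {y | ∀ j, x j ≤ y j ∧ y j < x j + l ^ (k j)}

namespace DyadicFS

variable {d : ℕ} {k : Fin d → ℕ}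

/-! ### Geometry of dyadic boxes -/

/-- The index of the box of generation `n` containing `x`. All objects of generation `n` factor
through this map, which takes countably many values. -/
def idx (k : Fin d → ℕ) (n : ℤ) (x : Fin d → ℝ) : Fin d → ℤ :=
  fun j => ⌊x j * (2 : ℝ) ^ ((k j : ℤ) * n)⌋

lemma dyBox_eq (n : ℤ) (i : Fin d → ℤ) : dyBox d k n i = idx k n ⁻¹' {i} := by
  ext x
  simp only [dyBox, Set.mem_ofPred_eq, Set.mem_preimage, Set.mem_singleton_iff, funext_iff, idx]
  refine forall_congr' fun j => ?_
  have h : (0 : ℝ) < 2 ^ ((k j : ℤ) * n) := by positivity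
  rw [Int.floor_eq_iff, zpow_neg, ← div_eq_mul_inv, ← div_eq_mul_inv, div_le_iff₀ h, lt_div_iff₀ h]

lemma dyBoxOf_eq (n : ℤ) (x : Fin d → ℝ) : dyBoxOf d k n x = idx k n ⁻¹' {idx k n x} :=
  dyBox_eq n _

lemma mem_dyBoxOf {n : ℤ} {x y : Fin d → ℝ} : y ∈ dyBoxOf d k n x ↔ idx k n y = idx k n x := by
  rw [dyBoxOf_eq]; rfl

lemma dyBoxOf_congr {n : ℤ} {x y : Fin d → ℝ} (h : idx k n y = idx k n x) :
    dyBoxOf d k n y = dyBoxOf d k n x := by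
  rw [dyBoxOf_eq, dyBoxOf_eq, h]

lemma self_mem (n : ℤ) (x : Fin d → ℝ) : x ∈ dyBoxOf d k n x := mem_dyBoxOf.2 rfl

lemma measurable_idx (n : ℤ) : Measurable (idx k n) := by
  refine measurable_pi_lambda _ fun j => ?_
  exact Int.measurable_floor.comp ((measurable_pi_apply j).mul_const _)

lemma measurableSet_box (n : ℤ) (x : Fin d → ℝ) : MeasurableSet (dyBoxOf d k n x) := by
  rw [dyBoxOf_eq]; exact measurable_idx n (measurableSet_singleton _)

lemma idx_pred_congr {n : ℤ} {x y : Fin d → ℝ} (h : idx k n y = idx k n x) :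
    idx k (n - 1) y = idx k (n - 1) x := by
  funext j
  have hj : ⌊y j * (2 : ℝ) ^ ((k j : ℤ) * n)⌋ = ⌊x j * (2 : ℝ) ^ ((k j : ℤ) * n)⌋ := congrFun h j
  have key : ∀ z : ℝ, z * (2 : ℝ) ^ ((k j : ℤ) * (n - 1)) =
      z * (2 : ℝ) ^ ((k j : ℤ) * n) / ((2 ^ k j : ℕ) : ℝ) := by
    intro z
    rw [mul_sub, mul_one, zpow_sub₀ two_ne_zero, zpow_natCast]
    push_cast; ring
  simp only [idx]
  rw [key, key, Int.floor_div_natCast, Int.floor_div_natCast, hj]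

lemma idx_congr_of_le {m n : ℤ} (hmn : m ≤ n) {x y : Fin d → ℝ} (h : idx k n y = idx k n x) :
    idx k m y = idx k m x := by
  induction m, hmn using Int.leInductionDown with
  | base => exact h
  | pred m _ ih => exact idx_pred_congr ih

lemma dyBoxOf_anti {m n : ℤ} (hmn : m ≤ n) (x : Fin d → ℝ) :
    dyBoxOf d k n x ⊆ dyBoxOf d k m x := fun _ hy =>
  mem_dyBoxOf.2 (idx_congr_of_le hmn (mem_dyBoxOf.1 hy))

lemma abs_sub_lt {n : ℤ} {x y : Fin d → ℝ} (h : y ∈ dyBoxOf d k n x) (j : Fin d) :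
    |y j - x j| < (2 : ℝ) ^ (-((k j : ℤ) * n)) := by
  have hj : ⌊y j * (2 : ℝ) ^ ((k j : ℤ) * n)⌋ = ⌊x j * (2 : ℝ) ^ ((k j : ℤ) * n)⌋ :=
    congrFun (mem_dyBoxOf.1 h) j
  have h2 := Int.abs_sub_lt_one_of_floor_eq_floor hj
  have hp : (0 : ℝ) < 2 ^ ((k j : ℤ) * n) := by positivity
  rw [← sub_mul, abs_mul, abs_of_pos hp] at h2
  rw [zpow_neg, ← one_div, lt_div_iff₀ hp]
  exact h2

lemma measure_box_lt_top (μ : Measure (Fin d → ℝ)) [IsFiniteMeasureOnCompacts μ] (n : ℤ)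
    (x : Fin d → ℝ) : μ (dyBoxOf d k n x) < ⊤ := by
  have hsub : dyBoxOf d k n x ⊆ Set.Icc (fun j => x j - (2 : ℝ) ^ (-((k j : ℤ) * n)))
      (fun j => x j + (2 : ℝ) ^ (-((k j : ℤ) * n))) := by
    intro y hy
    constructor <;> intro j <;> have := abs_lt.1 (abs_sub_lt hy j) <;> simp only <;> linarith
  exact (measure_mono hsub).trans_lt isCompact_Icc.measure_lt_top

lemma exists_small_box (hk : ∀ j, 1 ≤ k j) (x : Fin d → ℝ) {ε : ℝ} (hε : 0 < ε) :
    ∃ n : ℕ, dyBoxOf d k n x ⊆ Metric.closedBall x ε := by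
  obtain ⟨n, hn⟩ := exists_pow_lt_of_lt_one hε (by norm_num : (1 / 2 : ℝ) < 1)
  refine ⟨n, fun y hy => ?_⟩
  rw [Metric.mem_closedBall, dist_pi_le_iff hε.le]
  intro j
  rw [Real.dist_eq]
  refine (abs_sub_lt hy j).le.trans (le_trans ?_ hn.le)
  have h1 : (1 / 2 : ℝ) ^ n = (2 : ℝ) ^ (-(n : ℤ)) := by
    rw [zpow_neg, zpow_natCast, one_div, inv_pow]
  rw [h1]
  refine zpow_le_zpow_right₀ one_le_two (neg_le_neg ?_)
  have : (1 : ℤ) ≤ k j := by exact_mod_cast hk j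
  nlinarith

lemma interior_box_nonempty (n : ℤ) (x : Fin d → ℝ) : (interior (dyBoxOf d k n x)).Nonempty := by
  set c : Fin d → ℝ := fun j => (idx k n x j + 1 / 2 : ℝ) * (2 : ℝ) ^ (-((k j : ℤ) * n))
  refine ⟨c, mem_interior.2 ⟨Set.univ.pi fun j => Set.Ioo
    ((idx k n x j : ℝ) * (2 : ℝ) ^ (-((k j : ℤ) * n)))
    ((idx k n x j + 1 : ℝ) * (2 : ℝ) ^ (-((k j : ℤ) * n))), ?_, ?_, ?_⟩⟩
  · intro y hy j
    have := hy j trivial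
    exact ⟨this.1.le, this.2⟩
  · exact isOpen_set_pi Set.finite_univ fun j _ => isOpen_Ioo
  · intro j _
    have hp : (0 : ℝ) < 2 ^ (-((k j : ℤ) * n)) := by positivity
    constructor <;> simp only [c] <;> gcongr <;> linarith

/-- Every box has at least two children, so one of them misses a given point. -/
lemma exists_sibling (hd : 1 ≤ d) (hk : ∀ j, 1 ≤ k j) (n : ℤ) (x : Fin d → ℝ) :
    ∃ y, idx k (n - 1) y = idx k (n - 1) x ∧ idx k n y ≠ idx k n x := by
  set j : Fin d := ⟨0, hd⟩
  set t : ℝ := (2 : ℝ) ^ ((k j : ℤ) * (n - 1)) with ht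
  set s : ℝ := (2 : ℝ) ^ ((k j : ℤ) * n) with hs
  have htp : 0 < t := by positivity
  have hst : s = t * 2 ^ k j := by
    rw [ht, hs, mul_sub, mul_one, zpow_sub₀ two_ne_zero, zpow_natCast]
    field_simp
  have hst2 : 2 * t ≤ s := by
    rw [hst]
    have : (2 : ℝ) ^ 1 ≤ 2 ^ k j := pow_le_pow_right₀ one_le_two (hk j)
    nlinarith
  set i : ℤ := idx k (n - 1) x j with hi
  have hpar : ∀ r : ℝ, 0 ≤ r → r < 1 →
      idx k (n - 1) (Function.update x j ((i + r) / t)) = idx k (n - 1) x := by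
    intro r h0 h1
    funext j'
    by_cases hj : j' = j
    · subst hj
      rw [← hi]
      simp only [idx, Function.update_self]
      rw [← ht, div_mul_cancel₀ _ htp.ne', Int.floor_eq_iff]
      constructor <;> linarith
    · simp only [idx, Function.update_of_ne hj]
  by_contra! hcon
  have h0 := hcon _ (hpar 0 le_rfl one_pos)
  have h1 := hcon _ (hpar (1 / 2) (by norm_num) (by norm_num))
  have h2 := congrFun (h1.trans h0.symm) j
  simp only [idx, Function.update_self] at h2
  have h3 := Int.abs_sub_lt_one_of_floor_eq_floor h2
  rw [← hs, ← sub_mul] at h3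
  have h4 : (((i : ℝ) + 1 / 2) / t - (i + 0) / t) * s = s / (2 * t) := by field_simp; ring
  rw [h4, abs_of_pos (by positivity), div_lt_one (by positivity)] at h3
  linarith

/-! ### Stopping boxes -/

lemma measurable_of_idx {β : Type*} [MeasurableSpace β] {n : ℤ} {F : (Fin d → ℝ) → β}
    (h : ∀ x y, idx k n y = idx k n x → F y = F x) : Measurable F := by
  intro s _
  have : F ⁻¹' s = idx k n ⁻¹' (idx k n '' (F ⁻¹' s)) := by
    refine (Set.subset_preimage_image _ _).antisymm ?_
    rintro x ⟨y, hy, hxy⟩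
    simp only [Set.mem_preimage] at hy ⊢
    rwa [← h x y hxy]
  rw [this]
  exact measurable_idx n (Set.to_countable _).measurableSet

lemma lintegral_le_of_saturated {μ : Measure (Fin d → ℝ)} {n : ℤ} {A : Set (Fin d → ℝ)}
    (hA : ∀ x y, idx k n y = idx k n x → x ∈ A → y ∈ A) {F G : (Fin d → ℝ) → ℝ≥0∞}
    (h : ∀ x ∈ A, ∫⁻ y in dyBoxOf d k n x, F y ∂μ ≤ ∫⁻ y in dyBoxOf d k n x, G y ∂μ) :
    ∫⁻ y in A, F y ∂μ ≤ ∫⁻ y in A, G y ∂μ := by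
  have hAm : MeasurableSet A := by
    have : Measurable (fun x => x ∈ A) := measurable_of_idx (k := k) (n := n) fun x y hxy =>
      propext ⟨hA y x hxy.symm, hA x y hxy⟩
    exact measurableSet_setOfPred.2 this
  have hU : A = ⋃ i : Fin d → ℤ, A ∩ idx k n ⁻¹' {i} := by
    ext x; simp
  have hm : ∀ i : Fin d → ℤ, MeasurableSet (A ∩ idx k n ⁻¹' {i}) := fun i =>
    hAm.inter (measurable_idx n (measurableSet_singleton _))
  have hdj : Pairwise (Function.onFun Disjoint fun i : Fin d → ℤ => A ∩ idx k n ⁻¹' {i}) := by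
    intro i j hij
    refine Set.disjoint_left.2 ?_
    rintro x ⟨_, hx⟩ ⟨_, hx'⟩
    exact hij (hx.symm.trans hx')
  rw [hU, lintegral_iUnion hm hdj, lintegral_iUnion hm hdj]
  refine ENNReal.tsum_le_tsum fun i => ?_
  rcases Set.eq_empty_or_nonempty (A ∩ idx k n ⁻¹' {i}) with he | ⟨x, hxA, hx⟩
  · simp [he]
  · have : A ∩ idx k n ⁻¹' {i} = dyBoxOf d k n x := by
      ext y
      rw [mem_dyBoxOf, show idx k n x = i from hx]
      exact ⟨fun hy => hy.2, fun hy => ⟨hA x y (hy.trans hx.symm) hxA, hy⟩⟩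
    rw [this]
    exact h x hxA

/-- Stopping-time comparison: if `∫ F ≤ ∫ G` on every maximal box on which the box-wise constant
process `a` exceeds `c`, then `∫ F ≤ ∫ G` on the set where `a` ever exceeds `c`. -/
lemma lintegral_le_of_stopping {μ : Measure (Fin d → ℝ)} {a : ℤ → (Fin d → ℝ) → ℝ≥0∞}
    (ha : ∀ n x y, idx k n y = idx k n x → a n y = a n x) {c : ℝ≥0∞}
    (hbdd : ∀ x, ∃ m : ℤ, ∀ n < m, a n x ≤ c) {F G : (Fin d → ℝ) → ℝ≥0∞}
    (h : ∀ n x, c < a n x → (∀ m < n, a m x ≤ c) →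
      ∫⁻ y in dyBoxOf d k n x, F y ∂μ ≤ ∫⁻ y in dyBoxOf d k n x, G y ∂μ) :
    ∫⁻ y in {x | ∃ n, c < a n x}, F y ∂μ ≤ ∫⁻ y in {x | ∃ n, c < a n x}, G y ∂μ := by
  set A : ℤ → Set (Fin d → ℝ) := fun n => {x | c < a n x ∧ ∀ m < n, a m x ≤ c} with hAdef
  have hsat : ∀ n x y, idx k n y = idx k n x → x ∈ A n → y ∈ A n := by
    rintro n x y hxy ⟨h1, h2⟩
    refine ⟨by rwa [ha n x y hxy], fun m hm => ?_⟩
    rw [ha m x y (idx_congr_of_le hm.le hxy)]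
    exact h2 m hm
  have hU : {x | ∃ n, c < a n x} = ⋃ n, A n := by
    ext x
    simp only [Set.mem_ofPred_eq, Set.mem_iUnion, hAdef]
    refine ⟨fun hx => ?_, fun ⟨n, hn⟩ => ⟨n, hn.1⟩⟩
    obtain ⟨m, hm⟩ := hbdd x
    obtain ⟨n, hn, hmin⟩ := Int.exists_least_of_bdd (P := fun n => c < a n x)
      ⟨m, fun z hz => not_lt.1 fun hzm => (hm z hzm).not_gt hz⟩ hx
    exact ⟨n, hn, fun m' hm' => not_lt.1 fun hc => (hmin m' hc).not_gt hm'⟩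
  have hm : ∀ n, MeasurableSet (A n) := fun n => by
    have : Measurable (fun x => x ∈ A n) := measurable_of_idx (k := k) (n := n) fun x y hxy =>
      propext ⟨hsat n y x hxy.symm, hsat n x y hxy⟩
    exact measurableSet_setOfPred.2 this
  have hdj : Pairwise (Function.onFun Disjoint A) := by
    intro i j hij
    refine Set.disjoint_left.2 ?_
    rintro x ⟨h1, h2⟩ ⟨h3, h4⟩
    rcases lt_or_gt_of_ne hij with hlt | hlt
    · exact (h4 i hlt).not_gt h1
    · exact (h2 j hlt).not_gt h3
  rw [hU, lintegral_iUnion hm hdj, lintegral_iUnion hm hdj]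
  exact ENNReal.tsum_le_tsum fun n => lintegral_le_of_saturated (hsat n)
    fun x hx => h n x hx.1 hx.2

/-! ### From distributional inequalities to `L_p` inequalities -/

lemma lintegral_rpow_lt_le {p : ℝ} (hp : 1 < p) (s : ℝ≥0∞) :
    ∫⁻ t in Set.Ioi (0 : ℝ), {t : ℝ | ENNReal.ofReal t < s}.indicator
      (fun t => ENNReal.ofReal (t ^ (p - 2))) t ≤ ENNReal.ofReal (1 / (p - 1)) * s ^ (p - 1) := by
  have hp1 : 0 < p - 1 := by linarith
  induction s with
  | top =>
    rw [ENNReal.top_rpow_of_pos hp1, ENNReal.mul_top (by simpa using hp)]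
    exact le_top
  | coe r =>
    have hr : (0 : ℝ) ≤ r := r.2
    have hint : IntervalIntegrable (fun t : ℝ => t ^ (p - 2)) volume 0 r :=
      intervalIntegral.intervalIntegrable_rpow' (by linarith)
    have hint' : IntegrableOn (fun t : ℝ => t ^ (p - 2)) (Set.Ioc 0 (r : ℝ)) :=
      (intervalIntegrable_iff_integrableOn_Ioc_of_le hr).1 hint
    calc ∫⁻ t in Set.Ioi (0 : ℝ), {t : ℝ | ENNReal.ofReal t < r}.indicator
          (fun t => ENNReal.ofReal (t ^ (p - 2))) t
        = ∫⁻ t, (Set.Ioi (0 : ℝ)).indicator ({t : ℝ | ENNReal.ofReal t < r}.indicator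
          (fun t => ENNReal.ofReal (t ^ (p - 2)))) t :=
          (lintegral_indicator measurableSet_Ioi _).symm
      _ ≤ ∫⁻ t, (Set.Ioc 0 (r : ℝ)).indicator (fun t => ENNReal.ofReal (t ^ (p - 2))) t := by
          refine lintegral_mono fun t => ?_
          rw [Set.indicator_indicator]
          refine Set.indicator_le_indicator_of_subset ?_ (fun _ => zero_le) t
          rintro t ⟨h0, h1⟩
          refine ⟨h0, ?_⟩
          have h2 : ENNReal.ofReal t < ENNReal.ofReal r := by
            rw [ENNReal.ofReal_coe_nnreal]; exact h1
          exact (ENNReal.ofReal_lt_ofReal_iff_of_nonneg (le_of_lt h0)).1 h2 |>.le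
      _ = ∫⁻ t in Set.Ioc 0 (r : ℝ), ENNReal.ofReal (t ^ (p - 2)) :=
          lintegral_indicator measurableSet_Ioc _
      _ = ENNReal.ofReal (∫ t in Set.Ioc 0 (r : ℝ), t ^ (p - 2)) := by
          rw [ofReal_integral_eq_lintegral_ofReal hint']
          filter_upwards [ae_restrict_mem measurableSet_Ioc] with t ht
          exact Real.rpow_nonneg ht.1.le _
      _ = ENNReal.ofReal (1 / (p - 1) * (r : ℝ) ^ (p - 1)) := by
          rw [← intervalIntegral.integral_of_le hr, integral_rpow (Or.inl (by linarith)),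
            show p - 2 + 1 = p - 1 by ring, Real.zero_rpow hp1.ne', sub_zero]
          congr 1; ring
      _ = _ := by
          rw [ENNReal.ofReal_mul (by positivity), ← ENNReal.ofReal_rpow_of_nonneg hr hp1.le,
            ENNReal.ofReal_coe_nnreal]
      _ ≤ _ := le_rfl

/-- Integrating `t · μ(u > t) ≤ C ∫_{v > t} w` against `p t^{p-2} dt`. -/
lemma lintegral_rpow_le_of_distrib {α : Type*} [MeasurableSpace α] {μ : Measure α} [SFinite μ]
    {p : ℝ} (hp : 1 < p) {u : α → ℝ} (hu0 : ∀ x, 0 ≤ u x) (hu : Measurable u)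
    {v w : α → ℝ≥0∞} (hv : Measurable v) (hw : Measurable w) (C : ℝ≥0∞)
    (h : ∀ t : ℝ, 0 < t → ENNReal.ofReal t * μ {x | t < u x} ≤
      C * ∫⁻ x in {x | ENNReal.ofReal t < v x}, w x ∂μ) :
    ∫⁻ x, ENNReal.ofReal (u x) ^ p ∂μ ≤
      C * ENNReal.ofReal (p / (p - 1)) * ∫⁻ x, w x * v x ^ (p - 1) ∂μ := by
  have hp0 : 0 < p := by linarith
  have hp1 : 0 < p - 1 := by linarith
  have hset : MeasurableSet {z : ℝ × α | ENNReal.ofReal z.1 < v z.2} :=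
    measurableSet_lt (ENNReal.measurable_ofReal.comp measurable_fst) (hv.comp measurable_snd)
  set K : ℝ → α → ℝ≥0∞ := fun t x =>
    {z : ℝ × α | ENNReal.ofReal z.1 < v z.2}.indicator
      (fun z => w z.2 * ENNReal.ofReal (z.1 ^ (p - 2))) (t, x) with hK
  have hKm : Measurable (Function.uncurry K) := by
    have : Measurable fun z : ℝ × α => w z.2 * ENNReal.ofReal (z.1 ^ (p - 2)) :=
      (hw.comp measurable_snd).mul
        (ENNReal.measurable_ofReal.comp (measurable_fst.pow_const _))
    exact this.indicator hset
  calc ∫⁻ x, ENNReal.ofReal (u x) ^ p ∂μ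
      = ∫⁻ x, ENNReal.ofReal (u x ^ p) ∂μ := by
        simp_rw [ENNReal.ofReal_rpow_of_nonneg (hu0 _) hp0.le]
    _ = ENNReal.ofReal p *
          ∫⁻ t in Set.Ioi (0 : ℝ), μ {x | t < u x} * ENNReal.ofReal (t ^ (p - 1)) :=
        lintegral_rpow_eq_lintegral_meas_lt_mul μ (Eventually.of_forall hu0) hu.aemeasurable hp0
    _ ≤ ENNReal.ofReal p * ∫⁻ t in Set.Ioi (0 : ℝ), C * ∫⁻ x, K t x ∂μ := by
        gcongr ENNReal.ofReal p * ?_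
        refine setLIntegral_mono' measurableSet_Ioi fun t ht => ?_
        have ht' : (0 : ℝ) < t := ht
        have hvm : MeasurableSet {x | ENNReal.ofReal t < v x} := measurableSet_lt measurable_const hv
        have e1 : ENNReal.ofReal (t ^ (p - 1)) =
            ENNReal.ofReal t * ENNReal.ofReal (t ^ (p - 2)) := by
          rw [← ENNReal.ofReal_mul ht'.le]
          congr 1
          rw [show p - 1 = 1 + (p - 2) by ring, Real.rpow_add ht', Real.rpow_one]
        have e2 : ∫⁻ x, K t x ∂μ = (∫⁻ x in {x | ENNReal.ofReal t < v x}, w x ∂μ) *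
            ENNReal.ofReal (t ^ (p - 2)) := by
          rw [← lintegral_mul_const _ hw, ← lintegral_indicator hvm]
          rfl
        rw [e1, e2, ← mul_assoc, ← mul_assoc, mul_comm (μ _)]
        exact mul_le_mul_left (h t ht') _
    _ = C * ENNReal.ofReal p * ∫⁻ t in Set.Ioi (0 : ℝ), ∫⁻ x, K t x ∂μ := by
        rw [lintegral_const_mul C (f := fun t => ∫⁻ x, K t x ∂μ) hKm.lintegral_prod_right', ← mul_assoc,
          mul_comm (ENNReal.ofReal p)]
    _ = C * ENNReal.ofReal p * ∫⁻ x, (∫⁻ t in Set.Ioi (0 : ℝ), K t x) ∂μ := by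
        rw [lintegral_lintegral_swap hKm.aemeasurable]
    _ ≤ C * ENNReal.ofReal p *
          ∫⁻ x, ENNReal.ofReal (1 / (p - 1)) * (w x * v x ^ (p - 1)) ∂μ := by
        gcongr with x
        have e3 : ∀ t, K t x = w x * {t : ℝ | ENNReal.ofReal t < v x}.indicator
            (fun t => ENNReal.ofReal (t ^ (p - 2))) t := by
          intro t
          simp only [hK, Set.indicator, Set.mem_ofPred_eq]
          split_ifs <;> simp
        simp_rw [e3]
        rw [lintegral_const_mul, mul_left_comm]
        · gcongr
          exact lintegral_rpow_lt_le hp (v x)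
        · refine Measurable.indicator ?_ (measurableSet_lt ENNReal.measurable_ofReal measurable_const)
          exact ENNReal.measurable_ofReal.comp (measurable_id.pow_const _)
    _ = _ := by
        rw [lintegral_const_mul _ (f := fun x => w x * v x ^ (p - 1)) (hw.mul (hv.pow_const _)), ← mul_assoc, mul_assoc C,
          ← ENNReal.ofReal_mul hp0.le, mul_one_div]

lemma lintegral_mul_rpow_le {α : Type*} [MeasurableSpace α] {μ : Measure α} {p : ℝ} (hp : 1 < p)
    {v w : α → ℝ≥0∞} (hv : Measurable v) (hw : Measurable w) :
    ∫⁻ x, w x * v x ^ (p - 1) ∂μ ≤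
      (∫⁻ x, w x ^ p ∂μ) ^ (1 / p) * (∫⁻ x, v x ^ p ∂μ) ^ ((p - 1) / p) := by
  have hp1 : p - 1 ≠ 0 := by linarith
  have h := ENNReal.lintegral_mul_le_Lp_mul_Lq μ (Real.HolderConjugate.conjExponent hp)
    hw.aemeasurable (hv.pow_const (p - 1)).aemeasurable
  simp only [Real.conjExponent, ← ENNReal.rpow_mul, Pi.mul_apply, one_div_div,
    mul_div_cancel₀ p hp1] at h
  exact h

/-- Dividing out the common factor in `‖u‖^p ≤ K ‖w‖ ‖u‖^{p-1}`. -/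
lemma le_of_le_mul_rpow {p : ℝ} (hp : 1 < p) {U K : ℝ≥0∞} (hU : U ≠ ⊤)
    (h : U ≤ K * U ^ ((p - 1) / p)) : U ^ (1 / p) ≤ K := by
  have hp0 : 0 < p := by linarith
  rcases eq_or_ne U 0 with rfl | h0
  · simp [ENNReal.zero_rpow_of_pos (inv_pos.2 hp0)]
  have h1 : U ^ (1 / p) * U ^ ((p - 1) / p) = U := by
    rw [← ENNReal.rpow_add _ _ h0 hU, ← add_div]
    simp [hp0.ne']
  have h2 : U ^ ((p - 1) / p) ≠ 0 := by simp [ENNReal.rpow_eq_zero_iff, h0, hU]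
  have h3 : U ^ ((p - 1) / p) ≠ ⊤ := by
    simp [ENNReal.rpow_eq_top_iff, h0, hU]
  refine (ENNReal.mul_le_mul_iff_left h2 h3).1 ?_
  rwa [h1]

/-! ### Lebesgue differentiation along dyadic boxes -/

/-- The dyadic boxes of nonnegative generation form a Vitali family: a fine cover is reduced to its
maximal boxes, which are pairwise disjoint. -/
def vitali (hk : ∀ j, 1 ≤ k j) (μ : Measure (Fin d → ℝ)) : VitaliFamily μ where
  setsAt x := {B | ∃ n : ℕ, B = dyBoxOf d k n x}
  measurableSet := by
    rintro x _ ⟨n, rfl⟩; exact measurableSet_box _ _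
  nonempty_interior := by
    rintro x _ ⟨n, rfl⟩; exact interior_box_nonempty _ _
  nontrivial x ε hε := by
    obtain ⟨n, hn⟩ := exists_small_box hk x hε
    exact ⟨_, ⟨n, rfl⟩, hn⟩
  covering := by
    classical
    intro s F hF hfine
    have hex : ∀ x ∈ s, ∃ n : ℕ, ∃ y ∈ s, idx k n y = idx k n x ∧ dyBoxOf d k n y ∈ F y := by
      intro x hx
      obtain ⟨B, hB, _⟩ := hfine x hx 1 one_pos
      obtain ⟨n, rfl⟩ := hF x hx hB
      exact ⟨n, x, hx, rfl, hB⟩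
    -- `M x` is the smallest generation of a box of the cover containing `x`.
    obtain ⟨M, hM⟩ : ∃ M : (Fin d → ℝ) → ℕ, ∀ x ∈ s,
        (∃ y ∈ s, idx k (M x) y = idx k (M x) x ∧ dyBoxOf d k (M x) y ∈ F y) ∧
        ∀ m : ℕ, (∃ y ∈ s, idx k m y = idx k m x ∧ dyBoxOf d k m y ∈ F y) → M x ≤ m := by
      choose! M hM using fun x (hx : x ∈ s) =>
        (⟨Nat.find (hex x hx), Nat.find_spec (hex x hx), fun m hm => Nat.find_min' (hex x hx) hm⟩ :
          ∃ n : ℕ, (∃ y ∈ s, idx k n y = idx k n x ∧ dyBoxOf d k n y ∈ F y) ∧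
            ∀ m : ℕ, (∃ y ∈ s, idx k m y = idx k m x ∧ dyBoxOf d k m y ∈ F y) → n ≤ m)
      exact ⟨M, hM⟩
    set 𝓑 : Set (Set (Fin d → ℝ)) := (fun x => dyBoxOf d k (M x) x) '' s with h𝓑
    have hch : ∀ B ∈ 𝓑, ∃ y ∈ s, B ∈ F y := by
      rintro _ ⟨x, hx, rfl⟩
      obtain ⟨y, hy, hxy, hyF⟩ := (hM x hx).1
      refine ⟨y, hy, ?_⟩
      rw [dyBoxOf_congr hxy] at hyF
      exact hyF
    choose! c hcs hcF using hch
    have key : ∀ x ∈ s, ∀ x' ∈ s, M x ≤ M x' →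
        ¬ Disjoint (dyBoxOf d k (M x) x) (dyBoxOf d k (M x') x') →
        dyBoxOf d k (M x) x = dyBoxOf d k (M x') x' := by
      intro x hx x' hx' hle hnd
      obtain ⟨z, hz, hz'⟩ := Set.not_disjoint_iff.1 hnd
      rw [mem_dyBoxOf] at hz hz'
      have h1 : idx k (M x) x' = idx k (M x) x := by
        rw [← idx_congr_of_le (Int.ofNat_le.2 hle) hz', hz]
      obtain ⟨y, hy, hxy, hyF⟩ := (hM x hx).1
      have h2 : M x' ≤ M x := (hM x' hx').2 _ ⟨y, hy, hxy.trans h1.symm, hyF⟩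
      have h3 : M x = M x' := le_antisymm hle h2
      rw [← h3]
      exact (dyBoxOf_congr h1).symm
    refine ⟨(fun B => (c B, B)) '' 𝓑, ?_, ?_, ?_, ?_⟩
    · rintro _ ⟨B, hB, rfl⟩; exact hcs B hB
    · rintro _ ⟨_, ⟨x, hx, rfl⟩, rfl⟩ _ ⟨_, ⟨x', hx', rfl⟩, rfl⟩ hne
      by_contra hnd
      apply hne
      have : dyBoxOf d k (M x) x = dyBoxOf d k (M x') x' := by
        rcases le_total (M x) (M x') with h | h
        · exact key x hx x' hx' h hnd
        · exact (key x' hx' x hx h fun hd => hnd hd.symm).symm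
      simp only [this]
    · rintro _ ⟨B, hB, rfl⟩; exact hcF B hB
    · have : s \ ⋃ p ∈ (fun B => (c B, B)) '' 𝓑, p.2 = ∅ := by
        refine Set.sdiff_eq_empty.2 fun x hx => ?_
        simp only [Set.mem_iUnion]
        exact ⟨_, ⟨_, ⟨x, hx, rfl⟩, rfl⟩, self_mem _ _⟩
      rw [this]; exact measure_empty

/-- The average of `g ≥ 0` over the box of generation `n` containing `x`; it is `0` on null
boxes. -/
def lav (k : Fin d → ℕ) (μ : Measure (Fin d → ℝ)) (g : (Fin d → ℝ) → ℝ≥0∞) (n : ℤ)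
    (x : Fin d → ℝ) : ℝ≥0∞ :=
  (μ (dyBoxOf d k n x))⁻¹ * ∫⁻ y in dyBoxOf d k n x, g y ∂μ

section
variable {μ : Measure (Fin d → ℝ)} {g : (Fin d → ℝ) → ℝ≥0∞}

lemma lav_congr {n : ℤ} {x y : Fin d → ℝ} (h : idx k n y = idx k n x) :
    lav k μ g n y = lav k μ g n x := by
  rw [lav, lav, dyBoxOf_congr h]

lemma measurable_lav (n : ℤ) : Measurable (lav k μ g n) :=
  measurable_of_idx fun _ _ => lav_congr

lemma lav_of_null {n : ℤ} {x : Fin d → ℝ} (h : μ (dyBoxOf d k n x) = 0) : lav k μ g n x = 0 := by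
  rw [lav, setLIntegral_measure_zero _ _ h, mul_zero]

lemma lav_mul_measure [IsFiniteMeasureOnCompacts μ] (n : ℤ) (x : Fin d → ℝ) :
    lav k μ g n x * μ (dyBoxOf d k n x) = ∫⁻ y in dyBoxOf d k n x, g y ∂μ := by
  by_cases h : μ (dyBoxOf d k n x) = 0
  · rw [h, mul_zero, setLIntegral_measure_zero _ _ h]
  · rw [lav, mul_right_comm, ENNReal.inv_mul_cancel h (measure_box_lt_top μ n x).ne, one_mul]

/-- Jensen's inequality on a box. -/
lemma lav_rpow_mul_measure_le [IsFiniteMeasureOnCompacts μ] (hg : Measurable g) {p : ℝ}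
    (hp : 1 < p) (n : ℤ) (x : Fin d → ℝ) :
    lav k μ g n x ^ p * μ (dyBoxOf d k n x) ≤ ∫⁻ y in dyBoxOf d k n x, g y ^ p ∂μ := by
  have hp0 : 0 < p := by linarith
  set B := dyBoxOf d k n x with hB
  by_cases h : μ B = 0
  · rw [h, mul_zero]; exact zero_le
  have hT : μ B ≠ ⊤ := (measure_box_lt_top μ n x).ne
  have hH := lintegral_mul_rpow_le (μ := μ.restrict B) hp (v := fun _ => 1)
    measurable_const hg
  simp only [ENNReal.one_rpow, mul_one, lintegral_const, Measure.restrict_apply_univ, one_mul] at hH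
  calc lav k μ g n x ^ p * μ B
      ≤ ((μ B)⁻¹ * ((∫⁻ y in B, g y ^ p ∂μ) ^ (1 / p) * μ B ^ ((p - 1) / p))) ^ p * μ B := by
        gcongr
        exact mul_le_mul_right hH _
    _ = (∫⁻ y in B, g y ^ p ∂μ) * (((μ B)⁻¹) ^ p * μ B ^ (p - 1) * μ B) := by
        rw [ENNReal.mul_rpow_of_nonneg _ _ hp0.le, ENNReal.mul_rpow_of_nonneg _ _ hp0.le,
          ← ENNReal.rpow_mul, ← ENNReal.rpow_mul, one_div_mul_cancel hp0.ne', ENNReal.rpow_one,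
          div_mul_cancel₀ _ hp0.ne']
        ring
    _ = ∫⁻ y in B, g y ^ p ∂μ := by
        rw [mul_assoc]
        nth_rewrite 3 [← ENNReal.rpow_one (μ B)]
        rw [← ENNReal.rpow_add _ _ h hT, ENNReal.inv_rpow, sub_add_cancel,
          ENNReal.inv_mul_cancel, mul_one]
        · simp [ENNReal.rpow_eq_zero_iff, h, hT]
        · simp [ENNReal.rpow_eq_top_iff, h, hT]

lemma lav_lt_top [IsFiniteMeasureOnCompacts μ] (hg : Measurable g) {p : ℝ}
    (hp : 1 < p) (hgp : ∫⁻ y, g y ^ p ∂μ ≠ ⊤) (n : ℤ) (x : Fin d → ℝ) : lav k μ g n x < ⊤ := by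
  by_cases h : μ (dyBoxOf d k n x) = 0
  · rw [lav_of_null h]; exact ENNReal.zero_lt_top
  by_contra hcon
  have h1 := (lav_rpow_mul_measure_le (k := k) (μ := μ) hg hp n x).trans (setLIntegral_le_lintegral _ _)
  rw [not_lt_top_iff.1 hcon, ENNReal.top_rpow_of_pos (by linarith), ENNReal.top_mul h] at h1
  exact hgp (top_le_iff.1 h1)

end

lemma ae_enorm_le_iSup_lav (hk : ∀ j, 1 ≤ k j) {μ : Measure (Fin d → ℝ)}
    [IsFiniteMeasureOnCompacts μ] {f : (Fin d → ℝ) → ℝ} (hf : LocallyIntegrable f μ)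
    (hfB : ∀ n x, IntegrableOn f (dyBoxOf d k n x) μ) :
    ∀ᵐ x ∂μ, (‖f x‖₊ : ℝ≥0∞) ≤ ⨆ n, lav k μ (fun y => (‖f y‖₊ : ℝ≥0∞)) n x := by
  filter_upwards [(vitali hk μ).ae_tendsto_average (f := fun y => ‖f y‖) fun x => (hf x).norm] with x hx
  have h1 : Tendsto (fun a => ENNReal.ofReal (⨍ y in a, ‖f y‖ ∂μ)) ((vitali hk μ).filterAt x)
      (nhds (ENNReal.ofReal ‖f x‖)) := (ENNReal.continuous_ofReal.tendsto _).comp hx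
  have e : (‖f x‖₊ : ℝ≥0∞) = ENNReal.ofReal ‖f x‖ := (ofReal_norm _).symm
  rw [e]
  refine le_of_tendsto h1 ?_
  filter_upwards [(vitali hk μ).eventually_filterAt_mem_setsAt x] with a ha
  obtain ⟨n, rfl⟩ := ha
  rw [ofReal_setAverage (hfB n x).norm (Eventually.of_forall fun _ => norm_nonneg _),
    ENNReal.div_eq_inv_mul]
  refine le_trans (le_of_eq ?_) (le_iSup _ (n : ℤ))
  rw [lav]
  simp_rw [ofReal_norm]
  rfl

/-! ### The dyadic maximal inequality -/

section
variable {μ : Measure (Fin d → ℝ)} {g : (Fin d → ℝ) → ℝ≥0∞}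

lemma lintegral_lav_rpow_le [IsFiniteMeasureOnCompacts μ] (hg : Measurable g) {p : ℝ}
    (hp : 1 < p) (n : ℤ) : ∫⁻ x, lav k μ g n x ^ p ∂μ ≤ ∫⁻ x, g x ^ p ∂μ := by
  have h := lintegral_le_of_saturated (k := k) (μ := μ) (n := n) (A := Set.univ)
    (F := fun x => lav k μ g n x ^ p) (G := fun x => g x ^ p) (fun _ _ _ _ => trivial) ?_
  · simpa using h
  intro x _
  have : ∫⁻ y in dyBoxOf d k n x, lav k μ g n y ^ p ∂μ =
      ∫⁻ _ in dyBoxOf d k n x, lav k μ g n x ^ p ∂μ := by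
    refine setLIntegral_congr_fun (measurableSet_box n x) fun y hy => ?_
    simp only [lav_congr (μ := μ) (g := g) (mem_dyBoxOf.1 hy)]
  rw [this, setLIntegral_const]
  exact lav_rpow_mul_measure_le hg hp n x

lemma iSup_rpow {ι : Type*} (a : ι → ℝ≥0∞) {p : ℝ} (hp : 0 < p) :
    (⨆ i, a i) ^ p = ⨆ i, a i ^ p :=
  (ENNReal.orderIsoRpow p hp).map_iSup a

/-- Doob's inequality for finitely many generations, where the maximal function is a priori in
`L_p`. -/
lemma maximal_finite [IsFiniteMeasureOnCompacts μ] (hg : Measurable g) {p : ℝ}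
    (hp : 1 < p) (hgp : ∫⁻ y, g y ^ p ∂μ ≠ ⊤) (I : Finset ℤ) :
    (∫⁻ x, (⨆ n ∈ I, lav k μ g n x) ^ p ∂μ) ^ (1 / p) ≤
      ENNReal.ofReal (p / (p - 1)) * (∫⁻ x, g x ^ p ∂μ) ^ (1 / p) := by
  have hp0 : 0 < p := by linarith
  have hp1 : 0 < p - 1 := by linarith
  set a : ℤ → (Fin d → ℝ) → ℝ≥0∞ := fun n x => ⨆ _ : n ∈ I, lav k μ g n x with ha
  set M : (Fin d → ℝ) → ℝ≥0∞ := fun x => ⨆ n, a n x with hM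
  have ham : ∀ n, Measurable (a n) := fun n => Measurable.iSup fun _ => measurable_lav n
  have hMm : Measurable M := Measurable.iSup ham
  have hpow : ∀ x, M x ^ p ≤ ∑ n ∈ I, lav k μ g n x ^ p := by
    intro x
    simp only [hM, ha]
    rw [iSup_rpow _ hp0]
    refine iSup_le fun n => ?_
    by_cases hn : n ∈ I
    swap
    · simp [hn, ENNReal.zero_rpow_of_pos hp0]
    simp only [hn, iSup_pos]
    exact Finset.single_le_sum (f := fun n => lav k μ g n x ^ p) (fun _ _ => zero_le) hn
  have hMtop : ∀ x, M x ≠ ⊤ := by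
    intro x hx
    have h1 := hpow x
    rw [hx, ENNReal.top_rpow_of_pos hp0, top_le_iff, ENNReal.sum_eq_top] at h1
    obtain ⟨n, _, hn⟩ := h1
    exact (ENNReal.rpow_lt_top_of_nonneg hp0.le (lav_lt_top hg hp hgp n x).ne).ne hn
  have hfin : ∫⁻ x, M x ^ p ∂μ ≠ ⊤ := by
    refine ne_top_of_le_ne_top ?_ (lintegral_mono hpow)
    rw [lintegral_finsetSum _ fun n _ => (measurable_lav n).pow_const _]
    exact ENNReal.sum_ne_top.2 fun n _ =>
      ne_top_of_le_ne_top hgp (lintegral_lav_rpow_le hg hp n)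
  have hweak : ∀ t : ℝ, 0 < t → ENNReal.ofReal t * μ {x | t < (M x).toReal} ≤
      1 * ∫⁻ x in {x | ENNReal.ofReal t < M x}, g x ∂μ := by
    intro t ht
    have e1 : {x | t < (M x).toReal} = {x | ENNReal.ofReal t < M x} := by
      ext x
      exact (ENNReal.ofReal_lt_iff_lt_toReal ht.le (hMtop x)).symm
    have e2 : {x | ENNReal.ofReal t < M x} = {x | ∃ n, ENNReal.ofReal t < a n x} := by
      ext x; simp only [hM, Set.mem_ofPred_eq, lt_iSup_iff]
    rw [e1, e2, one_mul, ← setLIntegral_const]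
    refine lintegral_le_of_stopping (k := k) ?_ ?_ ?_
    · intro n x y hxy
      simp only [ha, lav_congr (μ := μ) (g := g) hxy]
    · intro x
      obtain ⟨m, hm⟩ := I.bddBelow
      refine ⟨m, fun n hn => ?_⟩
      have : n ∉ I := fun h => (hm h).not_gt hn
      simp [ha, this]
    · intro n x hx _
      have h1 : ENNReal.ofReal t ≤ lav k μ g n x := hx.le.trans (iSup_le fun _ => le_rfl)
      rw [setLIntegral_const, ← lav_mul_measure]
      gcongr
  have h1 := lintegral_rpow_le_of_distrib hp (fun x => ENNReal.toReal_nonneg)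
    hMm.ennreal_toReal hMm hg 1 hweak
  simp only [ENNReal.ofReal_toReal (hMtop _), one_mul] at h1
  have h2 : ∫⁻ x, M x ^ p ∂μ ≤ ENNReal.ofReal (p / (p - 1)) * (∫⁻ x, g x ^ p ∂μ) ^ (1 / p) *
      (∫⁻ x, M x ^ p ∂μ) ^ ((p - 1) / p) := by
    refine h1.trans ?_
    rw [mul_assoc]
    gcongr
    exact lintegral_mul_rpow_le hp hMm hg
  exact le_of_le_mul_rpow hp hfin h2

/-- The dyadic maximal function is bounded on `L_p` with constant `p / (p - 1)`. -/
lemma maximal [IsFiniteMeasureOnCompacts μ] (hg : Measurable g) {p : ℝ}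
    (hp : 1 < p) (hgp : ∫⁻ y, g y ^ p ∂μ ≠ ⊤) :
    (∫⁻ x, (⨆ n, lav k μ g n x) ^ p ∂μ) ^ (1 / p) ≤
      ENNReal.ofReal (p / (p - 1)) * (∫⁻ x, g x ^ p ∂μ) ^ (1 / p) := by
  have hp0 : 0 < p := by linarith
  set I : ℕ → Finset ℤ := fun m => Finset.Icc (-(m : ℤ)) m with hI
  have hImono : Monotone I := fun m m' h => Finset.Icc_subset_Icc (by omega) (by omega)
  have e : ∀ x, (⨆ n, lav k μ g n x) ^ p = ⨆ m, (⨆ n ∈ I m, lav k μ g n x) ^ p := by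
    intro x
    rw [← iSup_rpow _ hp0]
    congr 1
    refine le_antisymm (iSup_le fun n => ?_) (iSup_le fun m => iSup₂_le fun n _ =>
      le_iSup (fun n => lav k μ g n x) n)
    refine le_iSup_of_le n.natAbs (le_iSup₂_of_le n ?_ le_rfl)
    simp only [hI, Finset.mem_Icc]
    omega
  simp_rw [e]
  rw [lintegral_iSup, iSup_rpow _ (by positivity)]
  · exact iSup_le fun m => maximal_finite hg hp hgp (I m)
  · intro m
    exact (Measurable.iSup fun n => Measurable.iSup fun _ => measurable_lav n).pow_const _
  · intro m m' h x
    refine ENNReal.rpow_le_rpow ?_ hp0.le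
    exact biSup_mono fun n hn => hImono h hn

end

/-! ### Consequences of doubling -/

section
variable {μ : Measure (Fin d → ℝ)} {g : (Fin d → ℝ) → ℝ≥0∞} {N₀ : ℝ≥0}

lemma lav_le_pred [IsFiniteMeasureOnCompacts μ] (hN : N₀ ≠ 0)
    (hD : ∀ n x, μ (dyBoxOf d k (n - 1) x) ≤ N₀ * μ (dyBoxOf d k n x)) (n : ℤ) (x : Fin d → ℝ) :
    lav k μ g n x ≤ N₀ * lav k μ g (n - 1) x := by
  have hN' : (N₀ : ℝ≥0∞) ≠ 0 := by simpa using hN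
  have h1 : (μ (dyBoxOf d k n x))⁻¹ ≤ N₀ * (μ (dyBoxOf d k (n - 1) x))⁻¹ := by
    have h2 := ENNReal.inv_le_inv.2 (hD n x)
    rw [ENNReal.mul_inv (Or.inl hN') (Or.inl ENNReal.coe_ne_top)] at h2
    calc (μ (dyBoxOf d k n x))⁻¹ = N₀ * ((N₀ : ℝ≥0∞)⁻¹ * (μ (dyBoxOf d k n x))⁻¹) := by
          rw [← mul_assoc, ENNReal.mul_inv_cancel hN' ENNReal.coe_ne_top, one_mul]
      _ ≤ _ := by gcongr
  rw [lav, lav, ← mul_assoc]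
  gcongr
  exact dyBoxOf_anti (by omega) x

/-- Ancestors of a box of positive measure have measure growing at least linearly: each parent also
contains a sibling, whose measure is bounded below by doubling. -/
lemma measure_ancestor_ge (hd : 1 ≤ d) (hk : ∀ j, 1 ≤ k j) (hN : N₀ ≠ 0)
    (hD : ∀ n x, μ (dyBoxOf d k (n - 1) x) ≤ N₀ * μ (dyBoxOf d k n x)) (n : ℤ) (x : Fin d → ℝ)
    (j : ℕ) : (j : ℝ≥0∞) * ((N₀ : ℝ≥0∞)⁻¹ * μ (dyBoxOf d k n x)) ≤ μ (dyBoxOf d k (n - j) x) := by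
  have hN' : (N₀ : ℝ≥0∞) ≠ 0 := by simpa using hN
  induction j with
  | zero => simp
  | succ j ih =>
    obtain ⟨y, hy1, hy2⟩ := exists_sibling hd hk (n - j) x
    have hsub : dyBoxOf d k (n - j) x ∪ dyBoxOf d k (n - j) y ⊆ dyBoxOf d k (n - j - 1) x := by
      refine Set.union_subset (dyBoxOf_anti (by omega) x) ?_
      rw [← dyBoxOf_congr hy1]
      exact dyBoxOf_anti (by omega) y
    have hdisj : Disjoint (dyBoxOf d k (n - j) x) (dyBoxOf d k (n - j) y) :=
      Set.disjoint_left.2 fun z hz hz' =>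
        hy2 ((mem_dyBoxOf.1 hz').symm.trans (mem_dyBoxOf.1 hz))
    have h1 : (N₀ : ℝ≥0∞)⁻¹ * μ (dyBoxOf d k n x) ≤ μ (dyBoxOf d k (n - j) y) := by
      calc (N₀ : ℝ≥0∞)⁻¹ * μ (dyBoxOf d k n x)
          ≤ (N₀ : ℝ≥0∞)⁻¹ * (N₀ * μ (dyBoxOf d k (n - j) y)) := by
            gcongr
            refine (measure_mono ?_).trans (hD (n - j) y)
            rw [dyBoxOf_congr hy1]
            exact dyBoxOf_anti (by omega) x
        _ = _ := by rw [← mul_assoc, ENNReal.inv_mul_cancel hN' ENNReal.coe_ne_top, one_mul]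
    calc ((j + 1 : ℕ) : ℝ≥0∞) * ((N₀ : ℝ≥0∞)⁻¹ * μ (dyBoxOf d k n x))
        = j * ((N₀ : ℝ≥0∞)⁻¹ * μ (dyBoxOf d k n x)) + (N₀ : ℝ≥0∞)⁻¹ * μ (dyBoxOf d k n x) := by
          push_cast; ring
      _ ≤ μ (dyBoxOf d k (n - j) x) + μ (dyBoxOf d k (n - j) y) := add_le_add ih h1
      _ = μ (dyBoxOf d k (n - j) x ∪ dyBoxOf d k (n - j) y) :=
          (measure_union hdisj (measurableSet_box _ _)).symm
      _ ≤ μ (dyBoxOf d k (n - j - 1) x) := measure_mono hsub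
      _ = _ := by
          rw [show n - (j : ℤ) - 1 = n - ((j + 1 : ℕ) : ℤ) by push_cast; ring]

/-- Averages of an `L_p` function over large boxes are small. -/
lemma exists_lav_le [IsFiniteMeasureOnCompacts μ] (hd : 1 ≤ d) (hk : ∀ j, 1 ≤ k j) (hN : N₀ ≠ 0)
    (hD : ∀ n x, μ (dyBoxOf d k (n - 1) x) ≤ N₀ * μ (dyBoxOf d k n x)) (hg : Measurable g) {p : ℝ}
    (hp : 1 < p) (hgp : ∫⁻ y, g y ^ p ∂μ ≠ ⊤) {c : ℝ≥0∞} (hc : c ≠ 0) (x : Fin d → ℝ) :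
    ∃ m : ℤ, ∀ n < m, lav k μ g n x ≤ c := by
  have hp0 : 0 < p := by linarith
  by_cases hnull : ∀ n, μ (dyBoxOf d k n x) = 0
  · exact ⟨0, fun n _ => by rw [lav_of_null (hnull n)]; exact zero_le⟩
  push Not at hnull
  obtain ⟨n₀, hn₀⟩ := hnull
  rcases eq_or_ne c ⊤ with rfl | hcT
  · exact ⟨0, fun n _ => le_top⟩
  have hcp : c ^ p ≠ 0 := by simp [ENNReal.rpow_eq_zero_iff, hc, hp0.le]
  have hcpT : c ^ p ≠ ⊤ := ENNReal.rpow_ne_top_of_nonneg hp0.le hcT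
  obtain ⟨J, hJ⟩ := ENNReal.exists_nat_mul_gt
    (a := (N₀ : ℝ≥0∞)⁻¹ * μ (dyBoxOf d k n₀ x)) (b := (∫⁻ y, g y ^ p ∂μ) / c ^ p)
    (mul_ne_zero (ENNReal.inv_ne_zero.2 ENNReal.coe_ne_top) hn₀) (ENNReal.div_ne_top hgp hcp)
  refine ⟨n₀ - J, fun n hn => ?_⟩
  by_contra! hcon
  have h1 : μ (dyBoxOf d k n x) * c ^ p ≤ ∫⁻ y, g y ^ p ∂μ := by
    refine le_trans ?_ ((lav_rpow_mul_measure_le (k := k) (μ := μ) hg hp n x).trans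
      (setLIntegral_le_lintegral _ _))
    rw [mul_comm]
    gcongr
  have h2 := (measure_ancestor_ge hd hk hN hD n₀ x J).trans
    (measure_mono (dyBoxOf_anti hn.le x))
  have h3 := h2.trans ((ENNReal.le_div_iff_mul_le (Or.inl hcp) (Or.inl hcpT)).2 h1)
  exact h3.not_gt hJ

end

/-! ### The sharp function -/

section
variable {μ : Measure (Fin d → ℝ)} {f : (Fin d → ℝ) → ℝ}

lemma dyAvg_congr {n : ℤ} {x y : Fin d → ℝ} (h : idx k n y = idx k n x) :
    dyAvg d k μ f n y = dyAvg d k μ f n x := by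
  rw [dyAvg, dyAvg, dyBoxOf_congr h]

lemma measurable_dySharp : Measurable (dySharp d k μ f) := by
  refine Measurable.iSup fun n => measurable_of_idx (k := k) (n := n) fun x y hxy => ?_
  rw [dyBoxOf_congr hxy]

lemma enorm_dyAvg_le (n : ℤ) (x : Fin d → ℝ) :
    ENNReal.ofReal |dyAvg d k μ f n x| ≤ lav k μ (fun y => (‖f y‖₊ : ℝ≥0∞)) n x := by
  rw [← Real.enorm_eq_ofReal_abs, dyAvg, average]
  refine (enorm_integral_le_lintegral_enorm _).trans (le_of_eq ?_)
  rw [lintegral_smul_measure, Measure.restrict_apply_univ]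
  rfl

lemma lintegral_osc_le [IsFiniteMeasureOnCompacts μ] (n : ℤ) (x : Fin d → ℝ) :
    ∫⁻ y in dyBoxOf d k n x, ENNReal.ofReal |f y - dyAvg d k μ f n x| ∂μ ≤
      ∫⁻ y in dyBoxOf d k n x, dySharp d k μ f y ∂μ := by
  rw [← lav_mul_measure, ← setLIntegral_const]
  refine setLIntegral_mono' (measurableSet_box n x) fun y hy => ?_
  refine le_trans (le_of_eq ?_) (le_iSup _ n)
  rw [dyBoxOf_congr (mem_dyBoxOf.1 hy), lav]
  congr 1
  refine setLIntegral_congr_fun (measurableSet_box n x) fun z hz => ?_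
  simp only [dyAvg_congr (μ := μ) (f := f) (mem_dyBoxOf.1 hz)]

/-- The good-λ inequality: stop at the first box on which the average of `|f|` exceeds
`t / (2 N₀)`. By doubling that average is still at most `t / 2`, so where `|f| > t` the oscillation
is at least `t / 2`. -/
lemma good_lambda [IsFiniteMeasureOnCompacts μ] (hd : 1 ≤ d) (hk : ∀ j, 1 ≤ k j) {N₀ : ℝ≥0}
    (hN : 1 ≤ N₀) (hD : ∀ n x, μ (dyBoxOf d k (n - 1) x) ≤ N₀ * μ (dyBoxOf d k n x)) {p : ℝ}
    (hp : 1 < p) (hf : Measurable f) (hgp : ∫⁻ x, (‖f x‖₊ : ℝ≥0∞) ^ p ∂μ ≠ ⊤)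
    (hae : ∀ᵐ x ∂μ, (‖f x‖₊ : ℝ≥0∞) ≤ ⨆ n, lav k μ (fun y => (‖f y‖₊ : ℝ≥0∞)) n x)
    {t : ℝ} (ht : 0 < t) :
    ENNReal.ofReal t * μ {x | t < |f x|} ≤
      2 * ∫⁻ x in {x | ENNReal.ofReal t < 2 * N₀ * ⨆ n, lav k μ (fun y => (‖f y‖₊ : ℝ≥0∞)) n x},
        dySharp d k μ f x ∂μ := by
  have hN0 : N₀ ≠ 0 := (zero_lt_one.trans_le hN).ne'
  have hN0' : (2 * N₀ : ℝ≥0∞) ≠ 0 := by simp [hN0]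
  have hNT : (2 * N₀ : ℝ≥0∞) ≠ ⊤ := ENNReal.mul_ne_top ENNReal.ofNat_ne_top ENNReal.coe_ne_top
  set g : (Fin d → ℝ) → ℝ≥0∞ := fun y => (‖f y‖₊ : ℝ≥0∞) with hgdef
  have hg : Measurable g := hf.enorm
  have hgabs : ∀ x, g x = ENNReal.ofReal |f x| := fun x => Real.enorm_eq_ofReal_abs _
  set a : ℤ → (Fin d → ℝ) → ℝ≥0∞ := fun n x => 2 * N₀ * lav k μ g n x with ha
  have hE : {x | ENNReal.ofReal t < 2 * N₀ * ⨆ n, lav k μ g n x} =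
      {x | ∃ n, ENNReal.ofReal t < a n x} := by
    ext x
    simp only [Set.mem_ofPred_eq, ha]
    rw [ENNReal.mul_iSup, lt_iSup_iff]
  have hEm : MeasurableSet {x | ∃ n, ENNReal.ofReal t < a n x} := by
    rw [← hE]
    exact measurableSet_lt measurable_const
      ((Measurable.iSup fun n => measurable_lav n).const_mul _)
  have hSm : MeasurableSet {x | t < |f x|} := measurableSet_lt measurable_const hf.norm
  have hsub : μ {x | t < |f x|} ≤ μ ({x | t < |f x|} ∩ {x | ∃ n, ENNReal.ofReal t < a n x}) := by
    refine measure_mono_ae ?_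
    filter_upwards [hae] with x hx hxt
    refine ⟨hxt, ?_⟩
    rw [← hE]
    refine lt_of_lt_of_le ((ENNReal.ofReal_lt_ofReal_iff_of_nonneg ht.le).2 hxt) ?_
    rw [← hgabs]
    refine hx.trans ?_
    calc (⨆ n, lav k μ g n x) = 1 * ⨆ n, lav k μ g n x := (one_mul _).symm
      _ ≤ 2 * N₀ * ⨆ n, lav k μ g n x := by
        gcongr
        calc (1 : ℝ≥0∞) = 1 * 1 := (one_mul 1).symm
          _ ≤ 2 * N₀ := mul_le_mul' one_le_two (by exact_mod_cast hN)
  have hF : ∀ A : Set (Fin d → ℝ), ∫⁻ x in A, {x | t < |f x|}.indicator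
      (fun _ => ENNReal.ofReal t) x ∂μ = ENNReal.ofReal t * μ ({x | t < |f x|} ∩ A) := by
    intro A
    rw [lintegral_indicator_const hSm, Measure.restrict_apply hSm]
  rw [hE, ← lintegral_const_mul _ measurable_dySharp]
  calc ENNReal.ofReal t * μ {x | t < |f x|}
      ≤ ENNReal.ofReal t * μ ({x | t < |f x|} ∩ {x | ∃ n, ENNReal.ofReal t < a n x}) := by gcongr
    _ = ∫⁻ x in {x | ∃ n, ENNReal.ofReal t < a n x}, {x | t < |f x|}.indicator
          (fun _ => ENNReal.ofReal t) x ∂μ := (hF _).symm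
    _ ≤ _ := by
      refine lintegral_le_of_stopping (k := k) ?_ ?_ ?_
      · intro n x y hxy
        simp only [ha, lav_congr (μ := μ) (g := g) hxy]
      · intro x
        obtain ⟨m, hm⟩ := exists_lav_le (c := ENNReal.ofReal t / (2 * N₀)) hd hk hN0 hD hg hp hgp
          (ENNReal.div_pos (by simpa using ht) hNT).ne' x
        exact ⟨m, fun n hn => ENNReal.mul_le_of_le_div' (hm n hn)⟩
      · intro n x _ hprev
        have h1 : 2 * ENNReal.ofReal |dyAvg d k μ f n x| ≤ ENNReal.ofReal t := by
          calc 2 * ENNReal.ofReal |dyAvg d k μ f n x|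
              ≤ 2 * (N₀ * lav k μ g (n - 1) x) := by
                gcongr
                exact (enorm_dyAvg_le n x).trans (lav_le_pred hN0 hD n x)
            _ = a (n - 1) x := by simp only [ha, mul_assoc]
            _ ≤ _ := hprev (n - 1) (by omega)
        have h2 : 2 * |dyAvg d k μ f n x| ≤ t := by
          rwa [show (2 : ℝ≥0∞) = ENNReal.ofReal 2 by simp, ← ENNReal.ofReal_mul zero_le_two,
            ENNReal.ofReal_le_ofReal_iff ht.le] at h1
        calc ∫⁻ y in dyBoxOf d k n x, {x | t < |f x|}.indicator (fun _ => ENNReal.ofReal t) y ∂μ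
            ≤ ∫⁻ y in dyBoxOf d k n x, 2 * ENNReal.ofReal |f y - dyAvg d k μ f n x| ∂μ := by
              refine lintegral_mono (Set.indicator_le' (fun y hy => ?_) fun _ _ => zero_le)
              have hy' : t < |f y| := hy
              rw [show (2 : ℝ≥0∞) = ENNReal.ofReal 2 by simp, ← ENNReal.ofReal_mul zero_le_two]
              refine ENNReal.ofReal_le_ofReal ?_
              have := abs_sub_abs_le_abs_sub (f y) (dyAvg d k μ f n x)
              linarith
          _ = 2 * ∫⁻ y in dyBoxOf d k n x, ENNReal.ofReal |f y - dyAvg d k μ f n x| ∂μ :=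
              lintegral_const_mul' _ _ ENNReal.ofNat_ne_top
          _ ≤ 2 * ∫⁻ y in dyBoxOf d k n x, dySharp d k μ f y ∂μ := by
              gcongr 2 * ?_
              exact lintegral_osc_le n x
          _ = _ := (lintegral_const_mul _ measurable_dySharp).symm

end

end DyadicFS

open DyadicFS

/-- **Dyadic Fefferman–Stein theorem.** Under the dyadic doubling condition with constant `N₀`,
for `p ∈ (1,∞)`, `q = p/(p−1)` and `f ∈ L_p(μ)` one has
`‖f‖_{L_p(μ)} ≤ (2q)^p N₀^{p−1} ‖f^{#}‖_{L_p(μ)}`. -/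
theorem dyadic_fefferman_stein
    (d : ℕ) (hd : 1 ≤ d) (k : Fin d → ℕ) (hk : ∀ j, 1 ≤ k j)
    (μ : Measure (Fin d → ℝ)) [IsFiniteMeasureOnCompacts μ]
    (hμ : ∀ x, Tendsto (fun l : ℝ => μ (cornerBox d k x l)) atTop (nhds ⊤))
    (N₀ : ℝ≥0)
    (hdouble : ∀ (n : ℤ) (i i' : Fin d → ℤ), dyBox d k n i ⊆ dyBox d k (n - 1) i' →
      μ (dyBox d k (n - 1) i') ≤ (N₀ : ℝ≥0∞) * μ (dyBox d k n i))
    (p : ℝ) (hp : 1 < p)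
    (f : (Fin d → ℝ) → ℝ) (hf : Measurable f)
    (hfLp : ∫⁻ x, (‖f x‖₊ : ℝ≥0∞) ^ p ∂μ < ⊤) :
    (∫⁻ x, (‖f x‖₊ : ℝ≥0∞) ^ p ∂μ) ^ (1 / p) ≤
      ENNReal.ofReal ((2 * (p / (p - 1))) ^ p) * (N₀ : ℝ≥0∞) ^ (p - 1) *
        (∫⁻ x, dySharp d k μ f x ^ p ∂μ) ^ (1 / p) := by
  have hp0 : 0 < p := by linarith
  have hp1 : 0 < p - 1 := by linarith
  rcases eq_or_ne μ 0 with rfl | hμ0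
  · simp [ENNReal.zero_rpow_of_pos (inv_pos.2 hp0)]
  have hD : ∀ n x, μ (dyBoxOf d k (n - 1) x) ≤ N₀ * μ (dyBoxOf d k n x) := fun n x =>
    hdouble n _ _ (dyBoxOf_anti (by omega) x)
  have hN : 1 ≤ N₀ := by
    obtain ⟨x, hx⟩ : ∃ x, μ (dyBoxOf d k 0 x) ≠ 0 := by
      by_contra! hcon
      apply hμ0
      rw [← Measure.measure_univ_eq_zero]
      have hU : (Set.univ : Set (Fin d → ℝ)) = ⋃ i : Fin d → ℤ, idx k 0 ⁻¹' {i} := by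
        ext x; simp
      rw [hU]
      refine measure_iUnion_null fun i => ?_
      rcases Set.eq_empty_or_nonempty (idx k 0 ⁻¹' {i}) with he | ⟨x, hx⟩
      · rw [he]; exact measure_empty
      · have := hcon x
        rwa [dyBoxOf_eq, show idx k 0 x = i from hx] at this
    have h1 := (measure_mono (dyBoxOf_anti (k := k) (by omega : (0 : ℤ) - 1 ≤ 0) x)).trans (hD 0 x)
    by_contra! hlt
    have h2 : (N₀ : ℝ≥0∞) * μ (dyBoxOf d k 0 x) < 1 * μ (dyBoxOf d k 0 x) :=
      ENNReal.mul_lt_mul_left hx (measure_box_lt_top μ 0 x).ne (by exact_mod_cast hlt)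
    rw [one_mul] at h2
    exact h1.not_gt h2
  have hmem : MemLp f (ENNReal.ofReal p) μ := by
    refine ⟨hf.aestronglyMeasurable, ?_⟩
    rw [eLpNorm_lt_top_iff_lintegral_rpow_enorm_lt_top (by simpa using hp0) ENNReal.ofReal_ne_top,
      ENNReal.toReal_ofReal hp0.le]
    exact hfLp
  have hp1' : 1 ≤ ENNReal.ofReal p := by
    rw [← ENNReal.ofReal_one]; exact ENNReal.ofReal_le_ofReal hp.le
  have hae := ae_enorm_le_iSup_lav hk (hmem.locallyIntegrable hp1') fun n x => by
    have : IsFiniteMeasure (μ.restrict (dyBoxOf d k n x)) :=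
      ⟨by simpa using measure_box_lt_top μ n x⟩
    exact (hmem.restrict _).integrable hp1'
  set g : (Fin d → ℝ) → ℝ≥0∞ := fun y => (‖f y‖₊ : ℝ≥0∞) with hgdef
  have hg : Measurable g := hf.enorm
  have hgabs : ∀ x, ENNReal.ofReal |f x| = g x := fun x => (Real.enorm_eq_ofReal_abs _).symm
  set M : (Fin d → ℝ) → ℝ≥0∞ := fun x => ⨆ n, lav k μ g n x with hMdef
  have hM : Measurable M := Measurable.iSup fun n => measurable_lav n
  set U : ℝ≥0∞ := ∫⁻ x, g x ^ p ∂μ with hU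
  set S : ℝ≥0∞ := (∫⁻ x, dySharp d k μ f x ^ p ∂μ) ^ (1 / p) with hS
  set Q : ℝ≥0∞ := ENNReal.ofReal (p / (p - 1)) with hQ
  have h1 : U ≤ 2 * Q * ∫⁻ x, dySharp d k μ f x * (2 * N₀ * M x) ^ (p - 1) ∂μ := by
    have := lintegral_rpow_le_of_distrib hp (fun x => abs_nonneg (f x)) hf.norm
      (hM.const_mul (2 * (N₀ : ℝ≥0∞))) measurable_dySharp 2
      fun t ht => good_lambda hd hk hN hD hp hf hfLp.ne hae ht
    simpa only [hgabs] using this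
  have h2 : ∫⁻ x, dySharp d k μ f x * (2 * N₀ * M x) ^ (p - 1) ∂μ ≤
      (2 * N₀) ^ (p - 1) * (S * (Q * U ^ (1 / p)) ^ (p - 1)) := by
    calc ∫⁻ x, dySharp d k μ f x * (2 * N₀ * M x) ^ (p - 1) ∂μ
        = (2 * N₀) ^ (p - 1) * ∫⁻ x, dySharp d k μ f x * M x ^ (p - 1) ∂μ := by
          rw [← lintegral_const_mul _ (f := fun x => dySharp d k μ f x * M x ^ (p - 1))
            (measurable_dySharp.mul (hM.pow_const _))]
          refine lintegral_congr fun x => ?_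
          rw [ENNReal.mul_rpow_of_nonneg _ _ hp1.le, mul_left_comm]
      _ ≤ _ := by
          gcongr
          refine (lintegral_mul_rpow_le hp hM measurable_dySharp).trans ?_
          rw [show (p - 1) / p = 1 / p * (p - 1) by ring, ENNReal.rpow_mul]
          gcongr
          exact maximal hg hp hfLp.ne
  refine le_of_le_mul_rpow hp hfLp.ne (h1.trans ?_)
  calc 2 * Q * ∫⁻ x, dySharp d k μ f x * (2 * N₀ * M x) ^ (p - 1) ∂μ
      ≤ 2 * Q * ((2 * N₀) ^ (p - 1) * (S * (Q * U ^ (1 / p)) ^ (p - 1))) := by gcongr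
    _ = (2 * Q) ^ p * (N₀ : ℝ≥0∞) ^ (p - 1) * S * U ^ ((p - 1) / p) := by
        have e1 : (2 * Q) ^ p = 2 * Q * (2 * Q) ^ (p - 1) := by
          have hQ0 : 2 * Q ≠ 0 := by
            simp only [hQ, ne_eq, mul_eq_zero, ENNReal.ofReal_eq_zero, not_or, not_le]
            exact ⟨two_ne_zero, by positivity⟩
          have hQT : 2 * Q ≠ ⊤ := ENNReal.mul_ne_top ENNReal.ofNat_ne_top ENNReal.ofReal_ne_top
          nth_rewrite 2 [← ENNReal.rpow_one (2 * Q)]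
          rw [← ENNReal.rpow_add _ _ hQ0 hQT, add_sub_cancel]
        rw [e1, show (p - 1) / p = 1 / p * (p - 1) by ring, ENNReal.rpow_mul]
        simp only [ENNReal.mul_rpow_of_nonneg _ _ hp1.le]
        ring
    _ = _ := by
        rw [← ENNReal.ofReal_rpow_of_nonneg (by positivity) hp0.le,
          ENNReal.ofReal_mul zero_le_two, ENNReal.ofReal_ofNat]
end
end

section
/- Calderón–Zygmund estimate for the Laplacian: For every d ≥ 1 and p ∈ (1,∞) there is a constant N = N(d,p) such that for every u ∈ C_c^∞(ℝ^d) one has ‖D²u‖_{L_p(ℝ^d)} ≤ N ‖Δu‖_{L_p(ℝ^d)}, where ‖D²u‖_{L_p} = ( ∫_{ℝ^d} ( Σ_{i,j=1}^d |D_{ij}u|² )^{p/2} dx )^{1/p}. (The paper states the estimate for all u in the Sobolev space W²_p; this is equivalent since C_c^∞ is dense in W²_p.) -/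
/-!
The proof is the Bellman function method for the heat flow; no singular integrals are used. Let `q`
be conjugate to `p`, let `P_t` be the heat semigroup and let `u`, `g` be test functions. Since
`D_iD_j` commutes with `P_t`, integrating `∂_t ∫ P_t(D_iD_ju) P_t g` in time and integrating by parts
in space represents `∫ (D_iD_ju) g` as a space-time integral of a product
`P_t(D_jΔu) P_t(D_i g)`, up to a constant factor.

To bound this product one uses a `C²` function `Φ` of two real variables with
`0 ≤ Φ(x, y) - Φ(0) ≤ C (|x|^p + |y|^q)` (up to a regularisation parameter `ε`) whose Hessian form
dominates `τ ξ² + τ⁻¹ η² ≥ 2 |ξ η|` (`exists_bellman`). As `P_tΔu` and `P_t g` solve the heat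
equation, `∫ (Φ(P_tΔu, P_t g) - Φ(0))` decreases at a rate given by that Hessian form evaluated on
the gradients of `P_tΔu` and `P_t g`. The `τ`, `τ⁻¹` form of the bound matters: it allows the `j`-th
derivative of one function to be paired with the `i`-th derivative of the other, as the same `τ`
serves all directions. Comparing the two rates gives
`|∫ (D_iD_ju) g| ≤ ∫ (Φ(Δu, g) - Φ(0))` (`IsBellman.abs_integral_le`).

Letting `ε → 0` yields `|∫ (D_iD_ju) g| ≤ C (‖Δu‖_p^p + ‖g‖_q^q)` (`exists_bilinear`). Taking for `g` a
small multiple of a smooth version of `|w|^(p-2) w`, with `w = D_iD_ju`, the last term is absorbed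
and `‖w‖_p^p ≤ N ‖Δu‖_p^p` follows (`exists_pd_pd_estimate`). The triangle inequality in `L_p` then
passes from the entries of the Hessian to its norm.
-/

open MeasureTheory ENNReal

noncomputable section

/-- The second partial derivative `D_{ij}u` on `ℝ^d` (Euclidean space). -/
def D2 (d : ℕ) (u : EuclideanSpace ℝ (Fin d) → ℝ) (i j : Fin d)
    (x : EuclideanSpace ℝ (Fin d)) : ℝ :=
  fderiv ℝ (fun y => fderiv ℝ u y (EuclideanSpace.single j 1)) x (EuclideanSpace.single i 1)

/-- The Laplacian `Δu = ∑ᵢ D_{ii}u`. -/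
def lap (d : ℕ) (u : EuclideanSpace ℝ (Fin d) → ℝ) (x : EuclideanSpace ℝ (Fin d)) : ℝ :=
  ∑ i, D2 d u i i x

/-- The pointwise Hilbert–Schmidt norm `|D²u| = (∑_{i,j} |D_{ij}u|²)^{1/2}` of the Hessian. -/
def hessNorm (d : ℕ) (u : EuclideanSpace ℝ (Fin d) → ℝ) (x : EuclideanSpace ℝ (Fin d)) : ℝ :=
  Real.sqrt (∑ i, ∑ j, (D2 d u i j x) ^ 2)

/-! ### Test functions, a weight and the Gaussian -/

/-- Euclidean space `ℝ^d`. -/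
abbrev Eu (d : ℕ) := EuclideanSpace ℝ (Fin d)

/-- The partial derivative `D_k φ`. -/
def pd {d : ℕ} (k : Fin d) (φ : Eu d → ℝ) (x : Eu d) : ℝ :=
  fderiv ℝ φ x (EuclideanSpace.single k 1)

/-- Membership in `C_c^∞(ℝ^d)`. -/
structure IsTest {d : ℕ} (φ : Eu d → ℝ) : Prop where
  contDiff : ContDiff ℝ (⊤ : ℕ∞) φ
  compact : HasCompactSupport φ

section Test
variable {d : ℕ} {φ ψ : Eu d → ℝ}

lemma IsTest.continuous (h : IsTest φ) : Continuous φ := h.contDiff.continuous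

lemma IsTest.differentiable (h : IsTest φ) : Differentiable ℝ φ :=
  h.contDiff.differentiable (by simp)

lemma IsTest.continuous_fderiv (h : IsTest φ) : Continuous (fderiv ℝ φ) :=
  h.contDiff.continuous_fderiv (by simp)

lemma IsTest.integrable (h : IsTest φ) : Integrable φ :=
  h.continuous.integrable_of_hasCompactSupport h.compact

lemma IsTest.test_pd (h : IsTest φ) (k : Fin d) : IsTest (pd k φ) where
  contDiff := (h.contDiff.fderiv_right (m := (⊤ : ℕ∞)) (by simp)).clm_apply contDiff_const
  compact := h.compact.fderiv_apply ℝ _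

lemma IsTest.sum {ι : Type*} {s : Finset ι} {f : ι → Eu d → ℝ} (h : ∀ i ∈ s, IsTest (f i)) :
    IsTest (fun x => ∑ i ∈ s, f i x) where
  contDiff := ContDiff.sum fun i hi => (h i hi).contDiff
  compact := by
    classical
    induction s using Finset.induction_on with
    | empty => exact HasCompactSupport.zero
    | insert a s ha ih =>
      simp only [Finset.sum_insert ha]
      exact (h a (Finset.mem_insert_self a s)).compact.add
        (ih fun i hi => h i (Finset.mem_insert_of_mem hi))

lemma IsTest.exists_bound (h : IsTest φ) : ∃ M, 0 ≤ M ∧ ∀ x, |φ x| ≤ M := by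
  obtain ⟨M, hM⟩ := h.compact.exists_bound_of_continuous h.continuous
  exact ⟨M, (norm_nonneg _).trans (hM 0), hM⟩

lemma IsTest.exists_fderiv_bound (h : IsTest φ) : ∃ M, 0 ≤ M ∧ ∀ x, ‖fderiv ℝ φ x‖ ≤ M := by
  obtain ⟨M, hM⟩ := (h.compact.fderiv ℝ).exists_bound_of_continuous h.continuous_fderiv
  exact ⟨M, (norm_nonneg _).trans (hM 0), hM⟩

/-- Partial derivatives of a test function commute, by symmetry of the second derivative. -/
lemma pd_comm (h : IsTest φ) (i j : Fin d) : pd i (pd j φ) = pd j (pd i φ) := by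
  ext x
  have hs : IsSymmSndFDerivAt ℝ φ x := h.contDiff.contDiffAt.isSymmSndFDerivAt
    (by rw [minSmoothness_of_isRCLikeNormedField]; exact WithTop.coe_le_coe.2 (le_top : (2 : ℕ∞) ≤ ⊤))
  have hd : DifferentiableAt ℝ (fderiv ℝ φ) x :=
    (h.contDiff.fderiv_right (m := (⊤ : ℕ∞)) (by simp)).contDiffAt.differentiableAt (by simp)
  have key : ∀ a b : Fin d, pd a (pd b φ) x =
      fderiv ℝ (fderiv ℝ φ) x (EuclideanSpace.single a 1) (EuclideanSpace.single b 1) := by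
    intro a b
    unfold pd
    rw [fderiv_clm_apply hd (differentiableAt_const _)]
    simp
  rw [key, key]
  exact hs _ _

lemma fderiv_eq_sum_pd (f : Eu d → ℝ) (x v : Eu d) : fderiv ℝ f x v = ∑ k, v k * pd k f x := by
  conv_lhs => rw [← (EuclideanSpace.basisFun (Fin d) ℝ).sum_repr v]
  simp [map_sum, pd]

end Test

/-- The Laplacian written through `pd`. -/
def lapl {d : ℕ} (φ : Eu d → ℝ) (x : Eu d) : ℝ := ∑ k, pd k (pd k φ) x

lemma IsTest.test_lapl {d : ℕ} {φ : Eu d → ℝ} (h : IsTest φ) : IsTest (lapl φ) :=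
  IsTest.sum fun k _ => (h.test_pd k).test_pd k

lemma pd_sum {d : ℕ} {ι : Type*} {s : Finset ι} {f : ι → Eu d → ℝ} (h : ∀ i ∈ s, IsTest (f i))
    (k : Fin d) : pd k (fun x => ∑ i ∈ s, f i x) = fun x => ∑ i ∈ s, pd k (f i) x := by
  ext x
  unfold pd
  rw [fderiv_fun_sum fun i hi => (h i hi).differentiable x]
  simp

lemma pd_lapl {d : ℕ} {φ : Eu d → ℝ} (h : IsTest φ) (k : Fin d) :
    pd k (lapl φ) = lapl (pd k φ) := by
  unfold lapl
  rw [pd_sum fun i _ => (h.test_pd i).test_pd i]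
  ext x
  refine Finset.sum_congr rfl fun i _ => ?_
  rw [pd_comm (h.test_pd i) k i, pd_comm h k i]

/-- The polynomially decaying integrable weight `(1 + |x|)^{-(d+1)}`. -/
def wt {d : ℕ} (x : Eu d) : ℝ := ((1 + ‖x‖) ^ (d + 1))⁻¹

section Weight
variable {d : ℕ}

lemma wt_pos (x : Eu d) : 0 < wt x := by unfold wt; positivity

lemma wt_le_one (x : Eu d) : wt x ≤ 1 :=
  inv_le_one_of_one_le₀ (one_le_pow₀ (by linarith [norm_nonneg x]))

lemma integrable_wt : Integrable (wt : Eu d → ℝ) := by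
  have h := integrable_one_add_norm (E := Eu d) (μ := volume) (r := ((d + 1 : ℕ) : ℝ)) (by simp)
  refine h.congr (Filter.Eventually.of_forall fun x => ?_)
  simp only [wt]
  rw [Real.rpow_neg (by positivity), Real.rpow_natCast]

/-- Peetre type inequality: a translation changes the weight by at most a polynomial factor in the
length of the translation. -/
lemma wt_add_smul_le {σ T : ℝ} (h : |σ| ≤ T) (x z : Eu d) :
    wt (x + σ • z) ≤ wt x * ((1 + T) ^ (d + 1) * (1 + ‖z‖) ^ (d + 1)) := by
  unfold wt
  rw [inv_mul_eq_div, le_div_iff₀ (by positivity), inv_mul_le_iff₀ (by positivity), ← mul_pow,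
    ← mul_pow]
  apply pow_le_pow_left₀ (by positivity)
  have hT : 0 ≤ T := (abs_nonneg σ).trans h
  have h1 : ‖x‖ ≤ ‖x + σ • z‖ + T * ‖z‖ := by
    calc ‖x‖ = ‖(x + σ • z) - σ • z‖ := by simp
      _ ≤ ‖x + σ • z‖ + ‖σ • z‖ := norm_sub_le _ _
      _ ≤ _ := by rw [norm_smul, Real.norm_eq_abs]; gcongr
  have hz := norm_nonneg z
  have hy := norm_nonneg (x + σ • z)
  nlinarith [mul_nonneg hT hz, mul_nonneg hy (mul_nonneg hT hz), mul_nonneg hy hz, mul_nonneg hy hT]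

lemma IsTest.exists_wt_bound {φ : Eu d → ℝ} (h : IsTest φ) :
    ∃ C, 0 ≤ C ∧ ∀ x, |φ x| ≤ C * wt x := by
  have hc : HasCompactSupport (fun x => φ x * (1 + ‖x‖) ^ (d + 1)) := h.compact.mul_right
  have hcont := h.continuous
  obtain ⟨M, hM⟩ := hc.exists_bound_of_continuous (by fun_prop)
  refine ⟨M, (norm_nonneg _).trans (hM 0), fun x => ?_⟩
  have := hM x
  rw [norm_mul, Real.norm_eq_abs, Real.norm_of_nonneg (by positivity)] at this
  rw [wt, ← div_eq_mul_inv, le_div_iff₀ (by positivity)]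
  exact this

end Weight

/-- The standard Gaussian density on `ℝ^d`. -/
def gauss {d : ℕ} (z : Eu d) : ℝ :=
  (∫ y : Eu d, Real.exp (-(‖y‖ ^ 2 / 2)))⁻¹ * Real.exp (-(‖z‖ ^ 2 / 2))

section Gauss
variable {d : ℕ}

lemma one_add_pow_mul_exp_le (M : ℕ) (t : ℝ) (ht : 0 ≤ t) :
    (1 + t) ^ M * Real.exp (-(t ^ 2 / 2)) ≤ Real.exp ((M : ℝ) ^ 2 / 2) := by
  have h1 : (1 + t) ^ M ≤ Real.exp (M * t) := by
    rw [Real.exp_nat_mul]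
    exact pow_le_pow_left₀ (by linarith) (by linarith [Real.add_one_le_exp t]) M
  calc (1 + t) ^ M * Real.exp (-(t ^ 2 / 2)) ≤ Real.exp (M * t) * Real.exp (-(t ^ 2 / 2)) := by
        gcongr
    _ = Real.exp (M * t + -(t ^ 2 / 2)) := (Real.exp_add _ _).symm
    _ ≤ _ := by
      apply Real.exp_le_exp.2
      nlinarith [sq_nonneg ((M : ℝ) - t)]

lemma integrable_pow_mul_exp (N : ℕ) :
    Integrable fun z : Eu d => (1 + ‖z‖) ^ N * Real.exp (-(‖z‖ ^ 2 / 2)) := by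
  refine (integrable_wt.const_mul (Real.exp (((N + (d + 1) : ℕ) : ℝ) ^ 2 / 2))).mono'
    (by fun_prop) (Filter.Eventually.of_forall fun z => ?_)
  have h := one_add_pow_mul_exp_le (N + (d + 1)) ‖z‖ (norm_nonneg z)
  rw [Real.norm_of_nonneg (by positivity), wt, ← div_eq_mul_inv, le_div_iff₀ (by positivity)]
  rw [pow_add] at h
  linarith

lemma integral_exp_pos : 0 < ∫ y : Eu d, Real.exp (-(‖y‖ ^ 2 / 2)) := by
  apply integral_pos_of_integrable_nonneg_nonzero (x := 0) (by fun_prop)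
  · simpa using integrable_pow_mul_exp (d := d) 0
  · intro x; positivity
  · simp

lemma gauss_pos (z : Eu d) : 0 < gauss z :=
  mul_pos (inv_pos.2 integral_exp_pos) (Real.exp_pos _)

lemma continuous_gauss : Continuous (gauss : Eu d → ℝ) := by unfold gauss; fun_prop

lemma gauss_le (z : Eu d) : gauss z ≤ gauss (0 : Eu d) := by
  unfold gauss
  have := inv_pos.2 (integral_exp_pos (d := d))
  gcongr
  simp

lemma integral_gauss : ∫ z : Eu d, gauss z = 1 := by
  unfold gauss
  rw [integral_const_mul, inv_mul_cancel₀ integral_exp_pos.ne']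

lemma integrable_pow_mul_gauss (N : ℕ) : Integrable fun z : Eu d => (1 + ‖z‖) ^ N * gauss z := by
  refine ((integrable_pow_mul_exp (d := d) N).const_mul
    (∫ y : Eu d, Real.exp (-(‖y‖ ^ 2 / 2)))⁻¹).congr (Filter.Eventually.of_forall fun z => ?_)
  simp only [gauss]
  ring

lemma integrable_gauss : Integrable (gauss : Eu d → ℝ) := by
  simpa using integrable_pow_mul_gauss (d := d) 0

lemma hasFDerivAt_gauss (z : Eu d) : HasFDerivAt gauss (-(gauss z) • innerSL ℝ z) z := by
  have h1 : HasFDerivAt (fun z : Eu d => ‖z‖ ^ 2) (2 • innerSL ℝ z) z :=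
    (hasStrictFDerivAt_norm_sq z).hasFDerivAt
  have h2 : HasFDerivAt (fun z : Eu d => -(‖z‖ ^ 2 / 2)) (-(innerSL ℝ z)) z := by
    have := (h1.const_mul (-(1/2) : ℝ))
    refine (this.congr_of_eventuallyEq (Filter.Eventually.of_forall fun y => ?_)).congr_fderiv ?_
    · simp only; ring
    · ext v; simp
  refine (h2.exp.const_mul (∫ y : Eu d, Real.exp (-(‖y‖ ^ 2 / 2)))⁻¹).congr_fderiv ?_
  ext v
  simp [gauss]
  ring

lemma pd_gauss (k : Fin d) (z : Eu d) : pd k gauss z = -(z k * gauss z) := by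
  rw [pd, (hasFDerivAt_gauss z).fderiv]
  simp [mul_comm, EuclideanSpace.inner_single_right]

end Gauss

/-! ### The Bellman function -/

/-- `F` has partial derivatives `a`, `b` at `z`, and is differentiable there. -/
def HasGradAt (F : ℝ × ℝ → ℝ) (a b : ℝ) (z : ℝ × ℝ) : Prop :=
  HasFDerivAt F (a • ContinuousLinearMap.fst ℝ ℝ ℝ + b • ContinuousLinearMap.snd ℝ ℝ ℝ) z

lemma HasGradAt.hasFDerivAt {F : ℝ × ℝ → ℝ} {a b : ℝ} {z : ℝ × ℝ} (h : HasGradAt F a b z) :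
    HasFDerivAt F (a • ContinuousLinearMap.fst ℝ ℝ ℝ + b • ContinuousLinearMap.snd ℝ ℝ ℝ) z := h

/-- `Φ` is a `C²` function on the plane with first derivatives `Φ₁`, `Φ₂` and second derivatives
`Φ₁₁`, `Φ₁₂`, `Φ₂₂`, minimal at the origin, exceeding its minimum by at most
`C (|x|^p + |y|^q)` up to terms that vanish with the regularisation parameter `ε`, and convex in the quantitative sense that its
Hessian at each point dominates `τ ξ² + τ⁻¹ η²` for some `τ > 0` (depending on the point).
In particular the Hessian form is at least `2 |ξ η|`. -/
structure IsBellman (p q C ε : ℝ) (Φ Φ₁ Φ₂ Φ₁₁ Φ₁₂ Φ₂₂ : ℝ × ℝ → ℝ) : Prop where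
  grad : ∀ z, HasGradAt Φ (Φ₁ z) (Φ₂ z) z
  grad₁ : ∀ z, HasGradAt Φ₁ (Φ₁₁ z) (Φ₁₂ z) z
  grad₂ : ∀ z, HasGradAt Φ₂ (Φ₁₂ z) (Φ₂₂ z) z
  continuous₁₁ : Continuous Φ₁₁
  continuous₁₂ : Continuous Φ₁₂
  continuous₂₂ : Continuous Φ₂₂
  lower : ∀ z, Φ 0 ≤ Φ z
  upper : ∀ z, Φ z - Φ 0 ≤ C * (|z.1| ^ p + |z.2| ^ q + ε ^ p + ε ^ q)
  hess : ∀ z, ∃ τ : ℝ, 0 < τ ∧ ∀ ξ η : ℝ,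
    τ * ξ ^ 2 + τ⁻¹ * η ^ 2 ≤ Φ₁₁ z * ξ ^ 2 + 2 * Φ₁₂ z * ξ * η + Φ₂₂ z * η ^ 2

/-- Exchanging the two variables exchanges the exponents, with `τ` replaced by `τ⁻¹`. -/
lemma IsBellman.swap {p q C ε : ℝ} {Φ Φ₁ Φ₂ Φ₁₁ Φ₁₂ Φ₂₂ : ℝ × ℝ → ℝ}
    (h : IsBellman p q C ε Φ Φ₁ Φ₂ Φ₁₁ Φ₁₂ Φ₂₂) :
    IsBellman q p C ε (Φ ∘ Prod.swap) (Φ₂ ∘ Prod.swap) (Φ₁ ∘ Prod.swap)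
      (Φ₂₂ ∘ Prod.swap) (Φ₁₂ ∘ Prod.swap) (Φ₁₁ ∘ Prod.swap) := by
  have key : ∀ (Ψ : ℝ × ℝ → ℝ) (α β : ℝ) (z : ℝ × ℝ),
      HasGradAt Ψ α β z.swap → HasGradAt (Ψ ∘ Prod.swap) β α z := by
    intro Ψ α β z hz
    have hs : HasFDerivAt (Prod.swap : ℝ × ℝ → ℝ × ℝ)
        ((ContinuousLinearMap.snd ℝ ℝ ℝ).prod (ContinuousLinearMap.fst ℝ ℝ ℝ)) z :=
      ((ContinuousLinearMap.snd ℝ ℝ ℝ).prod (ContinuousLinearMap.fst ℝ ℝ ℝ)).hasFDerivAt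
    refine HasFDerivAt.congr_fderiv (HasFDerivAt.comp z hz hs) ?_
    ext <;> simp
  refine ⟨fun z => key _ _ _ _ (h.grad _), fun z => key _ _ _ _ (h.grad₂ _),
    fun z => key _ _ _ _ (h.grad₁ _), h.continuous₂₂.comp continuous_swap,
    h.continuous₁₂.comp continuous_swap, h.continuous₁₁.comp continuous_swap,
    fun z => h.lower _, fun z => (h.upper z.swap).trans (le_of_eq ?_), fun z => ?_⟩
  · simp only [Prod.fst_swap, Prod.snd_swap]; ring
  · obtain ⟨τ, hτ, H⟩ := h.hess z.swap
    refine ⟨τ⁻¹, inv_pos.2 hτ, fun ξ η => ?_⟩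
    have := H η ξ
    simp only [Function.comp, inv_inv]
    linarith

/-- The algebra behind the lower bound for the Hessian of `x² S^θ + A Y`, where `S = X(x) + Y(y)`.
The variables `s₀`, `s₁`, `s₂` stand for `S^θ`, `S^(θ-1)`, `S^(θ-2)`, and `X₁`, `X₂`, `Y₁`, `Y₂` for
the first two derivatives of `X` and `Y`. The `ξ²` coefficient is at least `2 s₀`. The `η²`
coefficient is at least `17 β`: the term `A Y₂` contributes `21 β`, and the concavity of `S^θ` costs
at most `4 β`. The mixed term is at least `-(s₀ ξ² + 16 β η²)`. -/
lemma bellman_hess_aux {x X₁ X₂ Y₁ Y₂ S s₀ s₁ s₂ θ A β : ℝ} (hθ0 : 0 ≤ θ) (hθ1 : θ ≤ 1)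
    (hS : 0 < S) (hs₀ : 0 < s₀) (hs₁ : 0 < s₁) (h10 : s₁ * S = s₀) (h21 : s₂ * S = s₁)
    (hβ : 0 < β) (hx : x ^ 2 * s₁ ≤ 1) (hxX : 0 ≤ x * X₁) (hxX' : (1 - θ) * (x * X₁) ≤ 2 * S)
    (hX₂ : 0 ≤ X₂) (hY₁ : Y₁ ^ 2 ≤ 4 * S * β) (hY₂ : 0 ≤ Y₂) (hA : 21 * β ≤ A * Y₂) (ξ η : ℝ) :
    s₀ * ξ ^ 2 + β * η ^ 2 ≤
      (2 * s₀ + 4 * θ * x * s₁ * X₁ + θ * (θ - 1) * x ^ 2 * s₂ * X₁ ^ 2 + θ * x ^ 2 * s₁ * X₂)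
        * ξ ^ 2
      + 2 * (2 * θ * x * s₁ * Y₁ + θ * (θ - 1) * x ^ 2 * s₂ * X₁ * Y₁) * ξ * η
      + (θ * (θ - 1) * x ^ 2 * s₂ * Y₁ ^ 2 + θ * x ^ 2 * s₁ * Y₂ + A * Y₂) * η ^ 2 := by
  -- `r ∈ [0, 2]` measures the terms with the negative factor `θ - 1` against those without it.
  obtain ⟨r, hr⟩ : ∃ r, r = (1 - θ) * (x * X₁) / S := ⟨_, rfl⟩
  have hr0 : 0 ≤ r := by
    rw [hr]; exact div_nonneg (mul_nonneg (by linarith) hxX) hS.le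
  have hr2 : r ≤ 2 := by rw [hr, div_le_iff₀ hS]; exact hxX'
  have hs₂ : s₂ = s₁ / S := by rw [← h21]; field_simp
  have e1 : θ * (θ - 1) * x ^ 2 * s₂ * X₁ ^ 2 = - (r * (θ * (x * X₁) * s₁)) := by
    rw [hr, hs₂]; field_simp; ring
  have e2 : θ * (θ - 1) * x ^ 2 * s₂ * X₁ * Y₁ = - (r * (θ * x * s₁ * Y₁)) := by
    rw [hr, hs₂]; field_simp; ring
  have hxx : 2 * s₀ ≤ 2 * s₀ + 4 * θ * x * s₁ * X₁ + θ * (θ - 1) * x ^ 2 * s₂ * X₁ ^ 2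
      + θ * x ^ 2 * s₁ * X₂ := by
    have p1 : 0 ≤ θ * (x * X₁) * s₁ := by positivity
    have p2 : 0 ≤ θ * x ^ 2 * s₁ * X₂ := by positivity
    have p3 : 0 ≤ (4 - r) * (θ * (x * X₁) * s₁) := mul_nonneg (by linarith) p1
    rw [e1]; nlinarith
  have hs₂0 : 0 < s₂ := by rw [hs₂]; positivity
  have hyy : 17 * β ≤ θ * (θ - 1) * x ^ 2 * s₂ * Y₁ ^ 2 + θ * x ^ 2 * s₁ * Y₂ + A * Y₂ := by
    have p1 : x ^ 2 * s₂ * Y₁ ^ 2 ≤ 4 * β := by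
      calc x ^ 2 * s₂ * Y₁ ^ 2 ≤ x ^ 2 * s₂ * (4 * S * β) := by gcongr
        _ = (x ^ 2 * s₁) * (4 * β) := by rw [← h21]; ring
        _ ≤ 1 * (4 * β) := by gcongr
        _ = 4 * β := one_mul _
    have p2 : 0 ≤ θ * x ^ 2 * s₁ * Y₂ := by positivity
    have p3 : θ * (1 - θ) ≤ 1 := by nlinarith
    have p4 : 0 ≤ x ^ 2 * s₂ * Y₁ ^ 2 := by positivity
    have p5 : θ * (1 - θ) * (x ^ 2 * s₂ * Y₁ ^ 2) ≤ 1 * (x ^ 2 * s₂ * Y₁ ^ 2) := by gcongr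
    have p6 : θ * (θ - 1) * x ^ 2 * s₂ * Y₁ ^ 2 = - (θ * (1 - θ) * (x ^ 2 * s₂ * Y₁ ^ 2)) := by
      ring
    linarith
  -- `B` is the mixed second derivative.
  obtain ⟨B, hB⟩ : ∃ B, B = 2 * θ * x * s₁ * Y₁ + θ * (θ - 1) * x ^ 2 * s₂ * X₁ * Y₁ := ⟨_, rfl⟩
  have hB2 : B ^ 2 ≤ 16 * s₀ * β := by
    have e3 : B ^ 2 = (θ * (2 - r)) ^ 2 * (x ^ 2 * s₁ ^ 2 * Y₁ ^ 2) := by rw [hB, e2]; ring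
    have p1 : (θ * (2 - r)) ^ 2 ≤ 2 ^ 2 := by
      apply pow_le_pow_left₀ (mul_nonneg hθ0 (by linarith))
      nlinarith
    calc B ^ 2 = (θ * (2 - r)) ^ 2 * (x ^ 2 * s₁ ^ 2 * Y₁ ^ 2) := e3
      _ ≤ 2 ^ 2 * (x ^ 2 * s₁ ^ 2 * (4 * S * β)) := by gcongr
      _ = (x ^ 2 * s₁) * (16 * (s₁ * S) * β) := by ring
      _ ≤ 1 * (16 * (s₁ * S) * β) := by gcongr
      _ = _ := by rw [h10]; ring
  have hcross : - (s₀ * ξ ^ 2 + 16 * β * η ^ 2) ≤ 2 * B * ξ * η := by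
    have h := sq_nonneg (s₀ * ξ + B * η)
    have h' : B ^ 2 * η ^ 2 ≤ 16 * s₀ * β * η ^ 2 := by gcongr
    have : 0 ≤ s₀ * (s₀ * ξ ^ 2 + 2 * B * ξ * η + 16 * β * η ^ 2) := by nlinarith
    have := nonneg_of_mul_nonneg_right this hs₀
    linarith
  rw [← hB]
  have k1 := mul_le_mul_of_nonneg_right hxx (sq_nonneg ξ)
  have k2 := mul_le_mul_of_nonneg_right hyy (sq_nonneg η)
  linarith


lemma HasGradAt.congr {F : ℝ × ℝ → ℝ} {a b a' b' : ℝ} {z : ℝ × ℝ} (h : HasGradAt F a b z)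
    (ha : a = a') (hb : b = b') : HasGradAt F a' b' z := by subst ha hb; exact h

lemma HasGradAt.add {F G : ℝ × ℝ → ℝ} {a b a' b' : ℝ} {z : ℝ × ℝ} (hF : HasGradAt F a b z)
    (hG : HasGradAt G a' b' z) : HasGradAt (fun z => F z + G z) (a + a') (b + b') z := by
  refine HasFDerivAt.congr_fderiv (HasFDerivAt.add hF hG) ?_
  module

lemma HasGradAt.mul {F G : ℝ × ℝ → ℝ} {a b a' b' : ℝ} {z : ℝ × ℝ} (hF : HasGradAt F a b z)
    (hG : HasGradAt G a' b' z) :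
    HasGradAt (fun z => F z * G z) (F z * a' + G z * a) (F z * b' + G z * b) z := by
  refine HasFDerivAt.congr_fderiv (HasFDerivAt.mul hF hG) ?_
  module

lemma HasGradAt.comp {F : ℝ × ℝ → ℝ} {f : ℝ → ℝ} {a b c : ℝ} {z : ℝ × ℝ}
    (hf : HasDerivAt f c (F z)) (hF : HasGradAt F a b z) :
    HasGradAt (fun z => f (F z)) (c * a) (c * b) z := by
  refine HasFDerivAt.congr_fderiv (hf.comp_hasFDerivAt z hF) ?_
  module

lemma HasGradAt.const_mul {F : ℝ × ℝ → ℝ} {a b : ℝ} {z : ℝ × ℝ} (c : ℝ)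
    (hF : HasGradAt F a b z) : HasGradAt (fun z => c * F z) (c * a) (c * b) z :=
  HasGradAt.comp (f := fun t => c * t) (by simpa using (hasDerivAt_id (F z)).const_mul c) hF

lemma HasGradAt.rpow {F : ℝ × ℝ → ℝ} {a b : ℝ} {z : ℝ × ℝ} (r : ℝ)
    (hF : HasGradAt F a b z) (h : 0 < F z) :
    HasGradAt (fun z => F z ^ r) (r * F z ^ (r - 1) * a) (r * F z ^ (r - 1) * b) z :=
  HasGradAt.comp (Real.hasDerivAt_rpow_const (Or.inl h.ne')) hF

lemma HasGradAt.of_fst {f : ℝ → ℝ} {c : ℝ} {z : ℝ × ℝ} (hf : HasDerivAt f c z.1) :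
    HasGradAt (fun z => f z.1) c 0 z := by
  refine HasFDerivAt.congr_fderiv (hf.comp_hasFDerivAt z hasFDerivAt_fst) ?_
  module

lemma HasGradAt.of_snd {f : ℝ → ℝ} {c : ℝ} {z : ℝ × ℝ} (hf : HasDerivAt f c z.2) :
    HasGradAt (fun z => f z.2) 0 c z := by
  refine HasFDerivAt.congr_fderiv (hf.comp_hasFDerivAt z hasFDerivAt_snd) ?_
  module

/-- The function `(ε² + x²)^m`, a smooth substitute for `|x|^{2m}`. -/
def regPow (ε m x : ℝ) : ℝ := (ε ^ 2 + x ^ 2) ^ m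

/-- First derivative of `regPow ε m`. -/
def regPow₁ (ε m x : ℝ) : ℝ := 2 * m * x * (ε ^ 2 + x ^ 2) ^ (m - 1)

/-- Second derivative of `regPow ε m`. -/
def regPow₂ (ε m x : ℝ) : ℝ :=
  2 * m * (ε ^ 2 + x ^ 2) ^ (m - 1) + 4 * m * (m - 1) * x ^ 2 * (ε ^ 2 + x ^ 2) ^ (m - 2)

section regPow
variable {ε : ℝ}

lemma regPow_base_pos (hε : 0 < ε) (x : ℝ) : 0 < ε ^ 2 + x ^ 2 := by positivity

lemma hasDerivAt_base_rpow (hε : 0 < ε) (m x : ℝ) :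
    HasDerivAt (fun x => (ε ^ 2 + x ^ 2) ^ m) (2 * m * x * (ε ^ 2 + x ^ 2) ^ (m - 1)) x := by
  have h1 : HasDerivAt (fun x : ℝ => ε ^ 2 + x ^ 2) (2 * x) x := by
    simpa using (hasDerivAt_pow 2 x).const_add (ε ^ 2)
  have := h1.rpow_const (p := m) (Or.inl (regPow_base_pos hε x).ne')
  refine this.congr_deriv ?_
  ring

lemma hasDerivAt_regPow (hε : 0 < ε) (m x : ℝ) : HasDerivAt (regPow ε m) (regPow₁ ε m x) x :=
  hasDerivAt_base_rpow hε m x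

lemma hasDerivAt_regPow₁ (hε : 0 < ε) (m x : ℝ) : HasDerivAt (regPow₁ ε m) (regPow₂ ε m x) x := by
  have h := ((hasDerivAt_id x).const_mul (2 * m)).mul (hasDerivAt_base_rpow hε (m - 1) x)
  refine h.congr_deriv ?_
  have : m - 1 - 1 = m - 2 := by ring
  simp only [regPow₂, this, id]
  ring

lemma continuous_base_rpow (hε : 0 < ε) (m : ℝ) : Continuous fun x : ℝ => (ε ^ 2 + x ^ 2) ^ m :=
  continuous_iff_continuousAt.2 fun x => (hasDerivAt_base_rpow hε m x).continuousAt

lemma continuous_regPow₂ (hε : 0 < ε) (m : ℝ) : Continuous (regPow₂ ε m) := by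
  have h1 := continuous_base_rpow hε (m - 1)
  have h2 := continuous_base_rpow hε (m - 2)
  unfold regPow₂
  fun_prop

lemma regPow_pos (hε : 0 < ε) (m x : ℝ) : 0 < regPow ε m x :=
  Real.rpow_pos_of_pos (regPow_base_pos hε x) _

lemma sq_mul_base_rpow_le (hε : 0 < ε) (m x : ℝ) :
    x ^ 2 * (ε ^ 2 + x ^ 2) ^ (m - 1) ≤ (ε ^ 2 + x ^ 2) ^ m := by
  have h := regPow_base_pos hε x
  have e : (ε ^ 2 + x ^ 2) ^ m = (ε ^ 2 + x ^ 2) * (ε ^ 2 + x ^ 2) ^ (m - 1) := by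
    rw [Real.rpow_sub_one h.ne']; field_simp
  rw [e]
  gcongr
  nlinarith

/-- Compare `ε²` and `x²` with the larger of the two. -/
lemma regPow_le (hε : 0 < ε) {s r : ℝ} (hs : 0 ≤ s) (hr : r = s * 2) (x : ℝ) :
    regPow ε s x ≤ 2 ^ s * (|x| ^ r + ε ^ r) := by
  subst hr
  unfold regPow
  have e1 : ∀ y : ℝ, 0 ≤ y → (y ^ 2) ^ s = y ^ (s * 2) := fun y hy => by
    rw [← Real.rpow_natCast, ← Real.rpow_mul hy, mul_comm]; norm_num
  have e2 := e1 |x| (abs_nonneg x)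
  have e3 := e1 ε hε.le
  rw [sq_abs] at e2
  have p1 : 0 ≤ |x| ^ (s * 2) := by positivity
  have p2 : 0 ≤ ε ^ (s * 2) := by positivity
  rcases le_total (ε ^ 2) (x ^ 2) with hle | hle
  · calc (ε ^ 2 + x ^ 2) ^ s ≤ (2 * x ^ 2) ^ s :=
          Real.rpow_le_rpow (by positivity) (by linarith) hs
      _ = 2 ^ s * |x| ^ (s * 2) := by rw [Real.mul_rpow (by norm_num) (by positivity), e2]
      _ ≤ _ := by gcongr; linarith
  · calc (ε ^ 2 + x ^ 2) ^ s ≤ (2 * ε ^ 2) ^ s :=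
          Real.rpow_le_rpow (by positivity) (by linarith) hs
      _ = 2 ^ s * ε ^ (s * 2) := by rw [Real.mul_rpow (by norm_num) (by positivity), e3]
      _ ≤ _ := by gcongr; linarith

end regPow

set_option maxHeartbeats 1600000 in
/-- For `p ≥ 2` the Bellman function is `Φ(x, y) = x² S^θ + A Y` with `X = (ε² + x²)^(p/2)`,
`Y = (ε² + y²)^(q/2)`, `S = X + Y`, `θ = 1 - 2/p` and `A` large; this is a regularised form of
`x² (|x|^p + |y|^q)^(1 - 2/p) + A |y|^q`. The Hessian bound holds with `τ = S^θ`. -/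
lemma exists_bellman_of_two_le {p q : ℝ} (hpq : p.HolderConjugate q) (hp : 2 ≤ p) :
    ∃ C : ℝ, 0 ≤ C ∧ ∀ ε : ℝ, 0 < ε → ∃ Φ Φ₁ Φ₂ Φ₁₁ Φ₁₂ Φ₂₂ : ℝ × ℝ → ℝ,
      IsBellman p q C ε Φ Φ₁ Φ₂ Φ₁₁ Φ₁₂ Φ₂₂ := by
  obtain ⟨m, hm⟩ : ∃ m, m = p / 2 := ⟨_, rfl⟩
  obtain ⟨n, hn⟩ : ∃ n, n = q / 2 := ⟨_, rfl⟩
  obtain ⟨θ, hθ⟩ : ∃ θ, θ = 1 - 1 / m := ⟨_, rfl⟩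
  have hm1 : 1 ≤ m := by linarith
  have hp0 : p ≠ 0 := by linarith
  have hq1 : 1 < q := hpq.symm.lt
  have hq0 : q ≠ 0 := by linarith
  have hinv : p⁻¹ + q⁻¹ = 1 := hpq.inv_add_inv_eq_one
  have hn1 : 1 < 2 * n := by linarith
  have hq2 : q ≤ 2 := by
    have h1 : p⁻¹ ≤ 2⁻¹ := inv_anti₀ (by norm_num) hp
    have h2 : 2⁻¹ ≤ q⁻¹ := by linarith
    exact (inv_le_inv₀ (by norm_num) (by linarith)).1 h2
  have hn2 : n ≤ 1 := by linarith
  have hθ0 : 0 ≤ θ := by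
    rw [hθ]; have : 1 / m ≤ 1 := by rw [div_le_one (by linarith)]; exact hm1
    linarith
  have hθ1 : θ ≤ 1 := by
    rw [hθ]; have : 0 ≤ 1 / m := by positivity
    linarith
  have hmθ : m * (1 - θ) = 1 := by rw [hθ]; field_simp; ring
  have hnθ : n * θ = 1 - n := by
    rw [hθ, hm, hn]
    field_simp at hinv ⊢
    linarith
  obtain ⟨A, hA⟩ : ∃ A, A = 21 / (q * (q - 1)) := ⟨_, rfl⟩
  have hA0 : 0 < A := by
    rw [hA]; have : 0 < q - 1 := by linarith
    positivity
  have hAq : A * (q * (q - 1)) = 21 := by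
    rw [hA]; have : q - 1 ≠ 0 := by linarith
    field_simp
  refine ⟨(1 + A) * (2 ^ m + 2 ^ n), by positivity, fun ε hε => ?_⟩
  obtain ⟨X, hX⟩ : ∃ X, X = regPow ε m := ⟨_, rfl⟩
  obtain ⟨X₁, hX₁⟩ : ∃ X, X = regPow₁ ε m := ⟨_, rfl⟩
  obtain ⟨X₂, hX₂⟩ : ∃ X, X = regPow₂ ε m := ⟨_, rfl⟩
  obtain ⟨Y, hY⟩ : ∃ X, X = regPow ε n := ⟨_, rfl⟩
  obtain ⟨Y₁, hY₁⟩ : ∃ X, X = regPow₁ ε n := ⟨_, rfl⟩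
  obtain ⟨Y₂, hY₂⟩ : ∃ X, X = regPow₂ ε n := ⟨_, rfl⟩
  have dX : ∀ x, HasDerivAt X (X₁ x) x := by subst hX hX₁; exact hasDerivAt_regPow hε m
  have dX₁ : ∀ x, HasDerivAt X₁ (X₂ x) x := by subst hX₂ hX₁; exact hasDerivAt_regPow₁ hε m
  have dY : ∀ x, HasDerivAt Y (Y₁ x) x := by subst hY hY₁; exact hasDerivAt_regPow hε n
  have dY₁ : ∀ x, HasDerivAt Y₁ (Y₂ x) x := by subst hY₂ hY₁; exact hasDerivAt_regPow₁ hε n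
  have cX₂ : Continuous X₂ := hX₂ ▸ continuous_regPow₂ hε m
  have cY₂ : Continuous Y₂ := hY₂ ▸ continuous_regPow₂ hε n
  have X0 : ∀ x, 0 < X x := hX ▸ regPow_pos hε m
  have Y0 : ∀ x, 0 < Y x := hY ▸ regPow_pos hε n
  obtain ⟨S, hS⟩ : ∃ S : ℝ × ℝ → ℝ, S = fun z => X z.1 + Y z.2 := ⟨_, rfl⟩
  have S0 : ∀ z, 0 < S z := fun z => hS ▸ add_pos (X0 _) (Y0 _)
  have gS : ∀ z, HasGradAt S (X₁ z.1) (Y₁ z.2) z := fun z => by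
    rw [hS]
    exact ((HasGradAt.of_fst (dX z.1)).add (HasGradAt.of_snd (dY z.2))).congr (by ring) (by ring)
  have gx : ∀ z : ℝ × ℝ, HasGradAt (fun z => z.1) 1 0 z := fun z =>
    HasGradAt.of_fst (hasDerivAt_id _)
  have cX₁ : Continuous X₁ := continuous_iff_continuousAt.2 fun x => (dX₁ x).continuousAt
  have cY₁ : Continuous Y₁ := continuous_iff_continuousAt.2 fun x => (dY₁ x).continuousAt
  have cS : Continuous S := continuous_iff_continuousAt.2 fun x => HasFDerivAt.continuousAt (gS x)
  have cSr : ∀ r : ℝ, Continuous fun z => S z ^ r := fun r =>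
    cS.rpow_const fun z => Or.inl (ne_of_gt (S0 z))
  -- The exponents match because `m (1 - θ) = 1`.
  have hxS : ∀ z, z.1 ^ 2 ≤ S z ^ (1 - θ) := fun z => by
    have hb := regPow_base_pos hε z.1
    calc z.1 ^ 2 ≤ ε ^ 2 + z.1 ^ 2 := by nlinarith
      _ = (X z.1) ^ (1 - θ) := by
        rw [hX, regPow, ← Real.rpow_mul hb.le, hmθ, Real.rpow_one]
      _ ≤ S z ^ (1 - θ) := by
        apply Real.rpow_le_rpow (X0 _).le _ (by linarith)
        simpa [hS] using (Y0 _).le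
  have hθ2 : θ - 1 - 1 = θ - 2 := by ring
  refine ⟨fun z => z.1 * z.1 * S z ^ θ + A * Y z.2,
    fun z => 2 * z.1 * S z ^ θ + z.1 * z.1 * (θ * S z ^ (θ - 1) * X₁ z.1),
    fun z => z.1 * z.1 * (θ * S z ^ (θ - 1) * Y₁ z.2) + A * Y₁ z.2,
    fun z => 2 * S z ^ θ + 4 * θ * z.1 * S z ^ (θ - 1) * X₁ z.1
      + θ * (θ - 1) * z.1 ^ 2 * S z ^ (θ - 2) * X₁ z.1 ^ 2 + θ * z.1 ^ 2 * S z ^ (θ - 1) * X₂ z.1,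
    fun z => 2 * θ * z.1 * S z ^ (θ - 1) * Y₁ z.2
      + θ * (θ - 1) * z.1 ^ 2 * S z ^ (θ - 2) * X₁ z.1 * Y₁ z.2,
    fun z => θ * (θ - 1) * z.1 ^ 2 * S z ^ (θ - 2) * Y₁ z.2 ^ 2
      + θ * z.1 ^ 2 * S z ^ (θ - 1) * Y₂ z.2 + A * Y₂ z.2,
      fun z => ?_, fun z => ?_, fun z => ?_, ?_, ?_, ?_, fun z => ?_, fun z => ?_,
      fun z => ?_⟩
  · refine ((((gx z).mul (gx z)).mul ((gS z).rpow θ (S0 z))).add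
      ((HasGradAt.of_snd (dY z.2)).const_mul A)).congr ?_ ?_ <;> ring
  · refine ((((gx z).const_mul 2).mul ((gS z).rpow θ (S0 z))).add
      (((gx z).mul (gx z)).mul ((((gS z).rpow (θ - 1) (S0 z)).const_mul θ).mul
        (HasGradAt.of_fst (dX₁ z.1))))).congr ?_ ?_ <;> rw [hθ2] <;> ring
  · refine ((((gx z).mul (gx z)).mul ((((gS z).rpow (θ - 1) (S0 z)).const_mul θ).mul
        (HasGradAt.of_snd (dY₁ z.2)))).add
      ((HasGradAt.of_snd (dY₁ z.2)).const_mul A)).congr ?_ ?_ <;> rw [hθ2] <;> ring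
  · have := cSr θ; have := cSr (θ - 1); have := cSr (θ - 2); fun_prop
  · have := cSr (θ - 1); have := cSr (θ - 2); fun_prop
  · have := cSr (θ - 1); have := cSr (θ - 2); fun_prop
  · have h1 : Y 0 ≤ Y z.2 := by
      rw [hY]
      apply Real.rpow_le_rpow (regPow_base_pos hε 0).le _ (by linarith)
      nlinarith
    have h2 : 0 ≤ z.1 * z.1 * S z ^ θ :=
      mul_nonneg (mul_self_nonneg _) (Real.rpow_nonneg (S0 z).le _)
    simp only [Prod.fst_zero, Prod.snd_zero]
    nlinarith
  · have h1 : z.1 * z.1 * S z ^ θ ≤ S z := by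
      calc _ ≤ S z ^ (1 - θ) * S z ^ θ :=
            mul_le_mul_of_nonneg_right (by simpa [sq] using hxS z) (Real.rpow_nonneg (S0 z).le _)
        _ = S z := by rw [← Real.rpow_add (S0 z)]; simp
    have kX := regPow_le hε (s := m) (r := p) (by linarith) (by linarith) z.1
    have kY := regPow_le hε (s := n) (r := q) (by linarith) (by linarith) z.2
    rw [← hX] at kX
    rw [← hY] at kY
    have h3 : 0 ≤ A * Y 0 := mul_nonneg hA0.le (Y0 0).le
    have p1 : 0 ≤ |z.1| ^ p := by positivity
    have p2 : 0 ≤ |z.2| ^ q := by positivity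
    have p3 : 0 ≤ ε ^ p := by positivity
    have p4 : 0 ≤ ε ^ q := by positivity
    have p5 : (0 : ℝ) ≤ 2 ^ m := by positivity
    have p6 : (0 : ℝ) ≤ 2 ^ n := by positivity
    have hX0 := X0 z.1
    simp only [Prod.fst_zero, Prod.snd_zero]
    calc z.1 * z.1 * S z ^ θ + A * Y z.2 - (0 * 0 * S 0 ^ θ + A * Y 0)
        ≤ X z.1 + Y z.2 + A * Y z.2 := by
          have : S z = X z.1 + Y z.2 := by rw [hS]
          linarith
      _ ≤ (1 + A) * (X z.1 + Y z.2) := by nlinarith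
      _ ≤ (1 + A) * (2 ^ m * (|z.1| ^ p + ε ^ p) + 2 ^ n * (|z.2| ^ q + ε ^ q)) := by
          gcongr
      _ ≤ (1 + A) * ((2 ^ m + 2 ^ n) * (|z.1| ^ p + |z.2| ^ q + ε ^ p + ε ^ q)) := by
          gcongr
          nlinarith [mul_nonneg p5 p2, mul_nonneg p5 p4, mul_nonneg p6 p1, mul_nonneg p6 p3]
      _ = _ := by ring
  · obtain ⟨β, hβ⟩ : ∃ β, β = (ε ^ 2 + z.2 ^ 2) ^ (n - 1) := ⟨_, rfl⟩
    have hb := regPow_base_pos hε z.2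
    have ha := regPow_base_pos hε z.1
    have hβ0 : 0 < β := hβ ▸ Real.rpow_pos_of_pos hb _
    have hX1 : z.1 * X₁ z.1 = 2 * m * (z.1 ^ 2 * (ε ^ 2 + z.1 ^ 2) ^ (m - 1)) := by
      rw [hX₁, regPow₁]; ring
    have hx0 : 0 ≤ z.1 ^ 2 * (ε ^ 2 + z.1 ^ 2) ^ (m - 1) := by positivity
    have hx1 : z.1 ^ 2 * (ε ^ 2 + z.1 ^ 2) ^ (m - 1) ≤ X z.1 := by
      rw [hX]; exact sq_mul_base_rpow_le hε m z.1
    have hSe : S z = X z.1 + Y z.2 := by rw [hS]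
    have hyβ : z.2 ^ 2 * β ≤ Y z.2 := by
      rw [hY, hβ]; exact sq_mul_base_rpow_le hε n z.2
    have hY2 : q * (q - 1) * β ≤ Y₂ z.2 := by
      have h := sq_mul_base_rpow_le hε (n - 1) z.2
      rw [show n - 1 - 1 = n - 2 by ring, ← hβ] at h
      rw [hY₂, regPow₂, ← hβ]
      have hc : 0 ≤ 4 * n * (1 - n) := by nlinarith
      have := mul_le_mul_of_nonneg_left h hc
      have hqn : q = 2 * n := by linarith
      rw [hqn]
      nlinarith
    -- `β = Y^(-θ)` since `n θ = 1 - n`, and `Y ≤ S`.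
    have hβS : (S z ^ θ)⁻¹ ≤ β := by
      have h1 : Y z.2 ^ θ ≤ S z ^ θ :=
        Real.rpow_le_rpow (Y0 _).le (by linarith [X0 z.1]) hθ0
      have h2 : Y z.2 ^ θ = β⁻¹ := by
        rw [hY, regPow, ← Real.rpow_mul hb.le, hnθ, hβ, ← Real.rpow_neg hb.le]; congr 1; ring
      rw [h2] at h1
      exact inv_le_of_inv_le₀ hβ0 h1
    refine ⟨S z ^ θ, Real.rpow_pos_of_pos (S0 z) _, fun ξ η => ?_⟩
    have hq1' : 0 < q * (q - 1) := mul_pos (by linarith) (by linarith)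
    have main := bellman_hess_aux (x := z.1) (X₁ := X₁ z.1) (X₂ := X₂ z.1) (Y₁ := Y₁ z.2)
      (Y₂ := Y₂ z.2) (S := S z) (s₀ := S z ^ θ) (s₁ := S z ^ (θ - 1)) (s₂ := S z ^ (θ - 2))
      (θ := θ) (A := A) (β := β) hθ0 hθ1 (S0 z) (Real.rpow_pos_of_pos (S0 z) _)
      (Real.rpow_pos_of_pos (S0 z) _)
      (by rw [Real.rpow_sub_one (S0 z).ne']; have := S0 z; field_simp)
      (by rw [← hθ2, Real.rpow_sub_one (S0 z).ne' (θ - 1)]; have := S0 z; field_simp)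
      hβ0
      (by
        calc z.1 ^ 2 * S z ^ (θ - 1) ≤ S z ^ (1 - θ) * S z ^ (θ - 1) :=
              mul_le_mul_of_nonneg_right (hxS z) (Real.rpow_nonneg (S0 z).le _)
          _ = 1 := by rw [← Real.rpow_add (S0 z)]; simp)
      (by rw [hX1]; positivity)
      (by
        calc (1 - θ) * (z.1 * X₁ z.1)
            = 2 * (m * (1 - θ)) * (z.1 ^ 2 * (ε ^ 2 + z.1 ^ 2) ^ (m - 1)) := by rw [hX1]; ring
          _ ≤ 2 * S z := by rw [hmθ]; linarith [Y0 z.2])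
      (by
        rw [hX₂, regPow₂]
        have : 0 ≤ m - 1 := by linarith
        positivity)
      (by
        have e : Y₁ z.2 ^ 2 = 4 * n ^ 2 * (z.2 ^ 2 * β) * β := by rw [hY₁, regPow₁, ← hβ]; ring
        have hn2' : n ^ 2 ≤ 1 := by nlinarith
        have h0 : 0 ≤ z.2 ^ 2 * β := by positivity
        rw [e]
        have : n ^ 2 * (z.2 ^ 2 * β) ≤ 1 * S z :=
          mul_le_mul hn2' (by linarith [X0 z.1]) h0 zero_le_one
        have := mul_le_mul_of_nonneg_right this hβ0.le
        linarith)
      (le_trans (by positivity) hY2)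
      (by
        calc 21 * β = A * (q * (q - 1) * β) := by rw [← hAq]; ring
          _ ≤ A * Y₂ z.2 := mul_le_mul_of_nonneg_left hY2 hA0.le) ξ η
    have := mul_le_mul_of_nonneg_right hβS (sq_nonneg η)
    linarith

/-- The case `p ≤ 2` follows from the case `p ≥ 2` by exchanging the two variables. -/
lemma exists_bellman {p q : ℝ} (hpq : p.HolderConjugate q) :
    ∃ C : ℝ, 0 ≤ C ∧ ∀ ε : ℝ, 0 < ε → ∃ Φ Φ₁ Φ₂ Φ₁₁ Φ₁₂ Φ₂₂ : ℝ × ℝ → ℝ,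
      IsBellman p q C ε Φ Φ₁ Φ₂ Φ₁₁ Φ₁₂ Φ₂₂ := by
  rcases le_total 2 p with hp | hp
  · exact exists_bellman_of_two_le hpq hp
  · have hq : 2 ≤ q := by
      have h1 : (2:ℝ)⁻¹ ≤ p⁻¹ := inv_anti₀ hpq.pos hp
      have hinv : p⁻¹ + q⁻¹ = 1 := hpq.inv_add_inv_eq_one
      exact (inv_le_inv₀ hpq.symm.pos (by norm_num)).1 (by linarith)
    obtain ⟨C, hC, H⟩ := exists_bellman_of_two_le hpq.symm hq
    refine ⟨C, hC, fun ε hε => ?_⟩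
    obtain ⟨Φ, Φ₁, Φ₂, Φ₁₁, Φ₁₂, Φ₂₂, h⟩ := H ε hε
    exact ⟨_, _, _, _, _, _, h.swap⟩

/-! ### The heat semigroup -/

/-- The heat semigroup at time `σ²/2`: `heat σ φ x = ∫ φ(x + σz) dγ(z)`, with `γ` the standard
Gaussian measure. Parametrised by `σ ∈ ℝ`, it is differentiable up to and including `σ = 0`. -/
def heat {d : ℕ} (σ : ℝ) (φ : Eu d → ℝ) (x : Eu d) : ℝ := ∫ z, φ (x + σ • z) * gauss z

section Heat
variable {d : ℕ} {φ ψ : Eu d → ℝ}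

lemma heat_zero (φ : Eu d → ℝ) : heat 0 φ = φ := by
  ext x
  simp [heat, integral_const_mul, integral_gauss]

lemma IsTest.integrable_mul_gauss (h : IsTest φ) (σ : ℝ) (x : Eu d) :
    Integrable fun z => φ (x + σ • z) * gauss z := by
  obtain ⟨M, -, hM⟩ := h.exists_bound
  have := h.continuous
  exact integrable_gauss.bdd_mul (by fun_prop : Continuous _).aestronglyMeasurable
    (Filter.Eventually.of_forall fun z => hM _)

lemma heat_sum {ι : Type*} {s : Finset ι} {f : ι → Eu d → ℝ} (h : ∀ i ∈ s, IsTest (f i))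
    (σ : ℝ) (x : Eu d) : heat σ (fun x => ∑ i ∈ s, f i x) x = ∑ i ∈ s, heat σ (f i) x := by
  unfold heat
  simp only [Finset.sum_mul]
  exact integral_finsetSum _ fun i hi => (h i hi).integrable_mul_gauss σ x

lemma IsTest.hasFDerivAt_heat (h : IsTest φ) (σ : ℝ) (x : Eu d) :
    HasFDerivAt (heat σ φ) (∫ z, gauss z • fderiv ℝ φ (x + σ • z)) x := by
  obtain ⟨M, hM0, hM⟩ := h.exists_fderiv_bound
  have hc := h.continuous
  have hc' := h.continuous_fderiv
  have hg := continuous_gauss (d := d)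
  refine hasFDerivAt_integral_of_dominated_of_fderiv_le (s := Set.univ)
    (F := fun x z => φ (x + σ • z) * gauss z)
    (F' := fun x z => gauss z • fderiv ℝ φ (x + σ • z)) (bound := fun z => gauss z * M)
    Filter.univ_mem
    (Filter.Eventually.of_forall fun y => (h.integrable_mul_gauss σ y).aestronglyMeasurable)
    (h.integrable_mul_gauss σ x) (by fun_prop : Continuous _).aestronglyMeasurable
    (Filter.Eventually.of_forall fun z y _ => ?_) (integrable_gauss.mul_const M)
    (Filter.Eventually.of_forall fun z y _ => ?_)
  · rw [norm_smul, Real.norm_of_nonneg (gauss_pos z).le]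
    exact mul_le_mul_of_nonneg_left (hM _) (gauss_pos z).le
  · have h1 : HasFDerivAt (fun y => φ (y + σ • z)) (fderiv ℝ φ (y + σ • z)) y :=
      (hasFDerivAt_comp_add_right (σ • z)).2 (h.differentiable _).hasFDerivAt
    exact h1.mul_const (gauss z)

lemma IsTest.differentiable_heat (h : IsTest φ) (σ : ℝ) : Differentiable ℝ (heat σ φ) :=
  fun x => (h.hasFDerivAt_heat σ x).differentiableAt

lemma IsTest.continuous_heat (h : IsTest φ) (σ : ℝ) : Continuous (heat σ φ) :=
  (h.differentiable_heat σ).continuous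

lemma IsTest.pd_heat (h : IsTest φ) (σ : ℝ) (k : Fin d) : pd k (heat σ φ) = heat σ (pd k φ) := by
  ext x
  obtain ⟨M, hM0, hM⟩ := h.exists_fderiv_bound
  have hc' := h.continuous_fderiv
  have hg := continuous_gauss (d := d)
  have hi : Integrable fun z => gauss z • fderiv ℝ φ (x + σ • z) := by
    refine (integrable_gauss.mul_const M).mono' (by fun_prop : Continuous _).aestronglyMeasurable
      (Filter.Eventually.of_forall fun z => ?_)
    rw [norm_smul, Real.norm_of_nonneg (gauss_pos z).le]
    exact mul_le_mul_of_nonneg_left (hM _) (gauss_pos z).le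
  rw [pd, (h.hasFDerivAt_heat σ x).fderiv, ContinuousLinearMap.integral_apply hi, heat]
  refine integral_congr_ae (Filter.Eventually.of_forall fun z => ?_)
  simp [pd, mul_comm]

/-- Gaussian integration by parts: `∫ z_k φ(x + σz) dγ(z) = σ ∫ D_kφ(x + σz) dγ(z)`. -/
lemma IsTest.integral_coord_mul_gauss (h : IsTest φ) (σ : ℝ) (x : Eu d) (k : Fin d) :
    ∫ z, φ (x + σ • z) * (z k * gauss z) = σ * heat σ (pd k φ) x := by
  obtain ⟨M, hM0, hM⟩ := h.exists_bound
  have hc := h.continuous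
  have hg := continuous_gauss (d := d)
  have hD : ∀ z, HasFDerivAt (fun z => φ (x + σ • z)) (σ • fderiv ℝ φ (x + σ • z)) z := fun z => by
    have h1 : HasFDerivAt (fun z : Eu d => x + σ • z) (σ • ContinuousLinearMap.id ℝ (Eu d)) z :=
      ((hasFDerivAt_id z).const_smul σ).const_add x
    refine ((h.differentiable (x + σ • z)).hasFDerivAt.comp z h1).congr_fderiv ?_
    ext v; simp
  have e1 : ∀ z, fderiv ℝ (fun z => φ (x + σ • z)) z (EuclideanSpace.single k 1)
      = σ * pd k φ (x + σ • z) := fun z => by rw [(hD z).fderiv]; rfl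
  have e2 : ∀ z : Eu d, fderiv ℝ gauss z (EuclideanSpace.single k 1) = -(z k * gauss z) :=
    pd_gauss k
  have hi1 : Integrable fun z => pd k φ (x + σ • z) * gauss z :=
    (h.test_pd k).integrable_mul_gauss σ x
  have hi2 : Integrable fun z : Eu d => z k * gauss z := by
    refine (integrable_pow_mul_gauss 1).mono' (by fun_prop : Continuous _).aestronglyMeasurable
      (Filter.Eventually.of_forall fun z => ?_)
    rw [norm_mul, Real.norm_of_nonneg (gauss_pos z).le, pow_one]
    have := PiLp.norm_apply_le z k
    exact mul_le_mul_of_nonneg_right (by linarith) (gauss_pos z).le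
  have hi3 : Integrable fun z => φ (x + σ • z) * (z k * gauss z) :=
    hi2.bdd_mul (by fun_prop : Continuous _).aestronglyMeasurable
      (Filter.Eventually.of_forall fun z => hM _)
  have := integral_mul_fderiv_eq_neg_fderiv_mul_of_integrable (μ := volume)
    (f := fun z => φ (x + σ • z)) (g := gauss) (v := EuclideanSpace.single k (1 : ℝ))
    (by simp only [e1, mul_assoc]; exact hi1.const_mul σ)
    (by simp only [e2, mul_neg]; exact hi3.neg) (h.integrable_mul_gauss σ x)
    (fun z _ => (hD z).differentiableAt) (fun z _ => (hasFDerivAt_gauss z).differentiableAt)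
  simp only [e1, e2, mul_neg, integral_neg, neg_inj, mul_assoc] at this
  rw [this, integral_const_mul, heat]

/-- The heat equation `∂_σ P_σ φ = σ P_σ Δφ` (recall that the time is `σ²/2`). -/
lemma IsTest.hasDerivAt_heat (h : IsTest φ) (σ : ℝ) (x : Eu d) :
    HasDerivAt (fun σ => heat σ φ x) (σ * heat σ (lapl φ) x) σ := by
  obtain ⟨M, hM0, hM⟩ := h.exists_fderiv_bound
  have hc := h.continuous
  have hc' := h.continuous_fderiv
  have hg := continuous_gauss (d := d)
  have key := (hasDerivAt_integral_of_dominated_loc_of_deriv_le (μ := (volume : Measure (Eu d)))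
    (s := Set.univ) (x₀ := σ)
    (F := fun σ z => φ (x + σ • z) * gauss z)
    (F' := fun σ z => fderiv ℝ φ (x + σ • z) z * gauss z)
    (bound := fun z => M * ((1 + ‖z‖) ^ 1 * gauss z)) Filter.univ_mem
    (Filter.Eventually.of_forall fun s => (h.integrable_mul_gauss s x).aestronglyMeasurable)
    (h.integrable_mul_gauss σ x) (by fun_prop : Continuous _).aestronglyMeasurable
    (Filter.Eventually.of_forall fun z s _ => ?_) ((integrable_pow_mul_gauss 1).const_mul M)
    (Filter.Eventually.of_forall fun z s _ => ?_)).2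
  · refine key.congr_deriv ?_
    have e : ∀ z, fderiv ℝ φ (x + σ • z) z * gauss z
        = ∑ k, pd k φ (x + σ • z) * (z k * gauss z) := fun z => by
      rw [fderiv_eq_sum_pd, Finset.sum_mul]
      exact Finset.sum_congr rfl fun k _ => by ring
    simp only [e]
    rw [integral_finsetSum]
    · simp only [(h.test_pd _).integral_coord_mul_gauss, ← Finset.mul_sum]
      unfold lapl
      rw [heat_sum fun k _ => (h.test_pd k).test_pd k]
    · intro k _
      obtain ⟨K, -, hK⟩ := (h.test_pd k).exists_bound
      have hck := (h.test_pd k).continuous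
      have hi2 : Integrable fun z : Eu d => z k * gauss z := by
        refine (integrable_pow_mul_gauss 1).mono' (by fun_prop : Continuous _).aestronglyMeasurable
          (Filter.Eventually.of_forall fun z => ?_)
        rw [norm_mul, Real.norm_of_nonneg (gauss_pos z).le, pow_one]
        have := PiLp.norm_apply_le z k
        exact mul_le_mul_of_nonneg_right (by linarith) (gauss_pos z).le
      exact hi2.bdd_mul (by fun_prop : Continuous _).aestronglyMeasurable
        (Filter.Eventually.of_forall fun z => hK _)
  · rw [norm_mul, Real.norm_of_nonneg (gauss_pos z).le, ← mul_assoc, pow_one]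
    refine mul_le_mul_of_nonneg_right ?_ (gauss_pos z).le
    calc ‖fderiv ℝ φ (x + s • z) z‖ ≤ ‖fderiv ℝ φ (x + s • z)‖ * ‖z‖ :=
          ContinuousLinearMap.le_opNorm _ _
      _ ≤ M * (1 + ‖z‖) := by
        have := norm_nonneg z
        exact mul_le_mul (hM _) (by linarith) this hM0
  · have h1 : HasDerivAt (fun s : ℝ => x + s • z) z s := by
      simpa using ((hasDerivAt_id s).smul_const z).const_add x
    exact ((h.differentiable (x + s • z)).hasFDerivAt.comp_hasDerivAt s h1).mul_const (gauss z)

/-- The heat flow of a test function decays like the weight, uniformly on bounded time intervals.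
This provides every dominating function needed to differentiate or integrate by parts. -/
lemma IsTest.exists_heat_wt_bound (h : IsTest φ) (T : ℝ) (hT : 0 ≤ T) :
    ∃ C, 0 ≤ C ∧ ∀ σ, |σ| ≤ T → ∀ x, |heat σ φ x| ≤ C * wt x := by
  obtain ⟨A, hA, hφ⟩ := h.exists_wt_bound
  refine ⟨A * (1 + T) ^ (d + 1) * ∫ z : Eu d, (1 + ‖z‖) ^ (d + 1) * gauss z, ?_, fun σ hσ x => ?_⟩
  · have : 0 ≤ ∫ z : Eu d, (1 + ‖z‖) ^ (d + 1) * gauss z :=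
      integral_nonneg fun z => mul_nonneg (by positivity) (gauss_pos z).le
    positivity
  · have hb := norm_integral_le_of_norm_le (f := fun z => φ (x + σ • z) * gauss z)
      (((integrable_pow_mul_gauss (d := d) (d + 1)).const_mul (A * (1 + T) ^ (d + 1) * wt x)))
      (Filter.Eventually.of_forall fun z => ?_)
    · rw [integral_const_mul] at hb
      rw [heat, ← Real.norm_eq_abs]
      linarith
    · rw [norm_mul, Real.norm_of_nonneg (gauss_pos z).le, ← mul_assoc]
      refine mul_le_mul_of_nonneg_right ?_ (gauss_pos z).le
      calc ‖φ (x + σ • z)‖ ≤ A * wt (x + σ • z) := hφ _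
        _ ≤ A * (wt x * ((1 + T) ^ (d + 1) * (1 + ‖z‖) ^ (d + 1))) :=
          mul_le_mul_of_nonneg_left (wt_add_smul_le hσ x z) hA
        _ = _ := by ring

lemma IsTest.integrable_heat (h : IsTest φ) (σ : ℝ) : Integrable (heat σ φ) := by
  obtain ⟨C, -, hC⟩ := h.exists_heat_wt_bound |σ| (abs_nonneg σ)
  exact (integrable_wt.const_mul C).mono' (h.continuous_heat σ).aestronglyMeasurable
    (Filter.Eventually.of_forall fun x => hC σ le_rfl x)

lemma IsTest.integrable_mul_heat (h : IsTest φ) (σ : ℝ) {F : Eu d → ℝ} (hF : Continuous F) {C : ℝ}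
    (hC : ∀ x, |F x| ≤ C) : Integrable fun x => F x * heat σ φ x :=
  (h.integrable_heat σ).bdd_mul hF.aestronglyMeasurable (Filter.Eventually.of_forall fun x => hC x)

lemma IsTest.exists_heat_bound (h : IsTest φ) (T : ℝ) (hT : 0 ≤ T) :
    ∃ C, 0 ≤ C ∧ ∀ σ, |σ| ≤ T → ∀ x, |heat σ φ x| ≤ C := by
  obtain ⟨C, hC0, hC⟩ := h.exists_heat_wt_bound T hT
  exact ⟨C, hC0, fun σ hσ x => (hC σ hσ x).trans (mul_le_of_le_one_right hC0 (wt_le_one x))⟩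

/-- Integration by parts against a bounded `C¹` function. -/
lemma IsTest.integral_mul_heat_pd (h : IsTest φ) (σ : ℝ) (k : Fin d) {F : Eu d → ℝ}
    (hF : Differentiable ℝ F) (hF' : Continuous (pd k F)) {C : ℝ}
    (hC : ∀ x, |F x| ≤ C) (hC' : ∀ x, |pd k F x| ≤ C) :
    ∫ x, F x * heat σ (pd k φ) x = -∫ x, pd k F x * heat σ φ x := by
  rw [← h.pd_heat]
  refine integral_mul_fderiv_eq_neg_fderiv_mul_of_integrable
    (h.integrable_mul_heat σ hF' hC') ?_ (h.integrable_mul_heat σ hF.continuous hC)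
    (fun x _ => hF x) (fun x _ => h.differentiable_heat σ x)
  have := (h.test_pd k).integrable_mul_heat σ hF.continuous hC
  rw [← h.pd_heat] at this
  exact this

lemma IsTest.integral_heat_mul_heat_pd (h : IsTest φ) (hψ : IsTest ψ) (σ : ℝ) (k : Fin d) :
    ∫ x, heat σ ψ x * heat σ (pd k φ) x = -∫ x, heat σ (pd k ψ) x * heat σ φ x := by
  obtain ⟨C, -, hC⟩ := hψ.exists_heat_bound |σ| (abs_nonneg σ)
  obtain ⟨C', -, hC'⟩ := (hψ.test_pd k).exists_heat_bound |σ| (abs_nonneg σ)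
  rw [← hψ.pd_heat]
  refine h.integral_mul_heat_pd σ k (hψ.differentiable_heat σ) ?_ (C := max C C')
    (fun x => (hC σ le_rfl x).trans (le_max_left _ _)) ?_
  · rw [hψ.pd_heat]; exact (hψ.test_pd k).continuous_heat σ
  · intro x; rw [hψ.pd_heat]; exact (hC' σ le_rfl x).trans (le_max_right _ _)

/-- Ultracontractivity: `‖P_T φ‖_∞ ≤ γ(0) T^{-d} ‖φ‖₁`. -/
lemma IsTest.abs_heat_le (h : IsTest φ) {T : ℝ} (hT : 0 < T) (x : Eu d) :
    |heat T φ x| ≤ gauss (0 : Eu d) * ((T ^ d)⁻¹ * ∫ y, |φ y|) := by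
  have hi : Integrable fun y => |φ (x + y)| := (h.integrable.comp_add_left x).abs
  have hb := norm_integral_le_of_norm_le (f := fun z => φ (x + T • z) * gauss z)
    (g := fun z => gauss (0 : Eu d) * |φ (x + T • z)|)
    ((hi.comp_smul hT.ne').const_mul _) (Filter.Eventually.of_forall fun z => ?_)
  · rw [integral_const_mul, Measure.integral_comp_smul volume (fun y => |φ (x + y)|) T,
      integral_add_left_eq_self (fun y => |φ y|) x] at hb
    rw [heat, ← Real.norm_eq_abs]
    refine hb.trans (le_of_eq ?_)
    rw [abs_of_pos (by positivity)]
    simp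
  · rw [norm_mul, Real.norm_of_nonneg (gauss_pos z).le, mul_comm, Real.norm_eq_abs]
    exact mul_le_mul_of_nonneg_right (gauss_le z) (abs_nonneg _)

/-- The heat semigroup contracts `L¹`. -/
lemma IsTest.integral_abs_heat_le (h : IsTest φ) (T : ℝ) :
    ∫ x, |heat T φ x| ≤ ∫ x, |φ x| := by
  have hc := h.continuous
  have hm : Measurable φ := hc.measurable
  have hmg : Measurable (gauss : Eu d → ℝ) := continuous_gauss.measurable
  have e1 : ∫⁻ x, ‖heat T φ x‖ₑ ≤ ∫⁻ x, ‖φ x‖ₑ := by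
    calc ∫⁻ x, ‖heat T φ x‖ₑ ≤ ∫⁻ x, ∫⁻ z, ‖φ (x + T • z)‖ₑ * ‖gauss z‖ₑ := by
          refine lintegral_mono fun x => ?_
          refine (enorm_integral_le_lintegral_enorm _).trans (le_of_eq ?_)
          simp only [enorm_mul]
      _ = ∫⁻ z, ∫⁻ x, ‖φ (x + T • z)‖ₑ * ‖gauss z‖ₑ :=
          lintegral_lintegral_swap (Measurable.aemeasurable (by fun_prop))
      _ = ∫⁻ z : Eu d, (∫⁻ x, ‖φ x‖ₑ) * ‖gauss z‖ₑ := by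
          refine lintegral_congr fun z => ?_
          rw [lintegral_mul_const _ (by fun_prop), lintegral_add_right_eq_self (fun x => ‖φ x‖ₑ)]
      _ = (∫⁻ x, ‖φ x‖ₑ) * ∫⁻ z : Eu d, ‖gauss z‖ₑ := lintegral_const_mul _ (by fun_prop)
      _ = ∫⁻ x, ‖φ x‖ₑ := by
          have : ∫⁻ z : Eu d, ‖gauss z‖ₑ = 1 := by
            rw [← ofReal_integral_norm_eq_lintegral_enorm integrable_gauss]
            simp only [Real.norm_of_nonneg (gauss_pos _).le, integral_gauss, ofReal_one]
          rw [this, mul_one]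
  rw [← ofReal_integral_norm_eq_lintegral_enorm h.integrable,
    ← ofReal_integral_norm_eq_lintegral_enorm (h.integrable_heat T)] at e1
  exact (ENNReal.ofReal_le_ofReal_iff (integral_nonneg fun x => norm_nonneg _)).1 e1

end Heat

/-! ### Functionals along the heat flow -/

section Flow
variable {d : ℕ} {a b φ ψ : Eu d → ℝ} {Ψ Ψ₁ Ψ₂ : ℝ × ℝ → ℝ}

lemma exists_bound_on_ball (hΨ : Continuous Ψ) (R : ℝ) :
    ∃ M, 0 ≤ M ∧ ∀ s t, |s| ≤ R → |t| ≤ R → |Ψ (s, t)| ≤ M := by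
  obtain ⟨M, hM⟩ := (isCompact_closedBall (0 : ℝ × ℝ) R).exists_bound_of_continuousOn
    hΨ.continuousOn
  refine ⟨|M|, abs_nonneg M, fun s t hs ht => (hM (s, t) ?_).trans (le_abs_self M)⟩
  rw [mem_closedBall_zero_iff, Prod.norm_def]
  exact max_le hs ht

lemma continuous_of_hasGradAt (h : ∀ z, HasGradAt Ψ (Ψ₁ z) (Ψ₂ z) z) : Continuous Ψ :=
  continuous_iff_continuousAt.2 fun z => (h z).hasFDerivAt.continuousAt

lemma exists_lipschitz_on_ball (h : ∀ z, HasGradAt Ψ (Ψ₁ z) (Ψ₂ z) z) (h₁ : Continuous Ψ₁)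
    (h₂ : Continuous Ψ₂) (R : ℝ) (hR : 0 ≤ R) :
    ∃ M, 0 ≤ M ∧ ∀ s t, |s| ≤ R → |t| ≤ R → |Ψ (s, t) - Ψ 0| ≤ M * (|s| + |t|) := by
  obtain ⟨M₁, hM₁0, hM₁⟩ := exists_bound_on_ball h₁ R
  obtain ⟨M₂, hM₂0, hM₂⟩ := exists_bound_on_ball h₂ R
  refine ⟨M₁ + M₂, by positivity, fun s t hs ht => ?_⟩
  have hmem : ((s, t) : ℝ × ℝ) ∈ Metric.closedBall (0 : ℝ × ℝ) R := by
    rw [mem_closedBall_zero_iff, Prod.norm_def]; exact max_le hs ht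
  have key := (convex_closedBall (0 : ℝ × ℝ) R).norm_image_sub_le_of_norm_hasFDerivWithin_le
    (f := Ψ) (x := 0) (C := M₁ + M₂) (fun z _ => (h z).hasFDerivAt.hasFDerivWithinAt) (fun z hz => ?_)
    (by simpa using hR) hmem
  · refine key.trans (mul_le_mul_of_nonneg_left ?_ (by positivity))
    rw [sub_zero, Prod.norm_def]
    exact max_le (le_add_of_nonneg_right (abs_nonneg t)) (le_add_of_nonneg_left (abs_nonneg s))
  · rw [mem_closedBall_zero_iff, Prod.norm_def] at hz
    have k1 := hM₁ z.1 z.2 ((le_max_left _ _).trans hz) ((le_max_right _ _).trans hz)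
    have k2 := hM₂ z.1 z.2 ((le_max_left _ _).trans hz) ((le_max_right _ _).trans hz)
    calc _ ≤ ‖Ψ₁ z • ContinuousLinearMap.fst ℝ ℝ ℝ‖ + ‖Ψ₂ z • ContinuousLinearMap.snd ℝ ℝ ℝ‖ :=
          norm_add_le _ _
      _ ≤ ‖Ψ₁ z‖ * 1 + ‖Ψ₂ z‖ * 1 := by
          rw [norm_smul, norm_smul]
          gcongr
          · exact ContinuousLinearMap.norm_fst_le _ _ _
          · exact ContinuousLinearMap.norm_snd_le _ _ _
      _ ≤ _ := by rw [mul_one, mul_one]; exact add_le_add k1 k2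

lemma hasDerivAt_comp_pair (h : ∀ z, HasGradAt Ψ (Ψ₁ z) (Ψ₂ z) z) {f g : ℝ → ℝ} {f' g' s : ℝ}
    (hf : HasDerivAt f f' s) (hg : HasDerivAt g g' s) :
    HasDerivAt (fun s => Ψ (f s, g s)) (Ψ₁ (f s, g s) * f' + Ψ₂ (f s, g s) * g') s := by
  refine ((h (f s, g s)).hasFDerivAt.comp_hasDerivAt s (hf.prodMk hg)).congr_deriv ?_
  simp

/-- Evolution of `∫ (Ψ(P_σ a, P_σ b) - Ψ(0))` along the heat flow. -/
lemma hasDerivAt_integral_heat (ha : IsTest a) (hb : IsTest b)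
    (h : ∀ z, HasGradAt Ψ (Ψ₁ z) (Ψ₂ z) z) (h₁ : Continuous Ψ₁) (h₂ : Continuous Ψ₂) (σ : ℝ) :
    HasDerivAt (fun σ => ∫ x, (Ψ (heat σ a x, heat σ b x) - Ψ 0))
      (∫ x, (Ψ₁ (heat σ a x, heat σ b x) * (σ * heat σ (lapl a) x)
        + Ψ₂ (heat σ a x, heat σ b x) * (σ * heat σ (lapl b) x))) σ := by
  obtain ⟨T, hT⟩ : ∃ T, T = |σ| + 1 := ⟨_, rfl⟩
  have hT0 : 0 ≤ T := by rw [hT]; positivity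
  obtain ⟨A, hA0, hA⟩ := ha.exists_heat_wt_bound T hT0
  obtain ⟨B, hB0, hB⟩ := hb.exists_heat_wt_bound T hT0
  obtain ⟨A', hA'0, hA'⟩ := ha.test_lapl.exists_heat_wt_bound T hT0
  obtain ⟨B', hB'0, hB'⟩ := hb.test_lapl.exists_heat_wt_bound T hT0
  have hAR : ∀ s, |s| ≤ T → ∀ x, |heat s a x| ≤ A + B := fun s hs x =>
    ((hA s hs x).trans (mul_le_of_le_one_right hA0 (wt_le_one x))).trans (by linarith)
  have hBR : ∀ s, |s| ≤ T → ∀ x, |heat s b x| ≤ A + B := fun s hs x =>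
    ((hB s hs x).trans (mul_le_of_le_one_right hB0 (wt_le_one x))).trans (by linarith)
  -- The flow stays in a bounded region, where `Ψ` is Lipschitz; hence `Ψ(P_σ a, P_σ b) - Ψ(0)` is
  -- dominated by the integrable weight.
  obtain ⟨M, hM0, hM⟩ := exists_lipschitz_on_ball h h₁ h₂ (A + B) (by positivity)
  obtain ⟨M₁, hM₁0, hM₁⟩ := exists_bound_on_ball h₁ (A + B)
  obtain ⟨M₂, hM₂0, hM₂⟩ := exists_bound_on_ball h₂ (A + B)
  have hcΨ := continuous_of_hasGradAt h
  have hca := ha.continuous_heat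
  have hcb := hb.continuous_heat
  have hca' := ha.test_lapl.continuous_heat
  have hcb' := hb.test_lapl.continuous_heat
  have hm : ∀ s, AEStronglyMeasurable (fun x => Ψ (heat s a x, heat s b x) - Ψ 0) volume := fun s =>
    ((hcΨ.comp ((hca s).prodMk (hcb s))).sub continuous_const).aestronglyMeasurable
  have hσT : |σ| ≤ T := by rw [hT]; linarith
  refine (hasDerivAt_integral_of_dominated_loc_of_deriv_le (s := Metric.ball σ 1)
    (bound := fun x => (M₁ * (T * A') + M₂ * (T * B')) * wt x)
    (F' := fun s x => Ψ₁ (heat s a x, heat s b x) * (s * heat s (lapl a) x)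
        + Ψ₂ (heat s a x, heat s b x) * (s * heat s (lapl b) x))
    (Metric.ball_mem_nhds σ one_pos) (Filter.Eventually.of_forall hm) ?_ ?_
    (Filter.Eventually.of_forall fun x s hs => ?_) (integrable_wt.const_mul _)
    (Filter.Eventually.of_forall fun x s _ => ?_)).2
  · refine (integrable_wt.const_mul (M * (A + B))).mono' (hm σ)
      (Filter.Eventually.of_forall fun x => ?_)
    refine (hM _ _ (hAR σ hσT x) (hBR σ hσT x)).trans ?_
    have k1 := hA σ hσT x
    have k2 := hB σ hσT x
    calc _ ≤ M * (A * wt x + B * wt x) := by gcongr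
      _ = _ := by ring
  · have c1 := h₁.comp ((hca σ).prodMk (hcb σ))
    have c2 := h₂.comp ((hca σ).prodMk (hcb σ))
    exact ((c1.mul (continuous_const.mul (hca' σ))).add
      (c2.mul (continuous_const.mul (hcb' σ)))).aestronglyMeasurable
  · have hs' : |s| ≤ T := by
      rw [Metric.mem_ball, Real.dist_eq] at hs
      have := abs_sub_abs_le_abs_sub s σ
      linarith
    have k1 := hM₁ _ _ (hAR s hs' x) (hBR s hs' x)
    have k2 := hM₂ _ _ (hAR s hs' x) (hBR s hs' x)
    have k3 := hA' s hs' x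
    have k4 := hB' s hs' x
    have hw := (wt_pos x).le
    refine (norm_add_le _ _).trans ?_
    simp only [norm_mul, Real.norm_eq_abs]
    calc _ ≤ M₁ * (T * (A' * wt x)) + M₂ * (T * (B' * wt x)) := by gcongr
      _ = _ := by ring
  · exact (hasDerivAt_comp_pair h (ha.hasDerivAt_heat s x) (hb.hasDerivAt_heat s x)).sub_const _

lemma IsTest.exists_comp_heat_bound (ha : IsTest a) (hb : IsTest b) (hΨ : Continuous Ψ) (σ : ℝ) :
    ∃ M, 0 ≤ M ∧ ∀ x, |Ψ (heat σ a x, heat σ b x)| ≤ M := by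
  obtain ⟨A, hA0, hA⟩ := ha.exists_heat_bound |σ| (abs_nonneg σ)
  obtain ⟨B, hB0, hB⟩ := hb.exists_heat_bound |σ| (abs_nonneg σ)
  obtain ⟨M, hM0, hM⟩ := exists_bound_on_ball hΨ (A + B)
  exact ⟨M, hM0, fun x => hM _ _ ((hA σ le_rfl x).trans (by linarith))
    ((hB σ le_rfl x).trans (by linarith))⟩

/-- Chain rule for `Ψ(P_σ a, P_σ b)` in the space variable. -/
lemma pd_comp_heat (ha : IsTest a) (hb : IsTest b) (h : ∀ z, HasGradAt Ψ (Ψ₁ z) (Ψ₂ z) z)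
    (σ : ℝ) (x : Eu d) :
    DifferentiableAt ℝ (fun x => Ψ (heat σ a x, heat σ b x)) x ∧
    ∀ k, pd k (fun x => Ψ (heat σ a x, heat σ b x)) x =
      Ψ₁ (heat σ a x, heat σ b x) * heat σ (pd k a) x
        + Ψ₂ (heat σ a x, heat σ b x) * heat σ (pd k b) x := by
  have := (h (heat σ a x, heat σ b x)).hasFDerivAt.comp x
    ((ha.differentiable_heat σ x).hasFDerivAt.prodMk (hb.differentiable_heat σ x).hasFDerivAt)
  refine ⟨this.differentiableAt, fun k => ?_⟩
  rw [← ha.pd_heat, ← hb.pd_heat]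
  unfold pd
  rw [show (fun x => Ψ (heat σ a x, heat σ b x)) = Ψ ∘ fun x => (heat σ a x, heat σ b x) from rfl,
    this.fderiv]
  simp

lemma integrable_comp_heat_mul_heat (ha : IsTest a) (hb : IsTest b) (hψ : IsTest ψ)
    (hφ : IsTest φ) (hΨ : Continuous Ψ) (σ : ℝ) :
    Integrable fun x => Ψ (heat σ a x, heat σ b x) * heat σ ψ x * heat σ φ x := by
  obtain ⟨M, hM0, hM⟩ := ha.exists_comp_heat_bound hb hΨ σ
  obtain ⟨C, hC0, hC⟩ := hψ.exists_heat_bound |σ| (abs_nonneg σ)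
  refine hφ.integrable_mul_heat σ ((hΨ.comp ((ha.continuous_heat σ).prodMk
    (hb.continuous_heat σ))).mul (hψ.continuous_heat σ)) (C := M * C) fun x => ?_
  rw [abs_mul]
  exact mul_le_mul (hM x) (hC σ le_rfl x) (abs_nonneg _) hM0

/-- Integration by parts of `∫ Ψ(P_σ a, P_σ b) Δ P_σ φ` in all coordinates. -/
lemma integral_comp_heat_mul_heat_lapl (ha : IsTest a) (hb : IsTest b) (hφ : IsTest φ)
    (h : ∀ z, HasGradAt Ψ (Ψ₁ z) (Ψ₂ z) z) (h₁ : Continuous Ψ₁) (h₂ : Continuous Ψ₂) (σ : ℝ) :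
    ∫ x, Ψ (heat σ a x, heat σ b x) * heat σ (lapl φ) x =
      -∑ k, ∫ x, (Ψ₁ (heat σ a x, heat σ b x) * heat σ (pd k a) x
        + Ψ₂ (heat σ a x, heat σ b x) * heat σ (pd k b) x) * heat σ (pd k φ) x := by
  have hcΨ := continuous_of_hasGradAt h
  obtain ⟨M, hM0, hM⟩ := ha.exists_comp_heat_bound hb hcΨ σ
  obtain ⟨M₁, hM₁0, hM₁⟩ := ha.exists_comp_heat_bound hb h₁ σ
  obtain ⟨M₂, hM₂0, hM₂⟩ := ha.exists_comp_heat_bound hb h₂ σ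
  have hpair := (ha.continuous_heat σ).prodMk (hb.continuous_heat σ)
  have hcont : Continuous fun x => Ψ (heat σ a x, heat σ b x) := hcΨ.comp hpair
  unfold lapl
  simp only [heat_sum fun k _ => (hφ.test_pd k).test_pd k, Finset.mul_sum]
  rw [integral_finsetSum _ fun k _ =>
    ((hφ.test_pd k).test_pd k).integrable_mul_heat σ hcont hM, ← Finset.sum_neg_distrib]
  refine Finset.sum_congr rfl fun k _ => ?_
  obtain ⟨A, hA0, hA⟩ := (ha.test_pd k).exists_heat_bound |σ| (abs_nonneg σ)
  obtain ⟨B, hB0, hB⟩ := (hb.test_pd k).exists_heat_bound |σ| (abs_nonneg σ)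
  have e : pd k (fun x => Ψ (heat σ a x, heat σ b x)) = fun x =>
      Ψ₁ (heat σ a x, heat σ b x) * heat σ (pd k a) x
        + Ψ₂ (heat σ a x, heat σ b x) * heat σ (pd k b) x :=
    funext fun x => (pd_comp_heat ha hb h σ x).2 k
  have := (hφ.test_pd k).integral_mul_heat_pd σ k (F := fun x => Ψ (heat σ a x, heat σ b x))
    (C := M + (M₁ * A + M₂ * B)) (fun x => (pd_comp_heat ha hb h σ x).1)
    (by
      rw [e]
      exact ((h₁.comp hpair).mul ((ha.test_pd k).continuous_heat σ)).add
        ((h₂.comp hpair).mul ((hb.test_pd k).continuous_heat σ)))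
    (fun x => (hM x).trans (le_add_of_nonneg_right (by positivity))) fun x => by
      rw [e]
      refine (abs_add_le _ _).trans ?_
      rw [abs_mul, abs_mul]
      have k1 := hA σ le_rfl x
      have k2 := hB σ le_rfl x
      have k3 := hM₁ x
      have k4 := hM₂ x
      calc _ ≤ M₁ * A + M₂ * B := by gcongr
        _ ≤ _ := le_add_of_nonneg_left hM0
  rw [this, e]

end Flow

/-! ### The bilinear estimate -/

section Bilinear
variable {d : ℕ} {u a b g φ ψ : Eu d → ℝ} {p q C ε : ℝ} {Φ Φ₁ Φ₂ Φ₁₁ Φ₁₂ Φ₂₂ : ℝ × ℝ → ℝ}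

lemma hasGradAt_mul (z : ℝ × ℝ) : HasGradAt (fun z => z.1 * z.2) z.2 z.1 z :=
  ((HasGradAt.of_fst (f := id) (hasDerivAt_id _)).mul
    (HasGradAt.of_snd (f := id) (hasDerivAt_id _))).congr (by simp) (by simp)

lemma IsTest.integrable_heat_mul_heat (ha : IsTest a) (hb : IsTest b) (σ : ℝ) :
    Integrable fun x => heat σ a x * heat σ b x := by
  obtain ⟨M, -, hM⟩ := ha.exists_heat_bound |σ| (abs_nonneg σ)
  exact hb.integrable_mul_heat σ (ha.continuous_heat σ) (hM σ le_rfl)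

lemma IsTest.integral_heat_mul_heat_lapl (ha : IsTest a) (hb : IsTest b) (σ : ℝ) :
    ∫ x, heat σ a x * heat σ (lapl b) x = ∫ x, heat σ (lapl a) x * heat σ b x := by
  unfold lapl
  simp only [heat_sum fun k _ => (hb.test_pd k).test_pd k, Finset.mul_sum,
    heat_sum fun k _ => (ha.test_pd k).test_pd k, Finset.sum_mul]
  rw [integral_finsetSum _ fun k _ =>
      ha.integrable_heat_mul_heat ((hb.test_pd k).test_pd k) σ,
    integral_finsetSum _ fun k _ => ((ha.test_pd k).test_pd k).integrable_heat_mul_heat hb σ]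
  refine Finset.sum_congr rfl fun k _ => ?_
  rw [(hb.test_pd k).integral_heat_mul_heat_pd ha, hb.integral_heat_mul_heat_pd (ha.test_pd k),
    neg_neg]

/-- Along the heat flow, `∂_σ ∫ P_σ(D_iD_ju) P_σ g = -2σ ∫ P_σ(D_jΔu) P_σ(D_i g)`. -/
lemma hasDerivAt_integral_hess (hu : IsTest u) (hg : IsTest g) (i j : Fin d) (σ : ℝ) :
    HasDerivAt (fun σ => ∫ x, heat σ (pd i (pd j u)) x * heat σ g x)
      (-(2 * σ) * ∫ x, heat σ (pd j (lapl u)) x * heat σ (pd i g) x) σ := by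
  have hw : IsTest (pd i (pd j u)) := (hu.test_pd j).test_pd i
  have key := hasDerivAt_integral_heat hw hg hasGradAt_mul continuous_snd continuous_fst σ
  simp only [Prod.fst_zero, Prod.snd_zero, mul_zero, sub_zero] at key
  refine key.congr_deriv ?_
  have e1 : ∫ x, heat σ g x * heat σ (lapl (pd i (pd j u))) x
      = -∫ x, heat σ (pd j (lapl u)) x * heat σ (pd i g) x := by
    rw [← pd_lapl (hu.test_pd j), ← pd_lapl hu,
      (hu.test_lapl.test_pd j).integral_heat_mul_heat_pd hg]
    simp only [mul_comm]
  have e2 : ∫ x, heat σ (pd i (pd j u)) x * heat σ (lapl g) x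
      = -∫ x, heat σ (pd j (lapl u)) x * heat σ (pd i g) x := by
    rw [hw.integral_heat_mul_heat_lapl hg, ← e1]
    simp only [mul_comm]
  simp only [mul_left_comm _ σ]
  rw [integral_add ((hg.integrable_heat_mul_heat hw.test_lapl σ).const_mul σ)
    ((hw.integrable_heat_mul_heat hg.test_lapl σ).const_mul σ), integral_const_mul,
    integral_const_mul, e1, e2]
  ring

/-- The density of `-σ⁻¹ ∂_σ ∫ Φ(P_σ a, P_σ b)`: the Hessian of `Φ` evaluated on the partial
derivatives of the pair `(P_σ a, P_σ b)`. -/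
def dissip (Φ₁₁ Φ₁₂ Φ₂₂ : ℝ × ℝ → ℝ) (σ : ℝ) (a b : Eu d → ℝ) (x : Eu d) : ℝ :=
  ∑ k, (Φ₁₁ (heat σ a x, heat σ b x) * heat σ (pd k a) x ^ 2
    + 2 * Φ₁₂ (heat σ a x, heat σ b x) * heat σ (pd k a) x * heat σ (pd k b) x
    + Φ₂₂ (heat σ a x, heat σ b x) * heat σ (pd k b) x ^ 2)

lemma IsBellman.integrable_dissip (h : IsBellman p q C ε Φ Φ₁ Φ₂ Φ₁₁ Φ₁₂ Φ₂₂) (ha : IsTest a)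
    (hb : IsTest b) (σ : ℝ) : Integrable (dissip Φ₁₁ Φ₁₂ Φ₂₂ σ a b) := by
  refine integrable_finsetSum _ fun k _ => ?_
  have i1 := integrable_comp_heat_mul_heat ha hb (ha.test_pd k) (ha.test_pd k) h.continuous₁₁ σ
  have i2 := integrable_comp_heat_mul_heat ha hb (ha.test_pd k) (hb.test_pd k) h.continuous₁₂ σ
  have i3 := integrable_comp_heat_mul_heat ha hb (hb.test_pd k) (hb.test_pd k) h.continuous₂₂ σ
  refine ((i1.add (i2.const_mul 2)).add i3).congr (Filter.Eventually.of_forall fun x => ?_)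
  simp only [Pi.add_apply]
  ring

/-- The Bellman functional decreases along the heat flow at the rate given by `dissip`. -/
lemma IsBellman.hasDerivAt_integral (h : IsBellman p q C ε Φ Φ₁ Φ₂ Φ₁₁ Φ₁₂ Φ₂₂) (ha : IsTest a)
    (hb : IsTest b) (σ : ℝ) :
    HasDerivAt (fun σ => ∫ x, (Φ (heat σ a x, heat σ b x) - Φ 0))
      (-σ * ∫ x, dissip Φ₁₁ Φ₁₂ Φ₂₂ σ a b x) σ := by
  have hc₁ := continuous_of_hasGradAt h.grad₁
  have hc₂ := continuous_of_hasGradAt h.grad₂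
  refine (hasDerivAt_integral_heat ha hb h.grad hc₁ hc₂ σ).congr_deriv ?_
  have e₁ := integral_comp_heat_mul_heat_lapl ha hb ha h.grad₁ h.continuous₁₁ h.continuous₁₂ σ
  have e₂ := integral_comp_heat_mul_heat_lapl ha hb hb h.grad₂ h.continuous₁₂ h.continuous₂₂ σ
  obtain ⟨M₁, -, hM₁⟩ := ha.exists_comp_heat_bound hb hc₁ σ
  obtain ⟨M₂, -, hM₂⟩ := ha.exists_comp_heat_bound hb hc₂ σ
  have hpair := (ha.continuous_heat σ).prodMk (hb.continuous_heat σ)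
  have i₁ : Integrable fun x => Φ₁ (heat σ a x, heat σ b x) * heat σ (lapl a) x :=
    ha.test_lapl.integrable_mul_heat σ (hc₁.comp hpair) hM₁
  have i₂ : Integrable fun x => Φ₂ (heat σ a x, heat σ b x) * heat σ (lapl b) x :=
    hb.test_lapl.integrable_mul_heat σ (hc₂.comp hpair) hM₂
  simp only [mul_left_comm _ σ]
  rw [integral_add (i₁.const_mul σ) (i₂.const_mul σ), integral_const_mul, integral_const_mul]
  rw [e₁, e₂]
  have i11 := fun k =>
    integrable_comp_heat_mul_heat ha hb (ha.test_pd k) (ha.test_pd k) h.continuous₁₁ σ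
  have i12 := fun k =>
    integrable_comp_heat_mul_heat ha hb (ha.test_pd k) (hb.test_pd k) h.continuous₁₂ σ
  have i21 := fun k =>
    integrable_comp_heat_mul_heat ha hb (hb.test_pd k) (ha.test_pd k) h.continuous₁₂ σ
  have i22 := fun k =>
    integrable_comp_heat_mul_heat ha hb (hb.test_pd k) (hb.test_pd k) h.continuous₂₂ σ
  have e : ∫ x, dissip Φ₁₁ Φ₁₂ Φ₂₂ σ a b x = ∑ k,
      ((∫ x, (Φ₁₁ (heat σ a x, heat σ b x) * heat σ (pd k a) x
        + Φ₁₂ (heat σ a x, heat σ b x) * heat σ (pd k b) x) * heat σ (pd k a) x)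
      + ∫ x, (Φ₁₂ (heat σ a x, heat σ b x) * heat σ (pd k a) x
        + Φ₂₂ (heat σ a x, heat σ b x) * heat σ (pd k b) x) * heat σ (pd k b) x) := by
    simp only [add_mul]
    have j : ∀ k ∈ Finset.univ, Integrable fun x =>
        (Φ₁₁ (heat σ a x, heat σ b x) * heat σ (pd k a) x * heat σ (pd k a) x
          + Φ₁₂ (heat σ a x, heat σ b x) * heat σ (pd k b) x * heat σ (pd k a) x)
        + (Φ₁₂ (heat σ a x, heat σ b x) * heat σ (pd k a) x * heat σ (pd k b) x
          + Φ₂₂ (heat σ a x, heat σ b x) * heat σ (pd k b) x * heat σ (pd k b) x) := fun k _ =>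
      ((i11 k).add (i21 k)).add ((i12 k).add (i22 k))
    have jj : ∀ k, _ := fun k => integral_add ((i11 k).add (i21 k)) ((i12 k).add (i22 k))
    simp only [Pi.add_apply] at jj
    simp only [← jj]
    rw [← integral_finsetSum _ j]
    refine integral_congr_ae (Filter.Eventually.of_forall fun x => ?_)
    exact Finset.sum_congr rfl fun k _ => by ring
  rw [e, Finset.sum_add_distrib]
  ring

/-- The dissipation of the Bellman functional dominates that of the bilinear form. -/
lemma IsBellman.le_dissip (h : IsBellman p q C ε Φ Φ₁ Φ₂ Φ₁₁ Φ₁₂ Φ₂₂) (a b : Eu d → ℝ) (i j : Fin d)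
    (σ : ℝ) (x : Eu d) :
    2 * |heat σ (pd j a) x * heat σ (pd i b) x| ≤ dissip Φ₁₁ Φ₁₂ Φ₂₂ σ a b x := by
  obtain ⟨τ, hτ, H⟩ := h.hess (heat σ a x, heat σ b x)
  have h1 : ∑ k, (τ * heat σ (pd k a) x ^ 2 + τ⁻¹ * heat σ (pd k b) x ^ 2) ≤
      dissip Φ₁₁ Φ₁₂ Φ₂₂ σ a b x := Finset.sum_le_sum fun k _ => H _ _
  refine le_trans ?_ h1
  rw [Finset.sum_add_distrib]
  have h2 : τ * heat σ (pd j a) x ^ 2 ≤ ∑ k, τ * heat σ (pd k a) x ^ 2 :=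
    Finset.single_le_sum (f := fun k => τ * heat σ (pd k a) x ^ 2)
      (fun k _ => by positivity) (Finset.mem_univ j)
  have h3 : τ⁻¹ * heat σ (pd i b) x ^ 2 ≤ ∑ k, τ⁻¹ * heat σ (pd k b) x ^ 2 :=
    Finset.single_le_sum (f := fun k => τ⁻¹ * heat σ (pd k b) x ^ 2)
      (fun k _ => by positivity) (Finset.mem_univ i)
  refine le_trans ?_ (add_le_add h2 h3)
  obtain ⟨ξ, hξ⟩ : ∃ ξ, ξ = |heat σ (pd j a) x| := ⟨_, rfl⟩
  obtain ⟨η, hη⟩ : ∃ η, η = |heat σ (pd i b) x| := ⟨_, rfl⟩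
  rw [abs_mul, ← sq_abs, ← sq_abs (heat σ (pd i b) x), ← hξ, ← hη]
  have h4 : 0 ≤ τ⁻¹ * (τ * ξ - η) ^ 2 := by positivity
  have h5 : τ⁻¹ * (τ * ξ - η) ^ 2 = τ * ξ ^ 2 + τ⁻¹ * η ^ 2 - 2 * (ξ * η) := by
    field_simp; ring
  linarith

/-- The bilinear form dies out along the flow: one factor is small in `L^∞`, the other bounded in
`L¹`. For `d = 0` the flow is constant and this fails. -/
lemma tendsto_integral_heat_mul_heat (hd : 1 ≤ d) (ha : IsTest a) (hb : IsTest b) :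
    Filter.Tendsto (fun T => ∫ x, heat T a x * heat T b x) Filter.atTop (nhds 0) := by
  have hbd : ∀ᶠ T : ℝ in Filter.atTop, ‖∫ x, heat T a x * heat T b x‖ ≤
      (T ^ d)⁻¹ * (gauss (0 : Eu d) * (∫ y, |a y|) * ∫ y, |b y|) := by
    filter_upwards [Filter.eventually_gt_atTop 0] with T hT
    have h1 := norm_integral_le_of_norm_le (f := fun x => heat T a x * heat T b x)
      (((hb.integrable_heat T).abs).const_mul (gauss (0 : Eu d) * ((T ^ d)⁻¹ * ∫ y, |a y|)))
      (Filter.Eventually.of_forall fun x => by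
        rw [norm_mul]
        exact mul_le_mul_of_nonneg_right (ha.abs_heat_le hT x) (abs_nonneg _))
    rw [integral_const_mul] at h1
    have h2 : 0 ≤ gauss (0 : Eu d) * ((T ^ d)⁻¹ * ∫ y, |a y|) :=
      mul_nonneg (gauss_pos _).le (mul_nonneg (by positivity) (integral_nonneg fun y => abs_nonneg _))
    calc _ ≤ _ := h1
      _ ≤ gauss (0 : Eu d) * ((T ^ d)⁻¹ * ∫ y, |a y|) * ∫ y, |b y| :=
        mul_le_mul_of_nonneg_left (hb.integral_abs_heat_le T) h2
      _ = _ := by ring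
  refine squeeze_zero_norm' hbd ?_
  have := (tendsto_inv_atTop_zero.comp (Filter.tendsto_pow_atTop (α := ℝ) (n := d) (by omega)))
  simpa using this.mul_const (gauss (0 : Eu d) * (∫ y, |a y|) * ∫ y, |b y|)

/-- The bilinear estimate: `|∫ D_iD_ju · g| ≤ ∫ (Φ(Δu, g) - Φ(0))`. -/
lemma IsBellman.abs_integral_le (h : IsBellman p q C ε Φ Φ₁ Φ₂ Φ₁₁ Φ₁₂ Φ₂₂) (hd : 1 ≤ d)
    (hu : IsTest u) (hg : IsTest g) (i j : Fin d) :
    |∫ x, pd i (pd j u) x * g x| ≤ ∫ x, (Φ (lapl u x, g x) - Φ 0) := by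
  have key : ∀ s : ℝ, |s| ≤ 1 → -(s * ∫ x, pd i (pd j u) x * g x) ≤
      ∫ x, (Φ (lapl u x, g x) - Φ 0) := by
    intro s hs
    have hL : ∀ σ, HasDerivAt (fun σ => (∫ x, (Φ (heat σ (lapl u) x, heat σ g x) - Φ 0))
        + s * ∫ x, heat σ (pd i (pd j u)) x * heat σ g x)
        (-σ * (∫ x, dissip Φ₁₁ Φ₁₂ Φ₂₂ σ (lapl u) g x)
          + s * (-(2 * σ) * ∫ x, heat σ (pd j (lapl u)) x * heat σ (pd i g) x)) σ := fun σ =>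
      (h.hasDerivAt_integral hu.test_lapl hg σ).add
        ((hasDerivAt_integral_hess hu hg i j σ).const_mul s)
    -- The Bellman functional plus `s` times the bilinear form is nonincreasing along the flow.
    have hanti := antitoneOn_of_deriv_nonpos (convex_Ici (0 : ℝ))
      (fun σ _ => (hL σ).continuousAt.continuousWithinAt)
      (fun σ _ => (hL σ).differentiableAt.differentiableWithinAt) (fun σ hσ => by
        rw [interior_Ici, Set.mem_Ioi] at hσ
        rw [(hL σ).deriv]
        have i1 := h.integrable_dissip hu.test_lapl hg σ
        have i2 := ((hu.test_lapl.test_pd j).integrable_heat_mul_heat (hg.test_pd i) σ).const_mul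
          (2 * s)
        have h1 : 0 ≤ ∫ x, (dissip Φ₁₁ Φ₁₂ Φ₂₂ σ (lapl u) g x
            + 2 * s * (heat σ (pd j (lapl u)) x * heat σ (pd i g) x)) := by
          refine integral_nonneg fun x => ?_
          have h2 := h.le_dissip (lapl u) g i j σ x
          have h3 : |s * (heat σ (pd j (lapl u)) x * heat σ (pd i g) x)|
              ≤ |heat σ (pd j (lapl u)) x * heat σ (pd i g) x| := by
            rw [abs_mul s]; exact mul_le_of_le_one_left (abs_nonneg _) hs
          have h4 := neg_abs_le (s * (heat σ (pd j (lapl u)) x * heat σ (pd i g) x))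
          simp only [Pi.zero_apply]
          linarith
        rw [integral_add i1 i2, integral_const_mul] at h1
        have := mul_nonneg hσ.le h1
        linarith)
    have hT : ∀ T : ℝ, 0 ≤ T → s * (∫ x, heat T (pd i (pd j u)) x * heat T g x) ≤
        (∫ x, (Φ (lapl u x, g x) - Φ 0)) + s * ∫ x, pd i (pd j u) x * g x := by
      intro T hT
      have h1 := hanti (Set.mem_Ici.2 le_rfl) (Set.mem_Ici.2 hT) hT
      simp only [heat_zero] at h1
      have h2 : 0 ≤ ∫ x, (Φ (heat T (lapl u) x, heat T g x) - Φ 0) :=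
        integral_nonneg fun x => sub_nonneg.2 (h.lower _)
      linarith
    have hlim := (tendsto_integral_heat_mul_heat hd ((hu.test_pd j).test_pd i) hg).const_mul s
    rw [mul_zero] at hlim
    have := le_of_tendsto hlim
      (Filter.eventually_atTop.2 ⟨0, fun T h0 => hT T h0⟩)
    linarith
  rw [abs_le']
  have k1 := key 1 (by simp)
  have k2 := key (-1) (by simp)
  constructor <;> linarith

end Bilinear

/-! ### Duality and the estimate for single derivatives -/

section Duality
variable {d : ℕ}

lemma IsTest.integrable_rpow {φ : Eu d → ℝ} (h : IsTest φ) {r : ℝ} (hr : 0 < r) :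
    Integrable fun x => |φ x| ^ r := by
  refine Continuous.integrable_of_hasCompactSupport
    (h.continuous.abs.rpow_const fun _ => Or.inr hr.le) ?_
  refine h.compact.comp_left (g := fun t : ℝ => |t| ^ r) ?_
  simp [ne_of_gt hr]

/-- Multiplication on the right by a smooth function that need not have compact support. -/
lemma IsTest.mul_contDiff {φ ψ : Eu d → ℝ} (h : IsTest φ) (hψ : ContDiff ℝ (⊤ : ℕ∞) ψ) :
    IsTest fun x => φ x * ψ x where
  contDiff := h.contDiff.mul hψ
  compact := h.compact.mul_right

/-- The additive bilinear estimate, obtained by letting the regularisation parameter of the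
Bellman functions tend to zero. -/
lemma exists_bilinear (hd : 1 ≤ d) {p q : ℝ} (hpq : p.HolderConjugate q) :
    ∃ C : ℝ, 0 ≤ C ∧ ∀ u g : Eu d → ℝ, IsTest u → IsTest g → ∀ i j,
      |∫ x, pd i (pd j u) x * g x| ≤ C * ((∫ x, |lapl u x| ^ p) + ∫ x, |g x| ^ q) := by
  obtain ⟨C, hC, H⟩ := exists_bellman hpq
  refine ⟨C, hC, fun u g hu hg i j => ?_⟩
  have hp0 : 0 < p := hpq.pos
  have hq0 : 0 < q := hpq.symm.pos
  have hf := hu.test_lapl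
  set K : Set (Eu d) := tsupport (lapl u) ∪ tsupport g with hK
  have hKc : IsCompact K := IsCompact.union hf.compact hg.compact
  have key : ∀ ε : ℝ, 0 < ε → |∫ x, pd i (pd j u) x * g x| ≤
      C * ((∫ x, |lapl u x| ^ p) + ∫ x, |g x| ^ q) + C * (ε ^ p + ε ^ q) * volume.real K := by
    intro ε hε
    obtain ⟨Φ, Φ₁, Φ₂, Φ₁₁, Φ₁₂, Φ₂₂, h⟩ := H ε hε
    refine (h.abs_integral_le hd hu hg i j).trans ?_
    have hi1 := hf.integrable_rpow hp0
    have hi2 := hg.integrable_rpow hq0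
    have hind : Integrable (K.indicator fun _ : Eu d => C * (ε ^ p + ε ^ q)) :=
      (integrableOn_const hKc.measure_lt_top.ne).integrable_indicator hKc.measurableSet
    have hmain : Integrable fun x => C * (|lapl u x| ^ p + |g x| ^ q) := (hi1.add hi2).const_mul C
    have heq : C * ((∫ x, |lapl u x| ^ p) + ∫ x, |g x| ^ q) + C * (ε ^ p + ε ^ q) * volume.real K
        = ∫ x, (C * (|lapl u x| ^ p + |g x| ^ q)
          + K.indicator (fun _ : Eu d => C * (ε ^ p + ε ^ q)) x) := by
      rw [integral_add hmain hind, integral_const_mul, integral_add hi1 hi2,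
        integral_indicator_const _ hKc.measurableSet, smul_eq_mul]
      ring
    rw [heq]
    refine integral_mono_of_nonneg (Filter.Eventually.of_forall fun x => ?_) (hmain.add hind)
      (Filter.Eventually.of_forall fun x => ?_)
    · exact sub_nonneg.2 (h.lower _)
    · by_cases hx : x ∈ K
      · have := h.upper (lapl u x, g x)
        simp only [Set.indicator_of_mem hx]
        simp only at this
        linarith
      · have h1 : lapl u x = 0 := image_eq_zero_of_notMem_tsupport fun h' => hx (Or.inl h')
        have h2 : g x = 0 := image_eq_zero_of_notMem_tsupport fun h' => hx (Or.inr h')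
        simp only [Set.indicator_of_notMem hx, h1, h2]
        have : ((0 : ℝ), (0 : ℝ)) = 0 := rfl
        rw [this, sub_self]
        positivity
  have hlim : Filter.Tendsto (fun ε : ℝ => C * ((∫ x, |lapl u x| ^ p) + ∫ x, |g x| ^ q)
      + C * (ε ^ p + ε ^ q) * volume.real K) (nhdsWithin 0 (Set.Ioi 0))
      (nhds (C * ((∫ x, |lapl u x| ^ p) + ∫ x, |g x| ^ q))) := by
    have hc : Continuous fun ε : ℝ => C * ((∫ x, |lapl u x| ^ p) + ∫ x, |g x| ^ q)
      + C * (ε ^ p + ε ^ q) * volume.real K := by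
      have h1 : Continuous fun ε : ℝ => ε ^ p := Real.continuous_rpow_const hp0.le
      have h2 : Continuous fun ε : ℝ => ε ^ q := Real.continuous_rpow_const hq0.le
      fun_prop
    have := (hc.tendsto 0).mono_left (nhdsWithin_le_nhds (s := Set.Ioi 0))
    simpa [Real.zero_rpow hp0.ne', Real.zero_rpow hq0.ne'] using this
  exact ge_of_tendsto hlim (Filter.eventually_of_mem self_mem_nhdsWithin fun ε hε => key ε hε)

/-- Pointwise bounds for the smooth substitute `w (δ² + w²)^{(p-2)/2}` of `|w|^{p-2} w`. -/
lemma dual_bounds {p q : ℝ} (hpq : p.HolderConjugate q) {δ : ℝ} (hδ : 0 < δ) (w : ℝ) :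
    |w| ^ p ≤ (δ ^ 2 + w ^ 2) ^ (p / 2) ∧
    |w * (δ ^ 2 + w ^ 2) ^ ((p - 2) / 2)| ^ q ≤ (δ ^ 2 + w ^ 2) ^ (p / 2) ∧
    (δ ^ 2 + w ^ 2) ^ (p / 2) ≤
      2 * (w * (w * (δ ^ 2 + w ^ 2) ^ ((p - 2) / 2))) + (2 * δ ^ 2) ^ (p / 2) := by
  have hp0 : 0 < p := hpq.pos
  have hq0 : 0 < q := hpq.symm.pos
  have hs : 0 < δ ^ 2 + w ^ 2 := by positivity
  set s := δ ^ 2 + w ^ 2 with hsdef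
  have habs : |w| ≤ s ^ (1 / 2 : ℝ) := by
    rw [← Real.sqrt_eq_rpow]
    exact Real.abs_le_sqrt (by rw [hsdef]; nlinarith [sq_nonneg δ])
  refine ⟨?_, ?_, ?_⟩
  · refine (Real.rpow_le_rpow (abs_nonneg _) habs hp0.le).trans_eq ?_
    rw [← Real.rpow_mul hs.le]
    ring_nf
  · rw [abs_mul, abs_of_pos (Real.rpow_pos_of_pos hs _)]
    have : |w| * s ^ ((p - 2) / 2) ≤ s ^ ((p - 1) / 2) := by
      refine (mul_le_mul_of_nonneg_right habs (Real.rpow_pos_of_pos hs _).le).trans_eq ?_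
      rw [← Real.rpow_add hs]
      ring_nf
    refine (Real.rpow_le_rpow (by positivity) this hq0.le).trans_eq ?_
    rw [← Real.rpow_mul hs.le]
    have := hpq.sub_one_mul_conj
    congr 1
    linarith
  · have hsplit : s ^ (p / 2) = s * s ^ ((p - 2) / 2) := by
      nth_rewrite 2 [← Real.rpow_one s]
      rw [← Real.rpow_add hs]
      ring_nf
    have ht : 0 < s ^ ((p - 2) / 2) := Real.rpow_pos_of_pos hs _
    -- For `δ² ≤ w²` the product controls half of `s^(p/2)`; otherwise `s ≤ 2 δ²`.
    rcases le_total (δ ^ 2) (w ^ 2) with h | h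
    · have h3 : 0 ≤ (2 * δ ^ 2) ^ (p / 2) := by positivity
      have h4 : s * s ^ ((p - 2) / 2) ≤ (2 * w ^ 2) * s ^ ((p - 2) / 2) :=
        mul_le_mul_of_nonneg_right (by linarith) ht.le
      rw [hsplit]
      nlinarith
    · have h3 : s ^ (p / 2) ≤ (2 * δ ^ 2) ^ (p / 2) :=
        Real.rpow_le_rpow hs.le (by linarith) (by positivity)
      have h4 : 0 ≤ w * (w * s ^ ((p - 2) / 2)) := by
        rw [← mul_assoc]
        exact mul_nonneg (mul_self_nonneg w) ht.le
      linarith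

/-- The estimate for a single second derivative, in integral form. Testing the bilinear estimate
against a multiple of the regularised dual function of `D_{ij}u` allows the `q`-term to be
absorbed. -/
lemma exists_pd_pd_estimate (hd : 1 ≤ d) {p : ℝ} (hp : 1 < p) :
    ∃ N : ℝ, 0 ≤ N ∧ ∀ u : Eu d → ℝ, IsTest u → ∀ i j,
      ∫ x, |pd i (pd j u) x| ^ p ≤ N * ∫ x, |lapl u x| ^ p := by
  have hpq : p.HolderConjugate (p.conjExponent) := Real.HolderConjugate.conjExponent hp
  set q := p.conjExponent
  have hp0 : 0 < p := hpq.pos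
  have hq1 : 1 < q := hpq.symm.lt
  obtain ⟨C, hC, H⟩ := exists_bilinear hd hpq
  -- `η` is chosen so that `2 C η^{q-1} ≤ 1/2`.
  set η : ℝ := (4 * C + 1)⁻¹ ^ (q - 1)⁻¹ with hη
  have hη0 : 0 < η := by positivity
  have hηq : η ^ (q - 1) = (4 * C + 1)⁻¹ := by
    rw [hη, ← Real.rpow_mul (by positivity), inv_mul_cancel₀ (by linarith), Real.rpow_one]
  refine ⟨4 * C * η⁻¹, by positivity, fun u hu i j => ?_⟩
  set w := pd i (pd j u) with hw
  have hwt : IsTest w := (hu.test_pd j).test_pd i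
  set F := ∫ x, |lapl u x| ^ p
  set K := tsupport w
  have hKc : IsCompact K := hwt.compact
  have key : ∀ δ : ℝ, 0 < δ →
      ∫ x, |w x| ^ p ≤ 4 * C * η⁻¹ * F + 2 * ((2 * δ ^ 2) ^ (p / 2) * volume.real K) := by
    intro δ hδ
    have hscd : ContDiff ℝ (⊤ : ℕ∞) fun x => (δ ^ 2 + w x ^ 2) ^ ((p - 2) / 2) :=
      (contDiff_const.add (hwt.contDiff.pow 2)).rpow_const_of_ne fun x => by positivity
    set g : Eu d → ℝ := fun x => w x * (δ ^ 2 + w x ^ 2) ^ ((p - 2) / 2) with hg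
    have hgt : IsTest g := hwt.mul_contDiff hscd
    have hcont : Continuous fun x => (δ ^ 2 + w x ^ 2) ^ (p / 2) :=
      (continuous_const.add (hwt.continuous.pow 2)).rpow_const fun x => Or.inr (by positivity)
    have hSi : Integrable (K.indicator fun x => (δ ^ 2 + w x ^ 2) ^ (p / 2)) :=
      (hcont.continuousOn.integrableOn_compact hKc).integrable_indicator hKc.measurableSet
    set S := ∫ x, K.indicator (fun x => (δ ^ 2 + w x ^ 2) ^ (p / 2)) x
    have hoff : ∀ x, x ∉ K → w x = 0 := fun x hx => image_eq_zero_of_notMem_tsupport hx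
    have h1 : ∫ x, |w x| ^ p ≤ S := by
      refine integral_mono (hwt.integrable_rpow hp0) hSi fun x => ?_
      by_cases hx : x ∈ K
      · simpa only [Set.indicator_of_mem hx] using (dual_bounds hpq hδ (w x)).1
      · simp [Set.indicator_of_notMem hx, hoff x hx, Real.zero_rpow hp0.ne']
    have h2 : ∫ x, |g x| ^ q ≤ S := by
      refine integral_mono (hgt.integrable_rpow hpq.symm.pos) hSi fun x => ?_
      by_cases hx : x ∈ K
      · simpa only [Set.indicator_of_mem hx] using (dual_bounds hpq hδ (w x)).2.1
      · simp [Set.indicator_of_notMem hx, hg, hoff x hx, Real.zero_rpow hpq.symm.pos.ne']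
    have hwg : Integrable fun x => w x * g x := (hwt.mul_contDiff hgt.contDiff).integrable
    have hind : Integrable (K.indicator fun _ : Eu d => (2 * δ ^ 2) ^ (p / 2)) :=
      (integrableOn_const hKc.measure_lt_top.ne).integrable_indicator hKc.measurableSet
    have h3 : S ≤ 2 * (∫ x, w x * g x) + (2 * δ ^ 2) ^ (p / 2) * volume.real K := by
      have heq : 2 * (∫ x, w x * g x) + (2 * δ ^ 2) ^ (p / 2) * volume.real K
          = ∫ x, (2 * (w x * g x) + K.indicator (fun _ : Eu d => (2 * δ ^ 2) ^ (p / 2)) x) := by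
        rw [integral_add (hwg.const_mul 2) hind, integral_const_mul,
          integral_indicator_const _ hKc.measurableSet, smul_eq_mul]
        ring
      rw [heq]
      refine integral_mono hSi ((hwg.const_mul 2).add hind) fun x => ?_
      by_cases hx : x ∈ K
      · simpa only [Set.indicator_of_mem hx] using (dual_bounds hpq hδ (w x)).2.2
      · simp [Set.indicator_of_notMem hx, hoff x hx]
    have h4 : ∫ x, w x * g x ≤ C * (η⁻¹ * F + (4 * C + 1)⁻¹ * S) := by
      have hb := (le_abs_self _).trans
        (H u (fun x => g x * η) hu (hgt.mul_contDiff contDiff_const) i j)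
      have e1 : ∫ x, pd i (pd j u) x * (g x * η) = (∫ x, w x * g x) * η := by
        rw [← integral_mul_const]
        simp only [hw, mul_assoc]
      have e2 : ∫ x, |g x * η| ^ q = (∫ x, |g x| ^ q) * (η * (4 * C + 1)⁻¹) := by
        rw [← integral_mul_const]
        refine integral_congr_ae (Filter.Eventually.of_forall fun x => ?_)
        simp only
        rw [abs_mul, Real.mul_rpow (abs_nonneg _) (abs_nonneg _), abs_of_pos hη0, ← hηq]
        congr 1
        nth_rewrite 2 [← Real.rpow_one η]
        rw [← Real.rpow_add hη0]
        ring_nf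
      rw [e1, e2] at hb
      have hb2 : (∫ x, w x * g x) * η ≤ (C * (η⁻¹ * F + (4 * C + 1)⁻¹ * S)) * η := by
        refine hb.trans ?_
        have : (C * (η⁻¹ * F + (4 * C + 1)⁻¹ * S)) * η
            = C * (F + S * (η * (4 * C + 1)⁻¹)) := by field_simp
        rw [this]
        gcongr
      exact le_of_mul_le_mul_right hb2 hη0
    have hS0 : 0 ≤ S := le_trans (integral_nonneg fun x => by positivity) h1
    have h5 : 2 * (C * ((4 * C + 1)⁻¹ * S)) ≤ S / 2 := by
      have : C * (4 * C + 1)⁻¹ ≤ 1 / 4 := by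
        rw [← div_eq_mul_inv, div_le_iff₀ (by positivity)]
        linarith
      nlinarith
    have h6 : C * (η⁻¹ * F + (4 * C + 1)⁻¹ * S) = C * η⁻¹ * F + C * ((4 * C + 1)⁻¹ * S) := by ring
    rw [h6] at h4
    linarith
  have hlim : Filter.Tendsto
      (fun δ : ℝ => 4 * C * η⁻¹ * F + 2 * ((2 * δ ^ 2) ^ (p / 2) * volume.real K))
      (nhdsWithin 0 (Set.Ioi 0)) (nhds (4 * C * η⁻¹ * F)) := by
    have hc : Continuous fun δ : ℝ =>
        4 * C * η⁻¹ * F + 2 * ((2 * δ ^ 2) ^ (p / 2) * volume.real K) := by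
      have h1 : Continuous fun δ : ℝ => (2 * δ ^ 2) ^ (p / 2) :=
        (by fun_prop : Continuous fun δ : ℝ => 2 * δ ^ 2).rpow_const
          fun _ => Or.inr (by positivity)
      fun_prop
    have := (hc.tendsto 0).mono_left (nhdsWithin_le_nhds (s := Set.Ioi 0))
    have hp2 : p / 2 ≠ 0 := by positivity
    simpa [Real.zero_rpow hp2] using this
  exact ge_of_tendsto hlim (Filter.eventually_of_mem self_mem_nhdsWithin fun δ hδ => key δ hδ)

/-- The estimate for a single second derivative in terms of `L_p` norms. -/
lemma exists_eLpNorm_pd_pd (hd : 1 ≤ d) {p : ℝ} (hp : 1 < p) :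
    ∃ N : ℝ, 0 ≤ N ∧ ∀ u : Eu d → ℝ, IsTest u → ∀ i j,
      eLpNorm (pd i (pd j u)) (ENNReal.ofReal p) volume ≤
        ENNReal.ofReal N * eLpNorm (lapl u) (ENNReal.ofReal p) volume := by
  have hp0 : 0 < p := by linarith
  obtain ⟨N, hN, H⟩ := exists_pd_pd_estimate hd hp
  refine ⟨N ^ p⁻¹, by positivity, fun u hu i j => ?_⟩
  have key : ∀ φ : Eu d → ℝ, IsTest φ → eLpNorm φ (ENNReal.ofReal p) volume =
      ENNReal.ofReal ((∫ x, |φ x| ^ p) ^ p⁻¹) := by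
    intro φ hφ
    have hm : MemLp φ (ENNReal.ofReal p) volume :=
      hφ.continuous.memLp_of_hasCompactSupport hφ.compact
    rw [hm.eLpNorm_eq_integral_rpow_norm (by simpa using hp0) ENNReal.ofReal_ne_top,
      ENNReal.toReal_ofReal hp0.le]
    simp only [Real.norm_eq_abs]
  rw [key _ ((hu.test_pd j).test_pd i), key _ hu.test_lapl,
    ← ENNReal.ofReal_mul (by positivity),
    ← Real.mul_rpow hN (integral_nonneg fun x => by positivity)]
  refine ENNReal.ofReal_le_ofReal (Real.rpow_le_rpow (integral_nonneg fun x => by positivity)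
    (H u hu i j) (by positivity))

end Duality

/-! ### The Hessian estimate -/

/-- **Calderón–Zygmund estimate for the Laplacian**: for `d ≥ 1`, `p ∈ (1,∞)` there is
`N = N(d,p)` such that `‖D²u‖_{L_p} ≤ N ‖Δu‖_{L_p}` for all `u ∈ C_c^∞(ℝ^d)`. -/
theorem calderon_zygmund_laplacian (d : ℕ) (hd : 1 ≤ d) (p : ℝ) (hp : 1 < p) :
    ∃ N : ℝ, 0 < N ∧
      ∀ u : EuclideanSpace ℝ (Fin d) → ℝ, ContDiff ℝ (⊤ : ℕ∞) u → HasCompactSupport u →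
        eLpNorm (hessNorm d u) (ENNReal.ofReal p) volume ≤
          ENNReal.ofReal N * eLpNorm (lap d u) (ENNReal.ofReal p) volume := by
  obtain ⟨N, hN, H⟩ := exists_eLpNorm_pd_pd hd hp
  refine ⟨d * (d * N) + 1, by positivity, fun u hu hc => ?_⟩
  have hut : IsTest u := ⟨hu, hc⟩
  have hp1 : 1 ≤ ENNReal.ofReal p := ENNReal.one_le_ofReal.2 hp.le
  have hcont : ∀ i j, Continuous (D2 d u i j) := fun i j =>
    ((hut.test_pd j).test_pd i).continuous
  -- The `ℓ²` norm of the entries is at most their `ℓ¹` norm.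
  have hpt : ∀ x, ‖hessNorm d u x‖ ≤ ‖∑ i, ∑ j, |D2 d u i j x|‖ := by
    intro x
    have h0 : 0 ≤ ∑ i, ∑ j, |D2 d u i j x| := by positivity
    rw [Real.norm_of_nonneg (show 0 ≤ hessNorm d u x from Real.sqrt_nonneg _), Real.norm_of_nonneg h0]
    refine Real.sqrt_le_iff.2 ⟨h0, ?_⟩
    rw [← Fintype.sum_prod_type', ← Fintype.sum_prod_type']
    calc ∑ k : Fin d × Fin d, D2 d u k.1 k.2 x ^ 2
        = ∑ k : Fin d × Fin d, |D2 d u k.1 k.2 x| ^ 2 := by simp only [sq_abs]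
      _ ≤ _ := Finset.sum_sq_le_sq_sum_of_nonneg fun k _ => abs_nonneg _
  have hmeas : ∀ i j, AEStronglyMeasurable (fun x => |D2 d u i j x|) volume := fun i j =>
    (hcont i j).abs.aestronglyMeasurable
  have hone : ∀ i j, eLpNorm (fun x => |D2 d u i j x|) (ENNReal.ofReal p) volume ≤
      ENNReal.ofReal N * eLpNorm (lap d u) (ENNReal.ofReal p) volume := by
    intro i j
    have : eLpNorm (fun x => |D2 d u i j x|) (ENNReal.ofReal p) volume =
        eLpNorm (D2 d u i j) (ENNReal.ofReal p) volume := eLpNorm_norm (D2 d u i j)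
    rw [this]
    exact H u hut i j
  have hrow : ∀ i, eLpNorm (fun x => ∑ j, |D2 d u i j x|) (ENNReal.ofReal p) volume ≤
      d * (ENNReal.ofReal N * eLpNorm (lap d u) (ENNReal.ofReal p) volume) := by
    intro i
    have h := eLpNorm_sum_le (s := Finset.univ) (f := fun j x => |D2 d u i j x|)
      (fun j _ => hmeas i j) hp1
    have e : (∑ j, fun x => |D2 d u i j x|) = fun x => ∑ j, |D2 d u i j x| := by
      ext x; simp
    rw [e] at h
    refine h.trans ((Finset.sum_le_sum fun j _ => hone i j).trans_eq ?_)
    simp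
  calc eLpNorm (hessNorm d u) (ENNReal.ofReal p) volume
      ≤ eLpNorm (fun x => ∑ i, ∑ j, |D2 d u i j x|) (ENNReal.ofReal p) volume :=
        eLpNorm_mono hpt
    _ ≤ d * (d * (ENNReal.ofReal N * eLpNorm (lap d u) (ENNReal.ofReal p) volume)) := by
        have h := eLpNorm_sum_le (s := Finset.univ) (f := fun i x => ∑ j, |D2 d u i j x|)
          (p := ENNReal.ofReal p) (μ := volume)
          (fun i _ => (continuous_finsetSum _ fun j _ => (hcont i j).abs).aestronglyMeasurable) hp1
        have e : (∑ i, fun x => ∑ j, |D2 d u i j x|) = fun x => ∑ i, ∑ j, |D2 d u i j x| := by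
          ext x; simp
        rw [e] at h
        refine h.trans ((Finset.sum_le_sum fun i _ => hrow i).trans_eq ?_)
        simp
    _ = ENNReal.ofReal (d * (d * N)) * eLpNorm (lap d u) (ENNReal.ofReal p) volume := by
        rw [ENNReal.ofReal_mul (by positivity), ENNReal.ofReal_mul (by positivity),
          ENNReal.ofReal_natCast]
        ring
    _ ≤ _ := by
        gcongr
        linarith
end
end
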